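/- arXiv:math/9905083 — 3 statements merged into one kernel-verified Lean document; each statement's English description precedes it below -/
import Mathlib

section
/- For all nonnegative integers n and l, f^{UU}_{n,2l} = Σ_{m=0}^{n} (binom(n,m))² · f_{m,l} · f_{n−m,l}; that is, the number of permutations π of {1,…,2n} with π = ι∘π∘ι and longest increasing subsequence of length at most 2l equals the sum over m of the square of the binomial coefficient n choose m times the number of permutations of {1,…,m} with longest increasing subsequence at most l times the number of permutations of {1,…,n−m} with longest increasing subsequence at most l. -/
noncomputable section

/-- `lisLE π l` means the longest increasing subsequence of the permutation `π`
has length at most `l`. -/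
def lisLE {N : ℕ} (π : Equiv.Perm (Fin N)) (l : ℕ) : Prop :=
  ∀ (k : ℕ) (f : Fin k → Fin N), StrictMono f → StrictMono (fun i => π (f i)) → k ≤ l

/-- `f_{n,l}`: the number of permutations of `{1,…,n}` whose longest increasing
subsequence has length at most `l`. -/
def permCount (n l : ℕ) : ℕ :=
  Nat.card {π : Equiv.Perm (Fin n) // lisLE π l}

/-- `f^{UU}_{n,l}`: the number of permutations `π` of `{1,…,2n}` with `π = ι∘π∘ι`
(where `ι(x) = 2n+1-x`) whose longest increasing subsequence has length at most `l`. -/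
def fUUCount (n l : ℕ) : ℕ :=
  Nat.card {π : Equiv.Perm (Fin (2 * n)) //
    π = Fin.revPerm * π * Fin.revPerm ∧ lisLE π l}

open Matrix

/-- The product of full matrix algebras of sizes `d i`. -/
abbrev MatProd {r : ℕ} (d : Fin r → ℕ) : Type :=
  (i : Fin r) → Matrix (Fin (d i)) (Fin (d i)) ℂ

section MatProd

variable {r : ℕ} {d : Fin r → ℕ} {G : Type*} [Group G] [Fintype G]

/-- The permutation matrix of a group element acting on a finite set. -/
def actionMatrix {G X : Type*} [Group G] [Fintype X] [DecidableEq X] [MulAction G X] :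
    G →* Matrix X X ℂ where
  toFun g := Matrix.of fun x y => if x = g • y then 1 else 0
  map_one' := by
    ext x y
    simp [Matrix.one_apply]
  map_mul' g h := by
    ext x y
    simp [Matrix.mul_apply, mul_smul]

theorem exists_matProd_repr {X : Type} [Fintype X] [DecidableEq X] (ρ : G →* Matrix X X ℂ) :
    ∃ (r : ℕ) (d : Fin r → ℕ) (φ : G →* MatProd d) (j : MatProd d →ₐ[ℂ] Matrix X X ℂ),
      (∀ i, NeZero (d i)) ∧ Function.Injective j ∧ (∀ g, j (φ g) = ρ g) ∧
      Submodule.span ℂ (Set.range φ) = ⊤ := by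
  classical
  let F : MonoidAlgebra ℂ G →ₐ[ℂ] Matrix X X ℂ := MonoidAlgebra.lift ℂ (Matrix X X ℂ) G ρ
  have hss : IsSemisimpleRing F.range :=
    RingHom.isSemisimpleRing_of_surjective (F.rangeRestrict : MonoidAlgebra ℂ G →+* F.range)
      F.rangeRestrict_surjective
  obtain ⟨r, d, hd, ⟨e⟩⟩ :=
    IsSemisimpleRing.exists_algEquiv_pi_matrix_of_isAlgClosed ℂ F.range
  refine ⟨r, d, ((e.toAlgHom.comp F.rangeRestrict : MonoidAlgebra ℂ G →* MatProd d)).comp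
    (MonoidAlgebra.of ℂ G), F.range.val.comp e.symm.toAlgHom, hd, ?_, ?_, ?_⟩
  · exact Subtype.val_injective.comp e.symm.injective
  · intro g
    simp [F]
  · rw [MonoidHom.coe_comp, Set.range_comp]
    have hsurj : Function.Surjective (e.toAlgHom.comp F.rangeRestrict) :=
      e.surjective.comp F.rangeRestrict_surjective
    have h1 : Submodule.span ℂ (Set.range (MonoidAlgebra.of ℂ G)) = ⊤ := by
      rw [eq_top_iff]
      intro x _
      exact MonoidAlgebra.induction_on x (fun g => Submodule.subset_span ⟨g, rfl⟩)
        (fun f g hf hg => Submodule.add_mem _ hf hg) (fun c f hf => Submodule.smul_mem _ c hf)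
    have h2 := Submodule.map_span (e.toAlgHom.comp F.rangeRestrict).toLinearMap
      (Set.range (MonoidAlgebra.of ℂ G))
    rw [h1, Submodule.map_top, LinearMap.range_eq_top.2 hsurj] at h2
    exact h2.symm

theorem sum_conj_intertwines (φ : G →* MatProd d) (hφ : Submodule.span ℂ (Set.range φ) = ⊤)
    (i j : Fin r) (B : Matrix (Fin (d i)) (Fin (d j)) ℂ) (x : MatProd d) :
    x i * (∑ g, φ g i * B * φ g⁻¹ j) = (∑ g, φ g i * B * φ g⁻¹ j) * x j := by
  have hx : x ∈ Submodule.span ℂ (Set.range φ) := by rw [hφ]; trivial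
  induction hx using Submodule.span_induction with
  | mem x hx =>
    obtain ⟨h, rfl⟩ := hx
    rw [Matrix.mul_sum, Matrix.sum_mul]
    refine Fintype.sum_equiv (Equiv.mulLeft h) _ _ fun g => ?_
    have h1 : φ g⁻¹ j = φ (h * g)⁻¹ j * φ h j := by
      rw [← Pi.mul_apply, ← map_mul]; simp
    simp only [Equiv.coe_mulLeft, map_mul φ h g, Pi.mul_apply]
    rw [h1]
    simp only [Matrix.mul_assoc]
  | zero => simp
  | add x y _ _ hx hy => simp only [Pi.add_apply, Matrix.add_mul, Matrix.mul_add, hx, hy]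
  | smul c x _ hx => simp only [Pi.smul_apply, Matrix.smul_mul, Matrix.mul_smul, hx]

theorem sum_trace_mul_trace_inv [∀ i, NeZero (d i)] (φ : G →* MatProd d)
    (hφ : Submodule.span ℂ (Set.range φ) = ⊤) (i j : Fin r) :
    ∑ g, (φ g i).trace * (φ g⁻¹ j).trace = if i = j then (Fintype.card G : ℂ) else 0 := by
  classical
  have key : ∑ g, (φ g i).trace * (φ g⁻¹ j).trace =
      ∑ p : Fin (d i), ∑ q : Fin (d j),
        (∑ g, φ g i * Matrix.single p q (1 : ℂ) * φ g⁻¹ j) p q := by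
    simp only [Matrix.sum_apply]
    have h0 : ∀ (p : Fin (d i)) (q : Fin (d j)) (g : G), (φ g i * Matrix.single p q (1 : ℂ) * φ g⁻¹ j) p q =
        φ g i p p * φ g⁻¹ j q q := by
      intro p q g
      rw [Matrix.mul_apply, Finset.sum_eq_single q]
      · simp
      · intro b _ hb
        rw [Matrix.mul_single_apply_of_ne _ _ _ _ _ hb]
        simp
      · simp
    simp only [h0, Matrix.trace, Matrix.diag, Finset.sum_mul_sum]
    rw [Finset.sum_comm]
    refine Finset.sum_congr rfl fun p _ => ?_
    rw [Finset.sum_comm]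
  rw [key]
  split_ifs with hij
  · subst hij
    have hs : ∀ p q : Fin (d i), ∃ c : ℂ,
        (∑ g, φ g i * Matrix.single p q (1 : ℂ) * φ g⁻¹ i) = Matrix.scalar (Fin (d i)) c := by
      intro p q
      have : (∑ g, φ g i * Matrix.single p q (1 : ℂ) * φ g⁻¹ i) ∈
          Set.range (Matrix.scalar (Fin (d i))) := by
        refine Matrix.mem_range_scalar_of_commute_single fun a b _ => ?_
        have := sum_conj_intertwines φ hφ i i (Matrix.single p q (1 : ℂ))
          (Pi.single i (Matrix.single a b (1 : ℂ)))
        simpa [Commute, SemiconjBy] using this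
      obtain ⟨c, hc⟩ := this
      exact ⟨c, hc.symm⟩
    have ht : ∀ p q : Fin (d i),
        (∑ g, φ g i * Matrix.single p q (1 : ℂ) * φ g⁻¹ i).trace =
          if p = q then (Fintype.card G : ℂ) else 0 := by
      intro p q
      rw [Matrix.trace_sum]
      have : ∀ g, (φ g i * Matrix.single p q (1 : ℂ) * φ g⁻¹ i).trace =
          if p = q then 1 else 0 := by
        intro g
        rw [Matrix.trace_mul_comm, ← Matrix.mul_assoc, ← Pi.mul_apply, ← map_mul]
        simp only [inv_mul_cancel, map_one, Pi.one_apply, one_mul]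
        split_ifs with h
        · subst h; simp
        · exact Matrix.trace_single_eq_of_ne _ _ _ h
      simp only [this]
      split_ifs <;> simp
    choose c hc using hs
    have hd0 : (d i : ℂ) ≠ 0 := Nat.cast_ne_zero.2 (NeZero.ne _)
    have hcv : ∀ p q, c p q = if p = q then (Fintype.card G : ℂ) / d i else 0 := by
      intro p q
      have := ht p q
      rw [hc] at this
      simp [Matrix.trace] at this
      split_ifs with h
      · rw [if_pos h] at this
        field_simp
        linear_combination this
      · rw [if_neg h] at this
        exact (mul_eq_zero.1 this).resolve_left hd0
    simp only [hc, Matrix.scalar_apply, Matrix.diagonal_apply, hcv]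
    simp
    field_simp
  · refine Finset.sum_eq_zero fun p _ => Finset.sum_eq_zero fun q _ => ?_
    have := sum_conj_intertwines φ hφ i j (Matrix.single p q (1 : ℂ)) (Pi.single i 1)
    rw [Pi.single_eq_same, Pi.single_eq_of_ne (Ne.symm hij)] at this
    rw [Matrix.one_mul, Matrix.mul_zero] at this
    rw [this]
    rfl

theorem traceForm_eq_sum [∀ i, NeZero (d i)] (t : MatProd d →ₗ[ℂ] ℂ)
    (ht : ∀ a b, t (a * b) = t (b * a)) (b : MatProd d) :
    t b = ∑ i, t (Pi.single i (Matrix.single 0 0 1)) * (b i).trace := by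
  classical
  have h1 : ∀ i p q, t (Pi.single i (Matrix.single p q 1)) =
      if p = q then t (Pi.single i (Matrix.single 0 0 1)) else 0 := by
    intro i p q
    have e1 : (Pi.single i (Matrix.single p q 1) : MatProd d) =
        Pi.single i (Matrix.single p 0 1) * Pi.single i (Matrix.single 0 q 1) := by
      rw [← Pi.single_mul]; simp
    rw [e1, ht, ← Pi.single_mul]
    split_ifs with h
    · subst h; simp
    · rw [Matrix.single_mul_single_of_ne _ _ _ _ (Ne.symm h)]; simp
  have h2 : b = ∑ i, ∑ p, ∑ q, b i p q • (Pi.single i (Matrix.single p q 1) : MatProd d) := by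
    conv_lhs => rw [← Finset.univ_sum_single b]
    refine Finset.sum_congr rfl fun i _ => ?_
    conv_lhs => rw [Matrix.matrix_eq_sum_single (b i)]
    simp only [← Pi.single_smul, Matrix.smul_single, smul_eq_mul, mul_one]
    have h3 : ∀ x, Pi.single i x =
        LinearMap.single ℂ (fun i => Matrix (Fin (d i)) (Fin (d i)) ℂ) i x := fun _ => rfl
    simp only [h3, map_sum]
  generalize hτ : (fun i => t (Pi.single i (Matrix.single 0 0 1))) = τ
  replace h1 : ∀ i p q, t (Pi.single i (Matrix.single p q 1)) = if p = q then τ i else 0 := by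
    intro i p q
    rw [h1, ← hτ]
  conv_lhs => rw [h2]
  simp only [map_sum, map_smul, h1, smul_eq_mul, if_true]
  refine Finset.sum_congr rfl fun i _ => ?_
  rw [Matrix.trace, Finset.mul_sum]
  refine Finset.sum_congr rfl fun p _ => ?_
  rw [Finset.sum_eq_single p (fun q _ hq => by rw [if_neg (Ne.symm hq), mul_zero]) (by simp),
    if_pos rfl, mul_comm, Matrix.diag_apply]

theorem trace_conj_matProd (x y : MatProd d) :
    LinearMap.trace ℂ (MatProd d) (LinearMap.mulLeft ℂ x ∘ₗ LinearMap.mulRight ℂ y) =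
      ∑ i, (x i).trace * (y i).trace := by
  classical
  rw [LinearMap.trace_eq_matrix_trace ℂ (Pi.basis fun i => Matrix.stdBasis ℂ (Fin (d i)) (Fin (d i)))]
  rw [Matrix.trace, Fintype.sum_sigma]
  refine Finset.sum_congr rfl fun i _ => ?_
  rw [Matrix.trace, Matrix.trace, Finset.sum_mul_sum, Fintype.sum_prod_type]
  refine Finset.sum_congr rfl fun p _ => Finset.sum_congr rfl fun q _ => ?_
  rw [Matrix.diag_apply, LinearMap.toMatrix_apply]
  simp only [Pi.basis_apply, Pi.basis_repr, LinearMap.comp_apply, LinearMap.mulLeft_apply,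
    LinearMap.mulRight_apply, Pi.mul_apply, Pi.single_eq_same, Matrix.stdBasis_eq_single]
  have : ∀ M : Matrix (Fin (d i)) (Fin (d i)) ℂ,
      (Matrix.stdBasis ℂ (Fin (d i)) (Fin (d i))).repr M (p, q) = M p q := by
    intro M
    simp [Matrix.stdBasis]
  rw [this, ← Matrix.mul_assoc, Matrix.mul_apply, Finset.sum_eq_single q]
  · simp
  · intro b _ hb
    rw [Matrix.mul_single_apply_of_ne _ _ _ _ _ hb]
    simp
  · simp

theorem card_fixed_conj_eq_trace (φ : G →* MatProd d) (S : Set G) [Fintype S] [DecidableEq G]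
    (hli : LinearIndependent ℂ fun s : S => φ s) (hsp : ⊤ ≤ Submodule.span ℂ (Set.range fun s : S => φ s))
    (g : G) (hS : ∀ s ∈ S, g * s * g⁻¹ ∈ S) :
    (Fintype.card {s : S // g * s * g⁻¹ = s} : ℂ) = ∑ i, (φ g i).trace * (φ g⁻¹ i).trace := by
  classical
  rw [← trace_conj_matProd, LinearMap.trace_eq_matrix_trace ℂ (Module.Basis.mk hli hsp),
    Matrix.trace, Fintype.card_subtype, Finset.card_filter, Nat.cast_sum]
  refine Finset.sum_congr rfl fun s _ => ?_
  rw [Matrix.diag_apply, LinearMap.toMatrix_apply]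
  have h1 : (LinearMap.mulLeft ℂ (φ g) ∘ₗ LinearMap.mulRight ℂ (φ g⁻¹)) (Module.Basis.mk hli hsp s) =
      Module.Basis.mk hli hsp ⟨g * s * g⁻¹, hS s s.2⟩ := by
    simp [mul_assoc]
  rw [h1, Module.Basis.repr_self, Finsupp.single_apply]
  simp [Subtype.ext_iff]

end MatProd

theorem exists_trace_eq_natCast {X : Type*} [Fintype X] [DecidableEq X] {P : Matrix X X ℂ}
    (hP : IsIdempotentElem P) : ∃ k : ℕ, P.trace = k ∧ (k = 0 → P = 0) := by
  have h : IsIdempotentElem (Matrix.toLin' P) := by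
    rw [IsIdempotentElem, Module.End.mul_eq_comp, ← Matrix.toLin'_mul, hP.eq]
  refine ⟨Module.finrank ℂ (LinearMap.range (Matrix.toLin' P)), ?_, fun hk => ?_⟩
  · rw [← Matrix.trace_toLin'_eq, (LinearMap.IsIdempotentElem.isProj_range _ h).trace]
  · have : Matrix.toLin' P = 0 := by
      rw [← LinearMap.range_eq_bot, ← Submodule.finrank_eq_zero]
      exact hk
    simpa using this

theorem exists_character_decomposition {G X C : Type} [Group G] [Fintype G] [DecidableEq G]
    [Fintype X] [DecidableEq X] [MulAction G X] [DecidableEq C] (ct : X → C)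
    (hct : ∀ (g : G) x, ct (g • x) = ct x) :
    ∃ (r : ℕ) (ψ : Fin r → G → ℂ) (m : Fin r → C → ℕ),
      (∀ g c, (Fintype.card {x // ct x = c ∧ g • x = x} : ℂ) = ∑ i, (m i c : ℂ) * ψ i g) ∧
      (∀ i j, ∑ g, ψ i g * ψ j g⁻¹ = if i = j then (Fintype.card G : ℂ) else 0) ∧
      (∀ i, ∃ x, m i (ct x) ≠ 0) ∧
      ∀ (S : Set G) [Fintype S] (g : G),
        (LinearIndependent ℂ fun s : S => actionMatrix (X := X) (s : G)) →
        (∀ h : G, actionMatrix (X := X) h ∈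
          Submodule.span ℂ (Set.range fun s : S => actionMatrix (X := X) (s : G))) →
        (∀ s ∈ S, g * s * g⁻¹ ∈ S) →
        (Fintype.card {s : S // g * s * g⁻¹ = s} : ℂ) = ∑ i, ψ i g * ψ i g⁻¹ := by
  obtain ⟨r, d, φ, j, hd, hj, hjφ, hφ⟩ := exists_matProd_repr (actionMatrix (G := G) (X := X))
  have hblock : ∀ (b : MatProd d) x y, ct x ≠ ct y → j b x y = 0 := by
    intro b x y hxy
    have hb : b ∈ Submodule.span ℂ (Set.range φ) := by rw [hφ]; trivial
    induction hb using Submodule.span_induction with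
    | mem b hb =>
      obtain ⟨g, rfl⟩ := hb
      rw [hjφ]
      have : x ≠ g • y := by
        rintro rfl
        exact hxy (hct g y)
      simp [actionMatrix, this]
    | zero => simp
    | add a b _ _ ha hb => simp [ha, hb]
    | smul c b _ hb => simp [hb]
  let t : C → MatProd d →ₗ[ℂ] ℂ := fun c =>
    { toFun := fun b => ∑ x, if ct x = c then j b x x else 0
      map_add' := fun a b => by
        rw [← Finset.sum_add_distrib]
        refine Finset.sum_congr rfl fun x _ => ?_
        split_ifs <;> simp
      map_smul' := fun a b => by
        rw [RingHom.id_apply, smul_eq_mul, Finset.mul_sum]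
        refine Finset.sum_congr rfl fun x _ => ?_
        split_ifs <;> simp }
  have htd : ∀ c b, t c b = ∑ x, if ct x = c then j b x x else 0 := fun _ _ => rfl
  have htc : ∀ c a b, t c (a * b) = t c (b * a) := by
    intro c a b
    simp only [htd, map_mul, Matrix.mul_apply]
    have : ∀ a b : MatProd d, (∑ x, if ct x = c then ∑ y, j a x y * j b y x else 0) =
        ∑ x, ∑ y, if ct x = c ∧ ct y = c then j a x y * j b y x else 0 := by
      intro a b
      refine Finset.sum_congr rfl fun x _ => ?_
      split_ifs with h
      · refine Finset.sum_congr rfl fun y _ => ?_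
        split_ifs with h2
        · rfl
        · rw [hblock a x y, zero_mul]
          intro h3
          exact h2 ⟨h, h3 ▸ h⟩
      · simp [h]
    rw [this, this, Finset.sum_comm]
    refine Finset.sum_congr rfl fun x _ => Finset.sum_congr rfl fun y _ => ?_
    simp only [and_comm (a := ct y = c), mul_comm (j a y x)]
  let ε : Fin r → MatProd d := fun i => Pi.single i (Matrix.single 0 0 1)
  have hε : ∀ i, ε i * ε i = ε i := by
    intro i
    simp only [ε]
    rw [← Pi.single_mul]
    simp
  have hε0 : ∀ i, ε i ≠ 0 := by
    intro i h
    have := congrFun (congrFun (congrFun h i) 0) 0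
    simp [ε] at this
  have hm : ∀ i c, ∃ k : ℕ, t c (ε i) = k := by
    intro i c
    let D : Matrix X X ℂ := Matrix.diagonal fun x => if ct x = c then 1 else 0
    have hDD : D * D = D := by
      simp [D, Matrix.diagonal_mul_diagonal]
    have hcomm : D * j (ε i) = j (ε i) * D := by
      ext x y
      simp only [D, Matrix.diagonal_mul, Matrix.mul_diagonal]
      by_cases h : ct x = ct y
      · rw [h, mul_comm]
      · rw [hblock _ x y h]; simp
    have hid : IsIdempotentElem (D * j (ε i)) := by
      rw [IsIdempotentElem, Matrix.mul_assoc, ← Matrix.mul_assoc (j (ε i)), ← hcomm,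
        Matrix.mul_assoc, ← map_mul, hε, ← Matrix.mul_assoc, hDD]
    obtain ⟨k, hk, -⟩ := exists_trace_eq_natCast hid
    refine ⟨k, ?_⟩
    rw [← hk, htd, Matrix.trace]
    refine Finset.sum_congr rfl fun x _ => ?_
    simp [D, Matrix.diagonal_mul]
  choose m hm using hm
  refine ⟨r, fun i g => (φ g i).trace, m, ?_, ?_, ?_, ?_⟩
  · intro g c
    have h1 : (Fintype.card {x // ct x = c ∧ g • x = x} : ℂ) = t c (φ g) := by
      rw [htd, hjφ, Fintype.card_subtype, Finset.card_filter, Nat.cast_sum]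
      refine Finset.sum_congr rfl fun x _ => ?_
      simp only [actionMatrix, MonoidHom.coe_mk, OneHom.coe_mk, Matrix.of_apply, Nat.cast_ite,
        Nat.cast_one, Nat.cast_zero, eq_comm (a := x), ite_and]
    rw [h1, traceForm_eq_sum (t c) (htc c)]
    refine Finset.sum_congr rfl fun i _ => ?_
    rw [← hm]
  · exact sum_trace_mul_trace_inv φ hφ
  · intro i
    by_contra! h
    have hid : IsIdempotentElem (j (ε i)) := by rw [IsIdempotentElem, ← map_mul, hε]
    obtain ⟨k, hk, hk0⟩ := exists_trace_eq_natCast hid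
    have h2 : (j (ε i)).trace = ∑ c ∈ Finset.univ.image ct, t c (ε i) := by
      simp only [htd]
      rw [Finset.sum_comm, Matrix.trace]
      refine Finset.sum_congr rfl fun x _ => ?_
      rw [Finset.sum_ite_eq]
      simp
    have h3 : (j (ε i)).trace = 0 := by
      rw [h2]
      refine Finset.sum_eq_zero fun c hc => ?_
      obtain ⟨x, -, rfl⟩ := Finset.mem_image.1 hc
      rw [hm, h, Nat.cast_zero]
    have h4 : k = 0 := by
      rw [hk] at h3
      exact_mod_cast h3
    exact hε0 i (hj (by rw [hk0 h4, map_zero]))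
  · intro S _ g hli hsp hS
    refine card_fixed_conj_eq_trace φ S ?_ ?_ g hS
    · refine LinearIndependent.of_comp j.toLinearMap ?_
      have : (j.toLinearMap ∘ fun s : S => φ s) =
          fun s : S => actionMatrix (X := X) (s : G) := by
        funext s; exact hjφ s
      rw [this]; exact hli
    · rw [← hφ, Submodule.span_le]
      rintro _ ⟨h, rfl⟩
      have h1 := hsp h
      have h2 : (Set.range fun s : S => actionMatrix (X := X) (s : G)) =
          j.toLinearMap '' (Set.range fun s : S => φ s) := by
        rw [← Set.range_comp]
        congr 1
        funext s; exact (hjφ s).symm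
      rw [h2, ← Submodule.map_span] at h1
      obtain ⟨b, hb, hb2⟩ := h1
      have : b = φ h := hj (by rw [hjφ]; exact hb2)
      rwa [← this]

/-- Words of length `N` in the alphabet `κ`. -/
abbrev Word (N : ℕ) (κ : Type) : Type := Fin N → κ

namespace Word

variable {N : ℕ} {κ : Type}

/-- Permutations of the positions act on words. -/
instance : MulAction (Equiv.Perm (Fin N)) (Word N κ) where
  smul g u := fun i => u (g⁻¹ i)
  one_smul u := rfl
  mul_smul g h u := by
    funext i
    change u ((g * h)⁻¹ i) = u (h⁻¹ (g⁻¹ i))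
    rw [_root_.mul_inv_rev]; rfl

theorem smul_apply (g : Equiv.Perm (Fin N)) (u : Word N κ) (i : Fin N) :
    (g • u) i = u (g⁻¹ i) := rfl

theorem smul_eq_iff (g : Equiv.Perm (Fin N)) (u v : Word N κ) :
    g • u = v ↔ ∀ i, v (g i) = u i := by
  constructor
  · rintro rfl i
    simp [smul_apply]
  · intro h
    funext i
    rw [smul_apply, ← h]
    simp

end Word

/-- The number of occurrences of a letter. -/
def letterCount {ι κ : Type} [Fintype ι] [DecidableEq κ] (u : ι → κ) (c : κ) : ℕ :=
  Fintype.card {i // u i = c}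

theorem sum_letterCount {ι κ : Type} [Fintype ι] [Fintype κ] [DecidableEq κ] (u : ι → κ) :
    ∑ c, letterCount u c = Fintype.card ι := by
  exact (Fintype.card_sigma (α := fun c => {i // u i = c})).symm.trans
    (Fintype.card_congr (Equiv.sigmaFiberEquiv u))

section LetterCount

variable {N : ℕ} {κ : Type} [DecidableEq κ]

theorem letterCount_smul (g : Equiv.Perm (Fin N)) (u : Word N κ) :
    letterCount (g • u) = letterCount u := by
  funext c
  exact Fintype.card_congr (g⁻¹.subtypeEquiv fun i => Iff.rfl)

theorem exists_smul_eq {u v : Word N κ} (h : letterCount u = letterCount v) :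
    ∃ g : Equiv.Perm (Fin N), g • u = v := by
  have e : ∀ c, Nonempty ({i : Fin N // u i = c} ≃ {i : Fin N // v i = c}) := fun c =>
    Fintype.card_eq.1 (congrFun h c)
  refine ⟨Equiv.ofFiberEquiv fun c => (e c).some, ?_⟩
  rw [Word.smul_eq_iff]
  exact Equiv.ofFiberEquiv_map _

theorem exists_letterCount_eq [Fintype κ] {M : κ → ℕ} (hM : ∑ c, M c = N) :
    ∃ u : Word N κ, letterCount u = M := by
  have : Fintype.card (Σ c, Fin (M c)) = Fintype.card (Fin N) := by simp [hM]
  let e := Fintype.equivOfCardEq this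
  refine ⟨fun i => (e.symm i).1, ?_⟩
  funext c
  rw [letterCount, Fintype.card_congr (e.symm.subtypeEquiv (q := fun x => x.1 = c)
    (fun _ => Iff.rfl)), Fintype.card_subtype, ← Finset.univ_sigma_univ, Finset.card_filter,
    Finset.sum_sigma, Finset.sum_eq_single c]
  · simp
  · intro b _ hb
    simp [hb]
  · simp

theorem sum_sum_fixed [Fintype κ] (F : (κ → ℕ) → ℕ) :
    ∑ g : Equiv.Perm (Fin N), ∑ z : Word N κ, (if g • z = z then F (letterCount z) else 0) =
      N.factorial * ∑ M ∈ Finset.piAntidiag Finset.univ N, F M := by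
  rw [Finset.sum_comm, Finset.mul_sum]
  have hmap : ∀ z ∈ (Finset.univ : Finset (Word N κ)),
      letterCount z ∈ Finset.piAntidiag (Finset.univ : Finset κ) N := by
    intro z _
    rw [Finset.mem_piAntidiag]
    exact ⟨(sum_letterCount z).trans (by simp), fun _ _ => Finset.mem_univ _⟩
  rw [← Finset.sum_fiberwise_of_maps_to hmap]
  refine Finset.sum_congr rfl fun M hM => ?_
  rw [Finset.mem_piAntidiag] at hM
  obtain ⟨z₀, hz₀⟩ := exists_letterCount_eq hM.1
  have h1 : ∀ z ∈ (Finset.univ : Finset (Word N κ)).filter (fun z : Word N κ => letterCount z = M),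
      (∑ g : Equiv.Perm (Fin N), if g • z = z then F (letterCount z) else 0) =
        (∑ g : Equiv.Perm (Fin N), if g • z₀ = z then 1 else 0) * F M := by
    intro z hz
    rw [Finset.mem_filter] at hz
    obtain ⟨h, hh⟩ := exists_smul_eq (hz₀.trans hz.2.symm)
    rw [hz.2, Finset.sum_mul]
    refine Fintype.sum_equiv (Equiv.mulRight h) _ _ fun g => ?_
    rw [Equiv.coe_mulRight, mul_smul, hh]
    simp
  rw [Finset.sum_congr rfl h1, ← Finset.sum_mul, Finset.sum_comm]
  congr 1
  have h2 : ∀ g : Equiv.Perm (Fin N), (∑ z ∈ (Finset.univ : Finset (Word N κ)).filter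
      (fun z : Word N κ => letterCount z = M), if g • z₀ = z then 1 else 0) = 1 := by
    intro g
    rw [Finset.sum_ite_eq, if_pos]
    simp [letterCount_smul, hz₀]
  simp only [h2]
  simp [Fintype.card_perm]

end LetterCount

section JacobiTrudi

open PowerSeries in
theorem det_pow_eq_det_complete_mul {R : Type*} [CommRing R] {l : ℕ} (y : Fin l → R) (a : Fin l → ℕ) :
    (Matrix.of fun i j => y j ^ a i).det =
      (Matrix.of fun i k : Fin l => coeff (a i)
        ((X : PowerSeries R) ^ (k : ℕ) * ∏ p, PowerSeries.mk fun n => y p ^ n)).det *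
      (Matrix.of fun i j : Fin l => y j ^ (i : ℕ)).det := by
  classical
  set H : PowerSeries R := ∏ p, PowerSeries.mk fun n => y p ^ n with hH
  let E : Fin l → Polynomial R := fun j =>
    ∏ p ∈ Finset.univ.erase j, (1 - Polynomial.C (y p) * Polynomial.X)
  have hE : ∀ j, (E j : PowerSeries R) * H = PowerSeries.mk fun n => y j ^ n := by
    intro j
    rw [hH, ← Finset.mul_prod_erase _ _ (Finset.mem_univ j)]
    have h1 : ((E j : Polynomial R) : PowerSeries R) =
        ∏ p ∈ Finset.univ.erase j, (1 - PowerSeries.C (y p) * PowerSeries.X) := by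
      have := map_prod (Polynomial.coeToPowerSeries.ringHom (R := R))
        (fun p => 1 - Polynomial.C (y p) * Polynomial.X) (Finset.univ.erase j)
      simp only [Polynomial.coeToPowerSeries.ringHom_apply, Polynomial.coe_sub,
        Polynomial.coe_one, Polynomial.coe_mul, Polynomial.coe_C, Polynomial.coe_X] at this
      exact this
    rw [h1, mul_left_comm, ← Finset.prod_mul_distrib, Finset.prod_eq_one, mul_one]
    intro p _
    ext n
    rw [sub_mul, one_mul, mul_assoc, map_sub, PowerSeries.coeff_C_mul]
    rcases n with _ | n
    · simp
    · rw [PowerSeries.coeff_succ_X_mul]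
      simp [pow_succ', PowerSeries.coeff_one]
  have hdeg : ∀ j, (E j).natDegree < l := by
    intro j
    have h1 : (E j).natDegree ≤ ∑ p ∈ Finset.univ.erase j, 1 := by
      refine (Polynomial.natDegree_prod_le _ _).trans (Finset.sum_le_sum fun p _ => ?_)
      compute_degree
    have h2 := j.pos
    simp at h1
    omega
  have hsum : ∀ j, (E j : PowerSeries R) =
      ∑ k : Fin l, PowerSeries.C ((E j).coeff k) * (X : PowerSeries R) ^ (k : ℕ) := by
    intro j
    conv_lhs => rw [Polynomial.as_sum_range' (E j) l (hdeg j)]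
    rw [← Fin.sum_univ_eq_sum_range fun k => Polynomial.monomial k ((E j).coeff k)]
    have := map_sum (Polynomial.coeToPowerSeries.ringHom (R := R))
      (fun k : Fin l => Polynomial.monomial (k : ℕ) ((E j).coeff k)) Finset.univ
    simp only [Polynomial.coeToPowerSeries.ringHom_apply] at this
    rw [this]
    refine Finset.sum_congr rfl fun k _ => ?_
    rw [← Polynomial.C_mul_X_pow_eq_monomial]
    simp
  let e : Matrix (Fin l) (Fin l) R := Matrix.of fun k j => (E j).coeff k
  have hfac : ∀ a : Fin l → ℕ, (Matrix.of fun i j => y j ^ a i) =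
      (Matrix.of fun i k : Fin l => coeff (a i) ((X : PowerSeries R) ^ (k : ℕ) * H)) * e := by
    intro a
    ext i j
    have h1 : coeff (a i) ((E j : PowerSeries R) * H) = y j ^ a i := by
      rw [hE]; simp
    rw [Matrix.of_apply, ← h1, hsum, Finset.sum_mul, map_sum, Matrix.mul_apply]
    refine Finset.sum_congr rfl fun k _ => ?_
    rw [mul_assoc, PowerSeries.coeff_C_mul, mul_comm]
    rfl
  have htri : (Matrix.of fun i k : Fin l =>
      coeff (i : ℕ) ((X : PowerSeries R) ^ (k : ℕ) * H)).det = 1 := by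
    rw [Matrix.det_of_isLowerTriangular]
    · refine Finset.prod_eq_one fun i _ => ?_
      rw [Matrix.of_apply, PowerSeries.coeff_X_pow_mul']
      simp [hH, map_prod]
    · intro i k hik
      rw [Matrix.of_apply, PowerSeries.coeff_X_pow_mul', if_neg]
      exact not_le.2 hik
  rw [hfac a, hfac fun i => (i : ℕ), Matrix.det_mul, Matrix.det_mul, htri, one_mul]

end JacobiTrudi

section Contingency

variable {l : ℕ}

/-- The number of nonnegative integer matrices of total sum `N` with row sums `α` and
column sums `β`. -/
def contingencyCount (N : ℕ) (α β : Fin l → ℕ) : ℕ :=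
  ∑ M ∈ Finset.piAntidiag (Finset.univ : Finset (Fin l × Fin l)) N,
    if (fun i => ∑ j, M (i, j)) = α ∧ (fun j => ∑ i, M (i, j)) = β then 1 else 0

theorem coeff_prod_X_pow (b c : Fin l → ℕ) :
    MvPolynomial.coeff (Finsupp.equivFunOnFinite.symm b)
      (∏ p, (MvPolynomial.X p : MvPolynomial (Fin l) ℤ) ^ c p) = if c = b then 1 else 0 := by
  have h : (∏ p, (MvPolynomial.X p : MvPolynomial (Fin l) ℤ) ^ c p) =
      MvPolynomial.monomial (Finsupp.equivFunOnFinite.symm c) 1 := by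
    rw [MvPolynomial.monomial_eq, Finsupp.prod_fintype _ _ (by simp)]
    simp
  rw [h, MvPolynomial.coeff_monomial]
  simp

theorem coeff_prod_mk_pow {R : Type*} [CommRing R] (y : Fin l → R) (n : ℕ) :
    PowerSeries.coeff n (∏ p, PowerSeries.mk fun n => y p ^ n) =
      ∑ r ∈ Finset.piAntidiag Finset.univ n, ∏ p, y p ^ r p := by
  classical
  rw [PowerSeries.coeff_prod]
  refine Finset.sum_nbij' (fun r => ⇑r) (fun r => Finsupp.equivFunOnFinite.symm r) ?_ ?_ ?_ ?_ ?_
  · intro r hr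
    simpa [Finset.mem_finsuppAntidiag] using hr
  · intro r hr
    simpa [Finset.mem_finsuppAntidiag] using hr
  · intro r _; simp
  · intro r _; simp
  · intro r _; simp

theorem prod_complete_eq {R : Type*} [CommRing R] (y : Fin l → R) {N : ℕ} {α : Fin l → ℕ}
    (hα : α ∈ Finset.piAntidiag Finset.univ N) :
    ∏ i, (∑ r ∈ Finset.piAntidiag (Finset.univ : Finset (Fin l)) (α i), ∏ p, y p ^ r p) =
      ∑ β ∈ Finset.piAntidiag (Finset.univ : Finset (Fin l)) N,
        (contingencyCount N α β : R) * ∏ p, y p ^ β p := by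
  classical
  have hα' : ∑ i, α i = N := by simpa using hα
  have h1 : ∏ i, (∑ r ∈ Finset.piAntidiag (Finset.univ : Finset (Fin l)) (α i), ∏ p, y p ^ r p) =
      ∑ M ∈ (Finset.piAntidiag (Finset.univ : Finset (Fin l × Fin l)) N).filter
        (fun M => (fun i => ∑ j, M (i, j)) = α), ∏ p, y p ^ ∑ i, M (i, p) := by
    rw [Finset.prod_univ_sum]
    refine Finset.sum_nbij' (fun x q => x q.1 q.2) (fun M i j => M (i, j)) ?_ ?_ ?_ ?_ ?_
    · intro x hx
      have hx' : ∀ i, ∑ j, x i j = α i := by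
        intro i; simpa using Fintype.mem_piFinset.1 hx i
      simp only [Finset.mem_filter, Finset.mem_piAntidiag, Fintype.sum_prod_type]
      refine ⟨⟨?_, by simp⟩, funext hx'⟩
      simp only [hx', hα']
    · intro M hM
      rw [Finset.mem_filter] at hM
      rw [Fintype.mem_piFinset]
      intro i
      simpa using congrFun hM.2 i
    · intro x _; rfl
    · intro M _; rfl
    · intro x _
      rw [Finset.prod_comm]
      refine Finset.prod_congr rfl fun p _ => ?_
      rw [Finset.prod_pow_eq_pow_sum]
  rw [h1]
  have hmap : ∀ M ∈ (Finset.piAntidiag (Finset.univ : Finset (Fin l × Fin l)) N).filter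
        (fun M => (fun i => ∑ j, M (i, j)) = α),
      (fun j => ∑ i, M (i, j)) ∈ Finset.piAntidiag (Finset.univ : Finset (Fin l)) N := by
    intro M hM
    simp only [Finset.mem_filter, Finset.mem_piAntidiag, Fintype.sum_prod_type] at hM ⊢
    rw [Finset.sum_comm]
    exact ⟨hM.1.1, by simp⟩
  rw [← Finset.sum_fiberwise_of_maps_to hmap]
  refine Finset.sum_congr rfl fun β _ => ?_
  rw [contingencyCount, Nat.cast_sum, Finset.sum_mul, Finset.filter_filter, Finset.sum_filter]
  refine Finset.sum_congr rfl fun M _ => ?_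
  split_ifs with h
  · simp [← h.2]
  · simp

theorem sum_sign_mul_contingencyCount {N : ℕ} {a : Fin l → ℕ} (b : Fin l → ℕ)
    (ha : ∑ i, a i = N + ∑ i : Fin l, (i : ℕ)) :
    ∑ w : Equiv.Perm (Fin l), ∑ w' : Equiv.Perm (Fin l),
      ((Equiv.Perm.sign w : ℤ) * (Equiv.Perm.sign w' : ℤ)) *
        ∑ α ∈ Finset.piAntidiag Finset.univ N, ∑ β ∈ Finset.piAntidiag Finset.univ N,
          (if (fun i => α i + (w i : ℕ)) = a ∧ (fun i => β i + (w' i : ℕ)) = b then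
            (contingencyCount N α β : ℤ) else 0) =
      ∑ σ : Equiv.Perm (Fin l), if a ∘ σ = b then (Equiv.Perm.sign σ : ℤ) else 0 := by
  classical
  have key := congrArg (MvPolynomial.coeff (Finsupp.equivFunOnFinite.symm b))
    (det_pow_eq_det_complete_mul (fun p => (MvPolynomial.X p : MvPolynomial (Fin l) ℤ)) a)
  have hrow : ∀ w : Equiv.Perm (Fin l),
      ∏ i, PowerSeries.coeff (a i) ((PowerSeries.X : PowerSeries (MvPolynomial (Fin l) ℤ)) ^
        (w i : ℕ) * ∏ p, PowerSeries.mk fun n => (MvPolynomial.X p) ^ n) =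
      ∑ α ∈ Finset.piAntidiag Finset.univ N, if (fun i => α i + (w i : ℕ)) = a then
        ∑ β ∈ Finset.piAntidiag (Finset.univ : Finset (Fin l)) N,
          (contingencyCount N α β : MvPolynomial (Fin l) ℤ) *
            ∏ p, (MvPolynomial.X p) ^ β p else 0 := by
    intro w
    simp only [PowerSeries.coeff_X_pow_mul']
    by_cases hw : ∀ i, (w i : ℕ) ≤ a i
    · have hmem : (fun i => a i - (w i : ℕ)) ∈
          Finset.piAntidiag (Finset.univ : Finset (Fin l)) N := by
        simp only [Finset.mem_piAntidiag]
        refine ⟨?_, by simp⟩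
        rw [Finset.sum_tsub_distrib _ fun i _ => hw i, ha, Equiv.sum_comp w fun i => (i : ℕ)]
        simp
      rw [Finset.sum_eq_single (fun i => a i - (w i : ℕ))]
      · rw [if_pos (by funext i; exact Nat.sub_add_cancel (hw i)), ← prod_complete_eq _ hmem]
        refine Finset.prod_congr rfl fun i _ => ?_
        rw [if_pos (hw i), coeff_prod_mk_pow]
      · intro α _ hne
        rw [if_neg]
        rintro rfl
        exact hne (by simp)
      · exact fun h => absurd hmem h
    · rw [not_forall] at hw
      obtain ⟨i, hi⟩ := hw
      rw [Finset.prod_eq_zero (Finset.mem_univ i) (if_neg hi), Finset.sum_eq_zero]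
      intro α _
      rw [if_neg]
      rintro rfl
      exact hi (by simp)
  rw [← Matrix.det_transpose (Matrix.of fun i k : Fin l => PowerSeries.coeff (a i) _)] at key
  simp only [Matrix.det_apply', Matrix.transpose_apply, Matrix.of_apply] at key
  simp only [hrow] at key
  have hL : MvPolynomial.coeff (Finsupp.equivFunOnFinite.symm b)
      (∑ σ : Equiv.Perm (Fin l), ((Equiv.Perm.sign σ : ℤ) : MvPolynomial (Fin l) ℤ) *
        ∏ i, MvPolynomial.X i ^ a (σ i)) =
      ∑ σ : Equiv.Perm (Fin l), if a ∘ σ = b then (Equiv.Perm.sign σ : ℤ) else 0 := by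
    rw [MvPolynomial.coeff_sum]
    refine Finset.sum_congr rfl fun σ _ => ?_
    rw [← zsmul_eq_mul, MvPolynomial.coeff_smul, coeff_prod_X_pow b (fun i => a (σ i))]
    change _ = if (fun i => a (σ i)) = b then _ else _
    split_ifs <;> simp
  rw [← hL, key, Finset.sum_mul_sum, MvPolynomial.coeff_sum]
  refine Finset.sum_congr rfl fun w _ => ?_
  rw [MvPolynomial.coeff_sum]
  refine Finset.sum_congr rfl fun w' _ => ?_
  rw [mul_mul_mul_comm, ← Int.cast_mul, ← zsmul_eq_mul, MvPolynomial.coeff_smul, smul_eq_mul]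
  congr 1
  rw [Finset.sum_mul, MvPolynomial.coeff_sum]
  refine Finset.sum_congr rfl fun α _ => ?_
  split_ifs with h
  · rw [Finset.sum_mul, MvPolynomial.coeff_sum]
    refine Finset.sum_congr rfl fun β _ => ?_
    rw [mul_assoc, ← Finset.prod_mul_distrib, ← nsmul_eq_mul, MvPolynomial.coeff_smul]
    simp only [← pow_add]
    rw [coeff_prod_X_pow b (fun i => β i + (w' i : ℕ))]
    simp [h]
  · simp [h]

end Contingency

section SignedCount

variable {l : ℕ}

theorem contingencyCount_comp (N : ℕ) (α β : Fin l → ℕ) (σ : Equiv.Perm (Fin l)) :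
    contingencyCount N α (β ∘ σ) = contingencyCount N α β := by
  classical
  unfold contingencyCount
  refine Finset.sum_nbij' (fun M q => M (q.1, σ.symm q.2)) (fun M q => M (q.1, σ q.2))
    ?_ ?_ ?_ ?_ ?_
  · intro M hM
    simp only [Finset.mem_piAntidiag, Fintype.sum_prod_type] at hM ⊢
    refine ⟨?_, by simp⟩
    rw [← hM.1]
    exact Finset.sum_congr rfl fun i _ => Equiv.sum_comp σ.symm fun j => M (i, j)
  · intro M hM
    simp only [Finset.mem_piAntidiag, Fintype.sum_prod_type] at hM ⊢
    refine ⟨?_, by simp⟩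
    rw [← hM.1]
    exact Finset.sum_congr rfl fun i _ => Equiv.sum_comp σ fun j => M (i, j)
  · intro M _; funext q; simp
  · intro M _; funext q; simp
  · intro M _
    have h1 : (fun i => ∑ j, M (i, σ.symm j)) = fun i => ∑ j, M (i, j) := by
      funext i
      exact Equiv.sum_comp σ.symm fun j => M (i, j)
    have h2 : (fun j => ∑ i, M (i, j)) = β ∘ σ ↔ (fun j => ∑ i, M (i, σ.symm j)) = β := by
      rw [← Equiv.comp_symm_eq]
      rfl
    simp only [h1, h2]

theorem comp_mem_piAntidiag {N : ℕ} {α : Fin l → ℕ} (σ : Equiv.Perm (Fin l)) :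
    α ∘ σ ∈ Finset.piAntidiag (Finset.univ : Finset (Fin l)) N ↔
      α ∈ Finset.piAntidiag (Finset.univ : Finset (Fin l)) N := by
  simp only [Finset.mem_piAntidiag]
  simp [Equiv.sum_comp σ α]

variable {r N : ℕ} {m : Fin r → (Fin l → ℕ) → ℤ}

theorem multiplicity_comp
    (hG : ∀ α ∈ Finset.piAntidiag (Finset.univ : Finset (Fin l)) N,
      ∀ β ∈ Finset.piAntidiag (Finset.univ : Finset (Fin l)) N,
        ∑ i, m i α * m i β = contingencyCount N α β)
    {α : Fin l → ℕ} (hα : α ∈ Finset.piAntidiag (Finset.univ : Finset (Fin l)) N)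
    (σ : Equiv.Perm (Fin l)) (i : Fin r) : m i (α ∘ σ) = m i α := by
  have hα' := (comp_mem_piAntidiag (N := N) σ).2 hα
  have h1 := hG _ hα _ hα
  have h2 := hG _ hα _ hα'
  have h3 := hG _ hα' _ hα'
  have h4 := hG _ hα' _ hα
  rw [contingencyCount_comp] at h2 h3
  have h5 : ∑ i, (m i (α ∘ σ) - m i α) ^ 2 = 0 := by
    have : ∑ i, (m i (α ∘ σ) - m i α) ^ 2 = ∑ i, m i (α ∘ σ) * m i (α ∘ σ) -
        2 * ∑ i, m i α * m i (α ∘ σ) + ∑ i, m i α * m i α := by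
      rw [Finset.mul_sum, ← Finset.sum_sub_distrib, ← Finset.sum_add_distrib]
      exact Finset.sum_congr rfl fun i _ => by ring
    have h6 : ∑ i, m i (α ∘ σ) * m i α = ∑ i, m i α * m i (α ∘ σ) :=
      Finset.sum_congr rfl fun i _ => mul_comm _ _
    rw [this]
    linarith
  have h7 := (Finset.sum_eq_zero_iff_of_nonneg fun i _ => sq_nonneg _).1 h5 i (Finset.mem_univ i)
  exact sub_eq_zero.1 (pow_eq_zero_iff two_ne_zero |>.1 h7)

/-- The alternating sum of the shifted values of a multiplicity function. -/
def alternant (N : ℕ) (f : (Fin l → ℕ) → ℤ) (a : Fin l → ℕ) : ℤ :=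
  ∑ w : Equiv.Perm (Fin l), (Equiv.Perm.sign w : ℤ) *
    ∑ α ∈ Finset.piAntidiag (Finset.univ : Finset (Fin l)) N,
      if (fun i => α i + (w i : ℕ)) = a then f α else 0

theorem sum_alternant_mul_alternant
    (hG : ∀ α ∈ Finset.piAntidiag (Finset.univ : Finset (Fin l)) N,
      ∀ β ∈ Finset.piAntidiag (Finset.univ : Finset (Fin l)) N,
        ∑ i, m i α * m i β = contingencyCount N α β)
    {a : Fin l → ℕ} (b : Fin l → ℕ) (ha : ∑ i, a i = N + ∑ i : Fin l, (i : ℕ)) :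
    ∑ i, alternant N (m i) a * alternant N (m i) b =
      ∑ σ : Equiv.Perm (Fin l), if a ∘ σ = b then (Equiv.Perm.sign σ : ℤ) else 0 := by
  rw [← sum_sign_mul_contingencyCount b ha]
  simp only [alternant, Finset.sum_mul_sum]
  rw [Finset.sum_comm]
  refine Finset.sum_congr rfl fun w _ => ?_
  rw [Finset.sum_comm]
  refine Finset.sum_congr rfl fun w' _ => ?_
  simp only [mul_mul_mul_comm]
  rw [← Finset.mul_sum]
  congr 1
  simp only [Finset.sum_mul_sum]
  rw [Finset.sum_comm]
  refine Finset.sum_congr rfl fun α hα => ?_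
  rw [Finset.sum_comm]
  refine Finset.sum_congr rfl fun β hβ => ?_
  rw [← hG α hα β hβ]
  by_cases h1 : (fun i => α i + (w i : ℕ)) = a
  · by_cases h2 : (fun i => β i + (w' i : ℕ)) = b
    · simp [h1, h2]
    · simp [h2]
  · simp [h1]

theorem sum_sign_ite_comp_self {a : Fin l → ℕ} :
    ∑ σ : Equiv.Perm (Fin l), (if a ∘ σ = a then (Equiv.Perm.sign σ : ℤ) else 0) =
      if Function.Injective a then 1 else 0 := by
  split_ifs with ha
  · rw [Finset.sum_eq_single 1]
    · simp
    · intro σ _ hσ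
      rw [if_neg]
      intro h
      exact hσ (Equiv.ext fun i => ha (congrFun h i))
    · simp
  · have h1 : ∑ σ : Equiv.Perm (Fin l), (if a ∘ σ = a then (Equiv.Perm.sign σ : ℤ) else 0) =
        (Matrix.of fun i j : Fin l => if a i = a j then (1 : ℤ) else 0).det := by
      rw [Matrix.det_apply']
      refine Finset.sum_congr rfl fun σ _ => ?_
      simp only [Matrix.of_apply, Finset.prod_ite_zero, Finset.prod_const_one, Finset.mem_univ,
        true_imp_iff, funext_iff, Function.comp_apply, mul_ite, mul_one, mul_zero]
      rfl
    rw [h1]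
    simp only [Function.Injective, not_forall] at ha
    obtain ⟨i, j, hij, hne⟩ := ha
    refine Matrix.det_zero_of_row_eq hne ?_
    funext k
    simp [hij]

theorem exists_alternant_ne_zero {f : (Fin l → ℕ) → ℤ}
    (hf : ∃ α ∈ Finset.piAntidiag (Finset.univ : Finset (Fin l)) N, f α ≠ 0) :
    ∃ a : Fin l → ℕ, ∑ i, a i = N + ∑ i : Fin l, (i : ℕ) ∧ alternant N f a ≠ 0 := by
  classical
  obtain ⟨α, hα, hmax⟩ := Finset.exists_max_image
    ((Finset.piAntidiag (Finset.univ : Finset (Fin l)) N).filter fun α => f α ≠ 0)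
    (fun α => ∑ j : Fin l, (j : ℤ) * (α j : ℤ))
    (by obtain ⟨α, h1, h2⟩ := hf; exact ⟨α, Finset.mem_filter.2 ⟨h1, h2⟩⟩)
  rw [Finset.mem_filter] at hα
  refine ⟨fun i => α i + (i : ℕ), ?_, ?_⟩
  · have := hα.1
    simp only [Finset.mem_piAntidiag] at this
    rw [Finset.sum_add_distrib, this.1]
  · have hone : ∀ w : Equiv.Perm (Fin l), ∀ β ∈ Finset.piAntidiag (Finset.univ : Finset (Fin l)) N,
        (fun i => β i + (w i : ℕ)) = (fun i => α i + (i : ℕ)) → f β ≠ 0 → w = 1 := by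
      intro w β hβ h hfβ
      have h1 := hmax β (Finset.mem_filter.2 ⟨hβ, hfβ⟩)
      have h2 : ∀ j : Fin l, (β j : ℤ) = α j + (j : ℤ) - (w j : ℕ) := by
        intro j
        have : β j + (w j : ℕ) = α j + (j : ℕ) := congrFun h j
        omega
      have h3 : ∑ j : Fin l, ((w j : ℕ) : ℤ) ^ 2 = ∑ j : Fin l, (j : ℤ) ^ 2 :=
        Equiv.sum_comp w fun j => ((j : ℕ) : ℤ) ^ 2
      have h4 : ∑ j : Fin l, ((j : ℤ) - ((w j : ℕ) : ℤ)) ^ 2 =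
          2 * (∑ j : Fin l, (j : ℤ) * (β j : ℤ) - ∑ j : Fin l, (j : ℤ) * (α j : ℤ)) +
          (∑ j : Fin l, ((w j : ℕ) : ℤ) ^ 2 - ∑ j : Fin l, (j : ℤ) ^ 2) := by
        rw [← Finset.sum_sub_distrib, ← Finset.sum_sub_distrib, Finset.mul_sum,
          ← Finset.sum_add_distrib]
        refine Finset.sum_congr rfl fun j _ => ?_
        rw [h2]
        ring
      have h5 : ∑ j : Fin l, ((j : ℤ) - ((w j : ℕ) : ℤ)) ^ 2 = 0 :=
        le_antisymm (by rw [h4, h3]; linarith) (Finset.sum_nonneg fun _ _ => sq_nonneg _)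
      ext j
      have h6 := (Finset.sum_eq_zero_iff_of_nonneg fun i _ => sq_nonneg _).1 h5 j
        (Finset.mem_univ j)
      have h7 := sub_eq_zero.1 (pow_eq_zero_iff two_ne_zero |>.1 h6)
      simp only [Equiv.Perm.coe_one, id]
      omega
    rw [alternant, Finset.sum_eq_single 1, Finset.sum_eq_single α]
    · simpa using hα.2
    · intro β _ hne
      rw [if_neg]
      intro h
      exact hne (funext fun i => Nat.add_right_cancel (congrFun h i))
    · exact fun h => absurd hα.1 h
    · intro w _ hw
      rw [Finset.sum_eq_zero, mul_zero]
      intro β hβ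
      split_ifs with h
      · by_contra h0
        exact hw (hone w β hβ h h0)
      · rfl
    · simp

theorem sum_sign_multiplicity
    (hG : ∀ α ∈ Finset.piAntidiag (Finset.univ : Finset (Fin l)) N,
      ∀ β ∈ Finset.piAntidiag (Finset.univ : Finset (Fin l)) N,
        ∑ i, m i α * m i β = contingencyCount N α β)
    (hne : ∀ i, ∃ α ∈ Finset.piAntidiag (Finset.univ : Finset (Fin l)) N, m i α ≠ 0)
    (i j : Fin r) :
    ∑ α ∈ Finset.piAntidiag (Finset.univ : Finset (Fin l)) N,
      m i α * alternant N (m j) (fun p => α p + (p : ℕ)) = if i = j then 1 else 0 := by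
  obtain ⟨a, ha, hk⟩ := exists_alternant_ne_zero (hne j)
  have hsq := sum_alternant_mul_alternant hG a ha
  have hle : ∑ i, alternant N (m i) a * alternant N (m i) a ≤ 1 := by
    rw [hsq, sum_sign_ite_comp_self]
    split_ifs <;> simp
  have hothers : ∀ i, i ≠ j → alternant N (m i) a = 0 := by
    intro i hij
    by_contra h0
    have h1 : alternant N (m i) a * alternant N (m i) a +
        alternant N (m j) a * alternant N (m j) a ≤
          ∑ i, alternant N (m i) a * alternant N (m i) a := by
      rw [← Finset.sum_pair (f := fun i => alternant N (m i) a * alternant N (m i) a) hij]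
      exact Finset.sum_le_sum_of_subset_of_nonneg (Finset.subset_univ _)
        fun _ _ _ => mul_self_nonneg _
    have h2 := mul_self_pos.2 h0
    have h3 := mul_self_pos.2 hk
    omega
  have hb : ∀ b, alternant N (m j) a * alternant N (m j) b =
      ∑ σ : Equiv.Perm (Fin l), if a ∘ σ = b then (Equiv.Perm.sign σ : ℤ) else 0 := by
    intro b
    rw [← sum_alternant_mul_alternant hG b ha, Finset.sum_eq_single j]
    · intro i _ hij
      rw [hothers i hij, zero_mul]
    · simp
  have hS : alternant N (m j) a * ∑ α ∈ Finset.piAntidiag (Finset.univ : Finset (Fin l)) N,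
      m i α * alternant N (m j) (fun p => α p + (p : ℕ)) = alternant N (m i) a := by
    rw [Finset.mul_sum]
    simp only [mul_left_comm (alternant N (m j) a), hb, Finset.mul_sum]
    rw [Finset.sum_comm, alternant]
    refine Fintype.sum_equiv (Equiv.inv _) _ _ fun σ => ?_
    rw [Finset.mul_sum]
    refine Finset.sum_nbij' (fun α => α ∘ (σ⁻¹ : Equiv.Perm (Fin l))) (fun α => α ∘ σ)
      (fun α hα => (comp_mem_piAntidiag _).2 hα) (fun α hα => (comp_mem_piAntidiag _).2 hα)
      ?_ ?_ ?_
    · intro α _; funext p; simp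
    · intro α _; funext p; simp
    · intro α hα
      have hiff : a ∘ σ = (fun p => α p + (p : ℕ)) ↔
          (fun p => (α ∘ (σ⁻¹ : Equiv.Perm (Fin l))) p +
            ((Equiv.inv (Equiv.Perm (Fin l)) σ) p : ℕ)) = a := by
        rw [← Equiv.eq_comp_symm, eq_comm]
        rfl
      simp only [hiff]
      rw [multiplicity_comp hG hα]
      split_ifs <;> simp [mul_comm]
  refine mul_left_cancel₀ hk (hS.trans ?_)
  split_ifs with h
  · rw [h, mul_one]
  · rw [hothers i h, mul_zero]

end SignedCount

section FixedWords

variable {N l : ℕ}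

/-- The number of words of given content fixed by a permutation of the positions. -/
def fixedCount (g : Equiv.Perm (Fin N)) (α : Fin l → ℕ) : ℕ :=
  Fintype.card {u : Word N (Fin l) // letterCount u = α ∧ g • u = u}

theorem fixedCount_eq_sum (g : Equiv.Perm (Fin N)) (α : Fin l → ℕ) :
    fixedCount g α = ∑ u : Word N (Fin l), if letterCount u = α ∧ g • u = u then 1 else 0 := by
  rw [fixedCount, Fintype.card_subtype, Finset.card_filter]

theorem fixedCount_inv (g : Equiv.Perm (Fin N)) (α : Fin l → ℕ) :
    fixedCount g⁻¹ α = fixedCount g α := by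
  refine Fintype.card_congr (Equiv.subtypeEquivRight fun u => ?_)
  rw [inv_smul_eq_iff, eq_comm (a := u)]

theorem letterCount_mem_piAntidiag (u : Word N (Fin l)) :
    letterCount u ∈ Finset.piAntidiag (Finset.univ : Finset (Fin l)) N := by
  simp only [Finset.mem_piAntidiag]
  exact ⟨(sum_letterCount u).trans (by simp), by simp⟩

theorem letterCount_fst {κ μ : Type} [DecidableEq κ] [DecidableEq μ] [Fintype μ]
    (z : Word N (κ × μ)) (i : κ) :
    letterCount (fun p => (z p).1) i = ∑ j, letterCount z (i, j) := by
  simp only [letterCount, Fintype.card_subtype, Finset.card_filter]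
  rw [Finset.sum_comm]
  refine Finset.sum_congr rfl fun p _ => ?_
  by_cases h : (z p).1 = i <;> simp [Prod.ext_iff, h]

theorem letterCount_snd {κ μ : Type} [DecidableEq κ] [DecidableEq μ] [Fintype κ]
    (z : Word N (κ × μ)) (j : μ) :
    letterCount (fun p => (z p).2) j = ∑ i, letterCount z (i, j) := by
  simp only [letterCount, Fintype.card_subtype, Finset.card_filter]
  rw [Finset.sum_comm]
  refine Finset.sum_congr rfl fun p _ => ?_
  by_cases h : (z p).2 = j <;> simp [Prod.ext_iff, h]

theorem sum_fixedCount_mul_fixedCount (α β : Fin l → ℕ) :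
    ∑ g : Equiv.Perm (Fin N), fixedCount g α * fixedCount g β =
      N.factorial * contingencyCount N α β := by
  rw [contingencyCount, ← sum_sum_fixed]
  refine Finset.sum_congr rfl fun g _ => ?_
  rw [fixedCount_eq_sum, fixedCount_eq_sum, Finset.sum_mul_sum, ← Fintype.sum_prod_type']
  refine Fintype.sum_equiv (Equiv.arrowProdEquivProdArrow (Fin N) (fun _ => Fin l) fun _ => Fin l).symm
    _ _ fun z => ?_
  obtain ⟨u, v⟩ := z
  have h1 : g • (fun p => (u p, v p) : Word N (Fin l × Fin l)) = (fun p => (u p, v p)) ↔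
      g • u = u ∧ g • v = v := by
    simp only [Word.smul_eq_iff, Prod.ext_iff, forall_and]
  have h2 : (fun i => ∑ j, letterCount (fun p => (u p, v p)) (i, j)) = letterCount u := by
    funext i
    exact (letterCount_fst (fun p => (u p, v p)) i).symm
  have h3 : (fun j => ∑ i, letterCount (fun p => (u p, v p)) (i, j)) = letterCount v := by
    funext i
    exact (letterCount_snd (fun p => (u p, v p)) i).symm
  change _ = if g • (fun p => (u p, v p) : Word N (Fin l × Fin l)) = (fun p => (u p, v p)) then
    (if (fun i => ∑ j, letterCount (fun p => (u p, v p)) (i, j)) = α ∧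
      (fun j => ∑ i, letterCount (fun p => (u p, v p)) (i, j)) = β then 1 else 0) else 0
  rw [h2, h3, ← ite_and, if_congr (and_congr_left' h1) rfl rfl]
  by_cases a1 : letterCount u = α <;> by_cases a2 : letterCount v = β <;>
    by_cases a3 : g • u = u <;> by_cases a4 : g • v = v <;> simp [a1, a2, a3, a4]

theorem card_fixed_pairs (g : Equiv.Perm (Fin N)) (w : Equiv.Perm (Fin l)) :
    Fintype.card {q : Word N (Fin l) × Word N (Fin l) // g • q.1 = q.1 ∧ g • q.2 = q.2 ∧
      ∀ i, letterCount q.1 i + (i : ℕ) = letterCount q.2 i + (w i : ℕ)} =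
    ∑ α ∈ Finset.piAntidiag (Finset.univ : Finset (Fin l)) N,
      ∑ β ∈ Finset.piAntidiag (Finset.univ : Finset (Fin l)) N,
        if (fun i => β i + (w i : ℕ)) = (fun i => α i + (i : ℕ)) then
          fixedCount g α * fixedCount g β else 0 := by
  have h1 : ∀ α β : Fin l → ℕ, (if (fun i => β i + (w i : ℕ)) = (fun i => α i + (i : ℕ)) then
      fixedCount g α * fixedCount g β else 0) =
      ∑ q : Word N (Fin l) × Word N (Fin l),
        if letterCount q.1 = α ∧ letterCount q.2 = β then
          (if g • q.1 = q.1 ∧ g • q.2 = q.2 ∧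
            ∀ i, letterCount q.1 i + (i : ℕ) = letterCount q.2 i + (w i : ℕ) then 1 else 0) else 0 := by
    intro α β
    rw [fixedCount_eq_sum, fixedCount_eq_sum, Finset.sum_mul_sum, ← Fintype.sum_prod_type']
    by_cases h : (fun i => β i + (w i : ℕ)) = (fun i => α i + (i : ℕ))
    · rw [if_pos h]
      refine Finset.sum_congr rfl fun q _ => ?_
      by_cases a1 : letterCount q.1 = α
      · by_cases a2 : letterCount q.2 = β
        · have h' : ∀ i, α i + (i : ℕ) = β i + (w i : ℕ) := fun i => (congrFun h i).symm
          by_cases a3 : g • q.1 = q.1 <;> by_cases a4 : g • q.2 = q.2 <;>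
            simp [a1, a2, a3, a4, h']
        · simp [a2]
      · simp [a1]
    · rw [if_neg h]
      refine (Finset.sum_eq_zero fun q _ => ?_).symm
      split_ifs with a1 a2
      · exact absurd (funext fun i => by rw [← a1.1, ← a1.2, a2.2.2 i]) h
      · rfl
      · rfl
  simp only [h1]
  rw [Fintype.card_subtype, Finset.card_filter, ← Finset.sum_product', Finset.sum_comm]
  refine Finset.sum_congr rfl fun q _ => ?_
  rw [Finset.sum_eq_single (letterCount q.1, letterCount q.2)]
  · simp
  · rintro ⟨α, β⟩ _ hne
    rw [if_neg]
    rintro ⟨rfl, rfl⟩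
    exact hne rfl
  · intro h
    exact absurd (Finset.mk_mem_product (letterCount_mem_piAntidiag _)
      (letterCount_mem_piAntidiag _)) h

theorem card_conj_fixed_eq_sum (S : Set (Equiv.Perm (Fin N))) [Fintype S] (g : Equiv.Perm (Fin N))
    (hli : LinearIndependent ℂ
      (fun s : S => actionMatrix (X := Word N (Fin l)) (s : Equiv.Perm (Fin N))))
    (hspan : ∀ h : Equiv.Perm (Fin N), actionMatrix (X := Word N (Fin l)) h ∈
      Submodule.span ℂ (Set.range fun s : S =>
        actionMatrix (X := Word N (Fin l)) (s : Equiv.Perm (Fin N))))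
    (hconj : ∀ s ∈ S, g * s * g⁻¹ ∈ S) :
    (Fintype.card {s : S // g * (s : Equiv.Perm (Fin N)) * g⁻¹ = s} : ℤ) =
      ∑ w : Equiv.Perm (Fin l), (Equiv.Perm.sign w : ℤ) *
        (Fintype.card {q : Word N (Fin l) × Word N (Fin l) // g • q.1 = q.1 ∧ g • q.2 = q.2 ∧
          ∀ i, letterCount q.1 i + (i : ℕ) = letterCount q.2 i + (w i : ℕ)} : ℤ) := by
  obtain ⟨r, ψ, m, hm, hψ, hne, hS⟩ := exists_character_decomposition
    (letterCount (ι := Fin N) (κ := Fin l)) fun g u => letterCount_smul g u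
  have hm' : ∀ (g : Equiv.Perm (Fin N)) α, (fixedCount g α : ℂ) = ∑ i, (m i α : ℂ) * ψ i g := hm
  have hG : ∀ α ∈ Finset.piAntidiag (Finset.univ : Finset (Fin l)) N,
      ∀ β ∈ Finset.piAntidiag (Finset.univ : Finset (Fin l)) N,
        ∑ i, (m i α : ℤ) * (m i β : ℤ) = contingencyCount N α β := by
    intro α _ β _
    have h1 : (N.factorial : ℂ) * ∑ i, (m i α : ℂ) * (m i β : ℂ) =
        N.factorial * contingencyCount N α β := by
      rw [← Nat.cast_mul, ← sum_fixedCount_mul_fixedCount, Nat.cast_sum]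
      have h2 : ∀ g : Equiv.Perm (Fin N), ((fixedCount g α * fixedCount g β : ℕ) : ℂ) =
          ∑ i, ∑ j, ((m i α : ℂ) * (m j β : ℂ)) * (ψ i g * ψ j g⁻¹) := by
        intro g
        rw [← fixedCount_inv g β, Nat.cast_mul, hm', hm', Finset.sum_mul_sum]
        exact Finset.sum_congr rfl fun i _ => Finset.sum_congr rfl fun j _ => by ring
      simp only [h2]
      rw [Finset.sum_comm, Finset.mul_sum]
      refine Finset.sum_congr rfl fun i _ => ?_
      rw [Finset.sum_comm]
      simp only [← Finset.mul_sum, hψ]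
      simp [Fintype.card_perm, mul_comm]
    have h3 := mul_left_cancel₀ (Nat.cast_ne_zero.2 N.factorial_ne_zero) h1
    exact_mod_cast h3
  have hne' : ∀ i, ∃ α ∈ Finset.piAntidiag (Finset.univ : Finset (Fin l)) N, (m i α : ℤ) ≠ 0 := by
    intro i
    obtain ⟨u, hu⟩ := hne i
    exact ⟨letterCount u, letterCount_mem_piAntidiag u, Nat.cast_ne_zero.2 hu⟩
  have hδ := sum_sign_multiplicity (m := fun i α => (m i α : ℤ)) hG hne'
  suffices h : (Fintype.card {s : S // g * (s : Equiv.Perm (Fin N)) * g⁻¹ = s} : ℂ) =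
      ∑ w : Equiv.Perm (Fin l), ((Equiv.Perm.sign w : ℤ) : ℂ) *
        (Fintype.card {q : Word N (Fin l) × Word N (Fin l) // g • q.1 = q.1 ∧ g • q.2 = q.2 ∧
          ∀ i, letterCount q.1 i + (i : ℕ) = letterCount q.2 i + (w i : ℕ)} : ℂ) by
    exact_mod_cast h
  rw [hS S g hli hspan hconj]
  have h1 : ∀ i, ψ i g * ψ i g⁻¹ = ∑ j, (∑ α ∈ Finset.piAntidiag (Finset.univ : Finset (Fin l)) N,
      (m i α : ℂ) * (alternant N (fun α => (m j α : ℤ)) (fun p => α p + (p : ℕ)) : ℂ)) *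
        (ψ i g * ψ j g⁻¹) := by
    intro i
    have h2 : ∀ j, (∑ α ∈ Finset.piAntidiag (Finset.univ : Finset (Fin l)) N,
      (m i α : ℂ) * (alternant N (fun α => (m j α : ℤ)) (fun p => α p + (p : ℕ)) : ℂ)) =
        if i = j then 1 else 0 := by
      intro j
      exact_mod_cast congrArg (Int.cast : ℤ → ℂ) (hδ i j)
    simp [h2]
  simp only [h1, card_fixed_pairs, alternant]
  push_cast
  have h2 : ∀ α β : Fin l → ℕ, ((fixedCount g α : ℕ) : ℂ) * ((fixedCount g β : ℕ) : ℂ) =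
      ∑ i, ∑ j, ((m i α : ℂ) * ψ i g) * ((m j β : ℂ) * ψ j g⁻¹) := by
    intro α β
    rw [← fixedCount_inv g β, hm', hm', Finset.sum_mul_sum]
  have hL : ∀ i j, (∑ α ∈ Finset.piAntidiag (Finset.univ : Finset (Fin l)) N,
      (m i α : ℂ) * ∑ w : Equiv.Perm (Fin l), ((Equiv.Perm.sign w : ℤ) : ℂ) *
        ∑ β ∈ Finset.piAntidiag (Finset.univ : Finset (Fin l)) N,
          if (fun i => β i + (w i : ℕ)) = (fun i => α i + (i : ℕ)) then (m j β : ℂ) else 0) *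
        (ψ i g * ψ j g⁻¹) =
      ∑ w : Equiv.Perm (Fin l), ∑ α ∈ Finset.piAntidiag (Finset.univ : Finset (Fin l)) N,
        ∑ β ∈ Finset.piAntidiag (Finset.univ : Finset (Fin l)) N,
          ((Equiv.Perm.sign w : ℤ) : ℂ) *
          if (fun i => β i + (w i : ℕ)) = (fun i => α i + (i : ℕ)) then
            ((m i α : ℂ) * ψ i g) * ((m j β : ℂ) * ψ j g⁻¹) else 0 := by
    intro i j
    rw [Finset.sum_comm, Finset.sum_mul]
    refine Finset.sum_congr rfl fun α _ => ?_
    rw [Finset.mul_sum, Finset.sum_mul]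
    refine Finset.sum_congr rfl fun w _ => ?_
    rw [Finset.mul_sum, Finset.mul_sum, Finset.sum_mul]
    refine Finset.sum_congr rfl fun β _ => ?_
    split_ifs
    · ring
    · simp
  have hR : ∀ w : Equiv.Perm (Fin l), ((Equiv.Perm.sign w : ℤ) : ℂ) *
      ∑ α ∈ Finset.piAntidiag (Finset.univ : Finset (Fin l)) N,
        ∑ β ∈ Finset.piAntidiag (Finset.univ : Finset (Fin l)) N,
          (if (fun i => β i + (w i : ℕ)) = (fun i => α i + (i : ℕ)) then
            ∑ i, ∑ j, ((m i α : ℂ) * ψ i g) * ((m j β : ℂ) * ψ j g⁻¹) else 0) =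
      ∑ p : Fin r × Fin r, ∑ α ∈ Finset.piAntidiag (Finset.univ : Finset (Fin l)) N,
        ∑ β ∈ Finset.piAntidiag (Finset.univ : Finset (Fin l)) N,
          ((Equiv.Perm.sign w : ℤ) : ℂ) *
          if (fun i => β i + (w i : ℕ)) = (fun i => α i + (i : ℕ)) then
            ((m p.1 α : ℂ) * ψ p.1 g) * ((m p.2 β : ℂ) * ψ p.2 g⁻¹) else 0 := by
    intro w
    symm
    rw [Finset.sum_comm, Finset.mul_sum]
    refine Finset.sum_congr rfl fun α _ => ?_
    rw [Finset.sum_comm, Finset.mul_sum]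
    refine Finset.sum_congr rfl fun β _ => ?_
    rw [← Finset.mul_sum]
    split_ifs
    · rw [Fintype.sum_prod_type]
    · simp
  simp only [h2, hL, hR]
  symm
  rw [Finset.sum_comm, Fintype.sum_prod_type]

end FixedWords

section StandardBasis

variable {N l : ℕ}

theorem exists_coloring_of_lisLE {π : Equiv.Perm (Fin N)} (hπ : lisLE π l) :
    ∃ w : Word N (Fin l), ∀ i j, i < j → w i = w j → π j < π i := by
  classical
  let P : Fin N → ℕ → Prop := fun i k => ∃ f : Fin (k + 1) → Fin N,
    StrictMono f ∧ StrictMono (fun p => π (f p)) ∧ f 0 = i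
  have hP0 : ∀ i, P i 0 := fun i =>
    ⟨fun _ => i, fun a b hab => by omega, fun a b hab => by omega, rfl⟩
  have hPl : ∀ i k, P i k → k < l := by
    rintro i k ⟨f, hf, hf', -⟩
    exact hπ _ f hf hf'
  have hstep : ∀ i j k, i < j → π i < π j → P j k → P i (k + 1) := by
    rintro i j k hij hπij ⟨f, hf, hf', rfl⟩
    refine ⟨Matrix.vecCons i f, strictMono_vecCons.2 ⟨hij, hf⟩, ?_, rfl⟩
    have : (fun p => π (Matrix.vecCons i f p)) = Matrix.vecCons (π i) (fun p => π (f p)) := by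
      funext p
      refine Fin.cases ?_ (fun p => ?_) p <;> simp
    rw [this]
    exact strictMono_vecCons.2 ⟨hπij, hf'⟩
  let h : Fin N → ℕ := fun i => Nat.findGreatest (P i) l
  have hh : ∀ i, P i (h i) := fun i => Nat.findGreatest_spec (Nat.zero_le l) (hP0 i)
  refine ⟨fun i => ⟨h i, hPl i _ (hh i)⟩, fun i j hij hw => ?_⟩
  have hw' : h i = h j := congrArg Fin.val hw
  refine lt_of_not_ge fun hle => ?_
  have hlt : π i < π j := lt_of_le_of_ne hle fun he => hij.ne (π.injective he)
  have h1 := hstep i j _ hij hlt (hh j)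
  have h2 : h j + 1 ≤ h i := Nat.le_findGreatest (hPl i _ h1).le h1
  omega

theorem exists_min_moved {τ : Equiv.Perm (Fin N)} (hτ : τ ≠ 1) :
    ∃ k, (∀ i < k, τ i = i) ∧ k < τ k := by
  classical
  have hne : (Finset.univ.filter fun i => τ i ≠ i).Nonempty := by
    by_contra h
    rw [Finset.not_nonempty_iff_eq_empty, Finset.filter_eq_empty_iff] at h
    exact hτ (Equiv.ext fun i => not_not.1 (h (Finset.mem_univ i)))
  obtain ⟨k, hk, hmin⟩ := Finset.exists_min_image _ id hne
  simp only [Finset.mem_filter, Finset.mem_univ, true_and, id] at hk hmin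
  have hfix : ∀ i < k, τ i = i := fun i hi => by
    by_contra h
    exact absurd (hmin i h) (not_le.2 hi)
  refine ⟨k, hfix, lt_of_le_of_ne (not_lt.1 fun h => ?_) (Ne.symm hk)⟩
  exact hk (τ.injective (hfix _ h))

theorem linearIndependent_actionMatrix :
    LinearIndependent ℂ (fun s : {π : Equiv.Perm (Fin N) | lisLE π l} =>
      actionMatrix (X := Word N (Fin l)) (s : Equiv.Perm (Fin N))) := by
  classical
  rw [Fintype.linearIndependent_iff]
  intro c hc
  have hwf : WellFounded fun s t : {π : Equiv.Perm (Fin N) | lisLE π l} =>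
      toLex (⇑(s : Equiv.Perm (Fin N))) < toLex (⇑(t : Equiv.Perm (Fin N))) :=
    InvImage.wf _ (wellFounded_lt (α := Lex (Fin N → Fin N)))
  intro s
  induction s using hwf.induction with
  | _ s ih =>
  obtain ⟨w, hw⟩ := exists_coloring_of_lisLE s.2
  have h1 := congrFun (congrFun hc ((s : Equiv.Perm (Fin N)) • w)) w
  rw [Matrix.sum_apply, Finset.sum_eq_single s] at h1
  · simpa [actionMatrix] using h1
  · intro t _ hts
    rw [Matrix.smul_apply, smul_eq_mul]
    by_cases ht : (s : Equiv.Perm (Fin N)) • w = (t : Equiv.Perm (Fin N)) • w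
    · rw [ih t, zero_mul]
      obtain ⟨k, hk, hlt⟩ := exists_min_moved (N := N)
        (τ := (s : Equiv.Perm (Fin N))⁻¹ * (t : Equiv.Perm (Fin N))) (by
          intro h
          exact hts (Subtype.ext (inv_mul_eq_one.1 h).symm))
      have hwk : w k = w (((s : Equiv.Perm (Fin N))⁻¹ * (t : Equiv.Perm (Fin N))) k) := by
        have : ((s : Equiv.Perm (Fin N))⁻¹ * (t : Equiv.Perm (Fin N))) • w = w := by
          rw [mul_smul, ← ht, inv_smul_smul]
        exact ((Word.smul_eq_iff _ _ _).1 this k).symm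
      refine ⟨k, fun i hi => ?_, ?_⟩
      · have := hk i hi
        rw [Equiv.Perm.mul_apply, Equiv.Perm.inv_eq_iff_eq] at this
        exact this
      · have := hw _ _ hlt hwk
        simpa using this
    · simp [actionMatrix, ht]
  · simp

theorem sum_sign_actionMatrix_viaEmbedding (π : Equiv.Perm (Fin N)) {k : ℕ} (f : Fin k ↪ Fin N)
    (hk : l < k) :
    ∑ τ : Equiv.Perm (Fin k), ((Equiv.Perm.sign τ : ℤ) : ℂ) •
      actionMatrix (X := Word N (Fin l)) (π * τ.viaEmbedding f) = 0 := by
  classical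
  ext x y
  obtain ⟨i, j, hij, hy⟩ := Fintype.exists_ne_map_eq_of_card_lt (fun p => y (f p)) (by simpa)
  have hs : ((Equiv.swap i j).viaEmbedding f) • y = y := by
    rw [Word.smul_eq_iff]
    intro p
    by_cases hp : p ∈ Set.range f
    · obtain ⟨q, rfl⟩ := hp
      rw [Equiv.Perm.viaEmbedding_apply]
      rcases eq_or_ne q i with rfl | hqi
      · simpa using hy.symm
      rcases eq_or_ne q j with rfl | hqj
      · simpa using hy
      rw [Equiv.swap_apply_of_ne_of_ne hqi hqj]
    · rw [Equiv.Perm.viaEmbedding_apply_of_notMem _ _ _ hp]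
  have hneg : (∑ τ : Equiv.Perm (Fin k), ((Equiv.Perm.sign τ : ℤ) : ℂ) •
      actionMatrix (X := Word N (Fin l)) (π * τ.viaEmbedding f)) x y =
      -(∑ τ : Equiv.Perm (Fin k), ((Equiv.Perm.sign τ : ℤ) : ℂ) •
      actionMatrix (X := Word N (Fin l)) (π * τ.viaEmbedding f)) x y := by
    rw [Matrix.sum_apply, ← Finset.sum_neg_distrib]
    refine Fintype.sum_equiv (Equiv.mulRight (Equiv.swap i j)) _ _ fun τ => ?_
    have hmul : (τ * Equiv.swap i j).viaEmbedding f =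
        τ.viaEmbedding f * (Equiv.swap i j).viaEmbedding f :=
      map_mul (Equiv.Perm.viaEmbeddingHom f) τ (Equiv.swap i j)
    simp only [Matrix.smul_apply, actionMatrix, MonoidHom.coe_mk, OneHom.coe_mk, Matrix.of_apply,
      Equiv.coe_mulRight, hmul]
    rw [← mul_assoc, mul_smul (π * τ.viaEmbedding f), hs]
    split_ifs <;> simp [Equiv.Perm.sign_swap hij]
  exact CharZero.eq_neg_self_iff.1 hneg

theorem actionMatrix_mem_span (π : Equiv.Perm (Fin N)) :
    actionMatrix (X := Word N (Fin l)) π ∈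
      Submodule.span ℂ (Set.range fun s : {π : Equiv.Perm (Fin N) | lisLE π l} =>
        actionMatrix (X := Word N (Fin l)) (s : Equiv.Perm (Fin N))) := by
  classical
  have hwf : WellFounded fun s t : Equiv.Perm (Fin N) => toLex (⇑t) < toLex (⇑s) :=
    InvImage.wf _ (wellFounded_gt (α := Lex (Fin N → Fin N)))
  induction π using hwf.induction with
  | _ π ih =>
  by_cases hπ : lisLE π l
  · exact Submodule.subset_span ⟨⟨π, hπ⟩, rfl⟩
  · simp only [lisLE, not_forall, not_le] at hπ
    obtain ⟨k, f, hf, hf', hk⟩ := hπ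
    have h0 := sum_sign_actionMatrix_viaEmbedding π ⟨f, hf.injective⟩ hk
    rw [← Finset.add_sum_erase _ _ (Finset.mem_univ 1)] at h0
    have h1 : (1 : Equiv.Perm (Fin k)).viaEmbedding ⟨f, hf.injective⟩ = 1 :=
      map_one (Equiv.Perm.viaEmbeddingHom ⟨f, hf.injective⟩)
    rw [h1, Equiv.Perm.sign_one, mul_one] at h0
    simp only [Units.val_one, Int.cast_one, one_smul] at h0
    rw [eq_neg_of_add_eq_zero_left h0]
    refine Submodule.neg_mem _ (Submodule.sum_mem _ fun τ hτ => Submodule.smul_mem _ _ (ih _ ?_))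
    obtain ⟨p, hp, hlt⟩ := exists_min_moved (Finset.ne_of_mem_erase hτ)
    refine ⟨f p, fun i hi => ?_, ?_⟩
    · change π i = π (τ.viaEmbedding ⟨f, hf.injective⟩ i)
      by_cases hr : i ∈ Set.range f
      · obtain ⟨q, rfl⟩ := hr
        have := Equiv.Perm.viaEmbedding_apply τ ⟨f, hf.injective⟩ q
        rw [hp q (hf.lt_iff_lt.1 hi)] at this
        exact congrArg π this.symm
      · rw [Equiv.Perm.viaEmbedding_apply_of_notMem τ ⟨f, hf.injective⟩ i hr]
    · change π (f p) < π (τ.viaEmbedding ⟨f, hf.injective⟩ (f p))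
      have := Equiv.Perm.viaEmbedding_apply τ ⟨f, hf.injective⟩ p
      refine lt_of_lt_of_eq (hf' hlt) (congrArg π this.symm)

end StandardBasis

section SignedPairs

/-- The signed count, over permutations `w` of the alphabet, of pairs of words whose contents
differ by the displacement of `w`. -/
def signedPairCount (S T : Type) [Fintype S] [Fintype T] (l : ℕ) : ℤ :=
  ∑ w : Equiv.Perm (Fin l), (Equiv.Perm.sign w : ℤ) *
    (Nat.card {q : (S → Fin l) × (T → Fin l) //
      ∀ i, letterCount q.1 i + (i : ℕ) = letterCount q.2 i + (w i : ℕ)} : ℤ)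

theorem letterCount_comp_equiv {S T κ : Type} [Fintype S] [Fintype T] [DecidableEq κ]
    (e : S ≃ T) (u : T → κ) : letterCount (fun s => u (e s)) = letterCount u := by
  funext c
  exact Fintype.card_congr (e.subtypeEquiv fun _ => Iff.rfl)

theorem signedPairCount_congr {S S' T T' : Type} [Fintype S] [Fintype S'] [Fintype T]
    [Fintype T'] (e : S ≃ S') (f : T ≃ T') (l : ℕ) :
    signedPairCount S T l = signedPairCount S' T' l := by
  unfold signedPairCount
  refine Finset.sum_congr rfl fun w _ => ?_
  congr 2
  refine Nat.card_congr (Equiv.subtypeEquiv (Equiv.prodCongr (e.arrowCongr (Equiv.refl _))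
    (f.arrowCongr (Equiv.refl _))) fun q => ?_)
  have h1 : letterCount ((e.arrowCongr (Equiv.refl (Fin l))) q.1) = letterCount q.1 :=
    letterCount_comp_equiv e.symm q.1
  have h2 : letterCount ((f.arrowCongr (Equiv.refl (Fin l))) q.2) = letterCount q.2 :=
    letterCount_comp_equiv f.symm q.2
  simp only [Equiv.prodCongr_apply, Prod.map, h1, h2]

theorem signedPairCount_eq_zero {S T : Type} [Fintype S] [Fintype T] {l : ℕ}
    (h : Fintype.card S ≠ Fintype.card T) : signedPairCount S T l = 0 := by
  refine Finset.sum_eq_zero fun w _ => ?_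
  have : IsEmpty {q : (S → Fin l) × (T → Fin l) //
      ∀ i, letterCount q.1 i + (i : ℕ) = letterCount q.2 i + (w i : ℕ)} := by
    refine ⟨fun q => h ?_⟩
    have h1 := Finset.sum_congr (rfl : (Finset.univ : Finset (Fin l)) = _) fun i _ => q.2 i
    rw [Finset.sum_add_distrib, Finset.sum_add_distrib, sum_letterCount, sum_letterCount,
      Equiv.sum_comp w fun i => (i : ℕ)] at h1
    exact Nat.add_right_cancel h1
  simp

theorem natCard_conj_fixed_eq_sum {N : ℕ} (l : ℕ) (g : Equiv.Perm (Fin N))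
    (hconj : ∀ π : Equiv.Perm (Fin N), lisLE π l → lisLE (g * π * g⁻¹) l) :
    (Nat.card {π : Equiv.Perm (Fin N) // g * π * g⁻¹ = π ∧ lisLE π l} : ℤ) =
      ∑ w : Equiv.Perm (Fin l), (Equiv.Perm.sign w : ℤ) *
        (Nat.card {q : Word N (Fin l) × Word N (Fin l) // g • q.1 = q.1 ∧ g • q.2 = q.2 ∧
          ∀ i, letterCount q.1 i + (i : ℕ) = letterCount q.2 i + (w i : ℕ)} : ℤ) := by
  classical
  have h := card_conj_fixed_eq_sum {π : Equiv.Perm (Fin N) | lisLE π l} g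
    linearIndependent_actionMatrix actionMatrix_mem_span hconj
  simp only [← Nat.card_eq_fintype_card] at h
  rw [← h]
  congr 1
  refine Nat.card_congr ⟨fun π => ⟨⟨π.1, π.2.2⟩, π.2.1⟩, fun s => ⟨s.1.1, s.2, s.1.2⟩,
    fun _ => rfl, fun _ => rfl⟩

theorem permCount_eq_signedPairCount (n l : ℕ) :
    (permCount n l : ℤ) = signedPairCount (Fin n) (Fin n) l := by
  have h := natCard_conj_fixed_eq_sum l (1 : Equiv.Perm (Fin n)) (fun π hπ => by simpa using hπ)
  simpa [permCount, signedPairCount] using h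

theorem signedPairCount_eq_ite (S T : Type) [Fintype S] [Fintype T] (l : ℕ) :
    signedPairCount S T l =
      if Fintype.card S = Fintype.card T then (permCount (Fintype.card S) l : ℤ) else 0 := by
  split_ifs with h
  · rw [permCount_eq_signedPairCount]
    exact signedPairCount_congr (Fintype.equivFin S) ((Fintype.equivFin T).trans (finCongr h.symm)) l
  · exact signedPairCount_eq_zero h

end SignedPairs

section Palindromes

variable {n : ℕ}

/-- The positions of a word of even length, split into a first half and its mirror image. -/
def mirrorEquiv (n : ℕ) : Fin n ⊕ Fin n ≃ Fin (2 * n) :=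
  Equiv.ofBijective
    (Sum.elim (fun i => ⟨i, by omega⟩) (fun i => Fin.rev ⟨i, by omega⟩))
    ((Fintype.bijective_iff_injective_and_card _).2 ⟨by
      rintro (i | i) (j | j) h <;>
        simp only [Sum.elim_inl, Sum.elim_inr, Fin.ext_iff, Fin.val_rev] at h
      · exact congrArg Sum.inl (Fin.ext h)
      · omega
      · omega
      · exact congrArg Sum.inr (Fin.ext (by omega)), by simp [two_mul]⟩)

theorem rev_mirrorEquiv (x : Fin n ⊕ Fin n) :
    Fin.rev (mirrorEquiv n x) = mirrorEquiv n x.swap := by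
  rcases x with i | i
  · rfl
  · exact Fin.rev_rev _

/-- Palindromes of length `2n` correspond to words of length `n`. -/
def palindromeEquiv (n : ℕ) (κ : Type) :
    {u : Fin (2 * n) → κ // ∀ i, u (Fin.rev i) = u i} ≃ (Fin n → κ) where
  toFun u i := u.1 (mirrorEquiv n (Sum.inl i))
  invFun v := ⟨fun p => Sum.elim v v ((mirrorEquiv n).symm p), by
    intro p
    obtain ⟨x, rfl⟩ := (mirrorEquiv n).surjective p
    simp only [rev_mirrorEquiv, Equiv.symm_apply_apply]
    rcases x with i | i <;> rfl⟩
  left_inv u := by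
    refine Subtype.ext (funext fun p => ?_)
    obtain ⟨x, rfl⟩ := (mirrorEquiv n).surjective p
    rcases x with i | i
    · simp
    · have := u.2 (mirrorEquiv n (Sum.inr i))
      rw [rev_mirrorEquiv] at this
      simpa using this
  right_inv v := by
    funext i
    simp

theorem letterCount_palindrome {κ : Type} [DecidableEq κ]
    (u : {u : Fin (2 * n) → κ // ∀ i, u (Fin.rev i) = u i}) (c : κ) :
    letterCount u.1 c = 2 * letterCount (palindromeEquiv n κ u) c := by
  obtain ⟨v, rfl⟩ := (palindromeEquiv n κ).symm.surjective u
  rw [Equiv.apply_symm_apply, ← letterCount_comp_equiv (mirrorEquiv n)]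
  simp only [letterCount, Fintype.card_subtype, Finset.card_filter, Fintype.sum_sum_type]
  simp [palindromeEquiv, two_mul]

theorem lisLE_rev_conj {N l : ℕ} {π : Equiv.Perm (Fin N)} (h : lisLE π l) :
    lisLE (Fin.revPerm * π * Fin.revPerm⁻¹) l := by
  intro k f hf hf'
  refine h k (fun i => Fin.rev (f (Fin.rev i))) ?_ ?_
  · intro i j hij
    exact Fin.rev_lt_rev.2 (hf (Fin.rev_lt_rev.2 hij))
  · intro i j hij
    have := hf' (Fin.rev_lt_rev.2 hij)
    exact Fin.rev_lt_rev.1 this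

theorem fUUCount_eq_sum (n l : ℕ) :
    (fUUCount n l : ℤ) = ∑ w : Equiv.Perm (Fin l), (Equiv.Perm.sign w : ℤ) *
      (Nat.card {q : (Fin n → Fin l) × (Fin n → Fin l) //
        ∀ i, 2 * letterCount q.1 i + (i : ℕ) = 2 * letterCount q.2 i + (w i : ℕ)} : ℤ) := by
  have h := natCard_conj_fixed_eq_sum l (Fin.revPerm : Equiv.Perm (Fin (2 * n)))
    fun π hπ => lisLE_rev_conj hπ
  have hinv : (Fin.revPerm : Equiv.Perm (Fin (2 * n)))⁻¹ = Fin.revPerm := rfl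
  have hl : fUUCount n l = Nat.card {π : Equiv.Perm (Fin (2 * n)) //
      Fin.revPerm * π * Fin.revPerm⁻¹ = π ∧ lisLE π l} := by
    refine Nat.card_congr (Equiv.subtypeEquivRight fun π => ?_)
    rw [hinv, eq_comm (a := π)]
  rw [hl, h]
  simp only [Word.smul_eq_iff, Fin.revPerm_apply]
  refine Finset.sum_congr rfl fun w _ => ?_
  congr 2
  let e := palindromeEquiv n (Fin l)
  refine Nat.card_congr ⟨fun q => ⟨(e ⟨q.1.1, q.2.1⟩, e ⟨q.1.2, q.2.2.1⟩), fun i => ?_⟩,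
    fun q => ⟨((e.symm q.1.1).1, (e.symm q.1.2).1), (e.symm q.1.1).2, (e.symm q.1.2).2,
      fun i => ?_⟩, fun q => ?_, fun q => ?_⟩
  · have := q.2.2.2 i
    rwa [letterCount_palindrome ⟨q.1.1, q.2.1⟩, letterCount_palindrome ⟨q.1.2, q.2.2.1⟩] at this
  · have := q.2 i
    rw [letterCount_palindrome, letterCount_palindrome, Equiv.apply_symm_apply,
      Equiv.apply_symm_apply]
    exact this
  · simp
  · simp

end Palindromes

section Parity

variable {l n : ℕ}

/-- Letters of an alphabet of size `2l`, split into parity classes. -/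
def parityEquiv (l : ℕ) : Fin l × Fin 2 ≃ Fin (2 * l) :=
  finProdFinEquiv.trans (finCongr (mul_comm l 2))

theorem parityEquiv_val (x : Fin l × Fin 2) :
    (parityEquiv l x : ℕ) = 2 * (x.1 : ℕ) + (x.2 : ℕ) := by
  simp [parityEquiv, finProdFinEquiv, add_comm]

theorem letterCount_equiv_comp {S κ μ : Type} [Fintype S] [DecidableEq κ] [DecidableEq μ]
    (e : κ ≃ μ) (u : S → κ) (c : κ) : letterCount (fun s => e (u s)) (e c) = letterCount u c := by
  exact Fintype.card_congr (Equiv.subtypeEquivRight fun s => e.injective.eq_iff)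

theorem sum_pairs_eq_sum_parity (n l : ℕ) :
    ∑ w : Equiv.Perm (Fin (2 * l)), (Equiv.Perm.sign w : ℤ) *
      (Nat.card {q : (Fin n → Fin (2 * l)) × (Fin n → Fin (2 * l)) //
        ∀ i, 2 * letterCount q.1 i + (i : ℕ) = 2 * letterCount q.2 i + (w i : ℕ)} : ℤ) =
    ∑ w : Equiv.Perm (Fin l × Fin 2), (Equiv.Perm.sign w : ℤ) *
      (Nat.card {q : (Fin n → Fin l × Fin 2) × (Fin n → Fin l × Fin 2) //
        ∀ x, (w x).2 = x.2 ∧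
          letterCount q.1 x + (x.1 : ℕ) = letterCount q.2 x + ((w x).1 : ℕ)} : ℤ) := by
  symm
  refine Fintype.sum_equiv (parityEquiv l).permCongr _ _ fun w => ?_
  rw [Equiv.Perm.sign_permCongr]
  congr 2
  refine Nat.card_congr (Equiv.subtypeEquiv (Equiv.prodCongr
    ((Equiv.refl _).arrowCongr (parityEquiv l)) ((Equiv.refl _).arrowCongr (parityEquiv l)))
    fun q => ?_)
  rw [← (parityEquiv l).forall_congr_right]
  refine forall_congr' fun x => ?_
  have h1 : letterCount (((Equiv.refl (Fin n)).arrowCongr (parityEquiv l)) q.1)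
      (parityEquiv l x) = letterCount q.1 x := letterCount_equiv_comp (parityEquiv l) q.1 x
  have h2 : letterCount (((Equiv.refl (Fin n)).arrowCongr (parityEquiv l)) q.2)
      (parityEquiv l x) = letterCount q.2 x := letterCount_equiv_comp (parityEquiv l) q.2 x
  simp only [Equiv.prodCongr_apply, Prod.map, h1, h2, Equiv.permCongr_apply,
    Equiv.symm_apply_apply, parityEquiv_val, Fin.ext_iff]
  have := x.2.2
  have := (w x).2.2
  omega

/-- Words in a product alphabet, split according to the second component. -/
def splitWordEquiv (S κ μ : Type) :
    (S → κ × μ) ≃ Σ A : S → μ, ∀ b, {s // A s = b} → κ where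
  toFun u := ⟨fun s => (u s).2, fun _ s => (u s).1⟩
  invFun p s := (p.2 (p.1 s) ⟨s, rfl⟩, p.1 s)
  left_inv _ := rfl
  right_inv p := by
    obtain ⟨A, f⟩ := p
    refine Sigma.ext rfl (heq_of_eq ?_)
    funext b s
    obtain ⟨s, rfl⟩ := s
    rfl

theorem letterCount_split {S κ μ : Type} [Fintype S] [DecidableEq κ] [DecidableEq μ]
    (u : S → κ × μ) (c : κ) (b : μ) :
    letterCount u (c, b) = letterCount ((splitWordEquiv S κ μ u).2 b) c := by
  refine Fintype.card_congr ⟨fun s => ⟨⟨s.1, congrArg Prod.snd s.2⟩, congrArg Prod.fst s.2⟩,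
    fun s => ⟨s.1.1, Prod.ext s.2 s.1.2⟩, fun _ => rfl, fun _ => rfl⟩

theorem natCard_split (σ : Fin 2 → Equiv.Perm (Fin l)) :
    Nat.card {q : (Fin n → Fin l × Fin 2) × (Fin n → Fin l × Fin 2) //
        ∀ x, letterCount q.1 x + (x.1 : ℕ) = letterCount q.2 x + (σ x.2 x.1 : ℕ)} =
      ∑ A : Fin n → Fin 2, ∑ B : Fin n → Fin 2, ∏ b,
        Nat.card {q : ({s // A s = b} → Fin l) × ({s // B s = b} → Fin l) //
          ∀ i, letterCount q.1 i + (i : ℕ) = letterCount q.2 i + (σ b i : ℕ)} := by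
  classical
  simp only [← Nat.card_pi]
  rw [← Fintype.sum_prod_type', ← Nat.card_sigma]
  let e := splitWordEquiv (Fin n) (Fin l) (Fin 2)
  refine Nat.card_congr ⟨fun q => ⟨((e q.1.1).1, (e q.1.2).1), fun b =>
      ⟨((e q.1.1).2 b, (e q.1.2).2 b), fun i => ?_⟩⟩,
    fun p => ⟨(e.symm ⟨p.1.1, fun b => (p.2 b).1.1⟩, e.symm ⟨p.1.2, fun b => (p.2 b).1.2⟩),
      fun x => ?_⟩, fun q => ?_, fun p => ?_⟩
  · have := q.2 (i, b)
    rwa [letterCount_split, letterCount_split] at this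
  · obtain ⟨i, b⟩ := x
    rw [letterCount_split, letterCount_split]
    change letterCount (e (e.symm _) |>.2 b) i + _ = letterCount (e (e.symm _) |>.2 b) i + _
    rw [Equiv.apply_symm_apply, Equiv.apply_symm_apply]
    exact (p.2 b).2 i
  · rfl
  · obtain ⟨⟨A, B⟩, f⟩ := p
    refine Sigma.ext rfl (heq_of_eq ?_)
    funext b
    refine Subtype.ext (Prod.ext ?_ ?_)
    · funext s
      obtain ⟨s, rfl⟩ := s
      rfl
    · funext s
      obtain ⟨s, rfl⟩ := s
      rfl

theorem sum_parity_eq (n l : ℕ) :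
    ∑ w : Equiv.Perm (Fin l × Fin 2), (Equiv.Perm.sign w : ℤ) *
      (Nat.card {q : (Fin n → Fin l × Fin 2) × (Fin n → Fin l × Fin 2) //
        ∀ x, (w x).2 = x.2 ∧
          letterCount q.1 x + (x.1 : ℕ) = letterCount q.2 x + ((w x).1 : ℕ)} : ℤ) =
    ∑ A : Fin n → Fin 2, ∑ B : Fin n → Fin 2, ∏ b : Fin 2,
      signedPairCount {s // A s = b} {s // B s = b} l := by
  classical
  have h1 : ∑ σ : Fin 2 → Equiv.Perm (Fin l), (∏ b, (Equiv.Perm.sign (σ b) : ℤ)) *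
      (Nat.card {q : (Fin n → Fin l × Fin 2) × (Fin n → Fin l × Fin 2) //
        ∀ x, letterCount q.1 x + (x.1 : ℕ) = letterCount q.2 x + (σ x.2 x.1 : ℕ)} : ℤ) =
      ∑ A : Fin n → Fin 2, ∑ B : Fin n → Fin 2, ∏ b : Fin 2,
        signedPairCount {s // A s = b} {s // B s = b} l := by
    simp only [natCard_split, signedPairCount, Finset.prod_univ_sum, Fintype.piFinset_univ,
      Finset.prod_mul_distrib]
    push_cast
    simp only [Finset.mul_sum]
    rw [Finset.sum_comm]
    refine Finset.sum_congr rfl fun A _ => ?_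
    rw [Finset.sum_comm]
  rw [← h1]
  symm
  have hinj : Function.Injective
      (Equiv.prodCongrLeft : (Fin 2 → Equiv.Perm (Fin l)) → Equiv.Perm (Fin l × Fin 2)) := by
    intro σ τ h
    funext b
    ext j
    exact congrArg (fun x : Fin l × Fin 2 => (x.1 : ℕ)) (Equiv.congr_fun h (j, b))
  refine Finset.sum_of_injOn Equiv.prodCongrLeft hinj.injOn (fun _ _ => Finset.mem_univ _) ?_ ?_
  · intro w _ hw
    have : IsEmpty {q : (Fin n → Fin l × Fin 2) × (Fin n → Fin l × Fin 2) //
        ∀ x, (w x).2 = x.2 ∧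
          letterCount q.1 x + (x.1 : ℕ) = letterCount q.2 x + ((w x).1 : ℕ)} := by
      refine ⟨fun q => hw ?_⟩
      have hpar : ∀ x, (w x).2 = x.2 := fun x => (q.2 x).1
      have hbij : ∀ b, Function.Bijective fun j => (w (j, b)).1 := fun b =>
        Finite.injective_iff_bijective.1 fun j k hjk => by
          have : w (j, b) = w (k, b) := Prod.ext hjk ((hpar (j, b)).trans (hpar (k, b)).symm)
          exact congrArg Prod.fst (w.injective this)
      refine ⟨fun b => Equiv.ofBijective _ (hbij b), Finset.mem_coe.2 (Finset.mem_univ _), ?_⟩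
      exact Equiv.ext fun x => Prod.ext rfl (hpar x).symm
    rw [Nat.card_of_isEmpty, Nat.cast_zero, mul_zero]
  · intro σ _
    rw [Equiv.Perm.sign_prodCongrLeft]
    push_cast
    congr 2
    refine Nat.card_congr (Equiv.subtypeEquivRight fun q => forall_congr' fun x => ?_)
    simp [Equiv.prodCongrLeft]

/-- Two-colorings of a set correspond to its subsets. -/
def coloringEquiv (n : ℕ) : (Fin n → Fin 2) ≃ Finset (Fin n) where
  toFun A := Finset.univ.filter fun i => A i = 0
  invFun s i := if i ∈ s then 0 else 1
  left_inv A := by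
    funext i
    simp only [Finset.mem_filter, Finset.mem_univ, true_and]
    split_ifs <;> omega
  right_inv s := by
    ext i
    simp

theorem card_fiber_zero (A : Fin n → Fin 2) :
    Fintype.card {s // A s = 0} = (coloringEquiv n A).card :=
  Fintype.card_subtype _

theorem card_fiber_one (A : Fin n → Fin 2) :
    Fintype.card {s // A s = 1} = n - (coloringEquiv n A).card := by
  have h := sum_letterCount A
  rw [Fin.sum_univ_two, Fintype.card_fin] at h
  have h0 : letterCount A 0 = (coloringEquiv n A).card := card_fiber_zero A
  change letterCount A 1 = _
  omega

theorem sum_coloring {M : Type*} [AddCommMonoid M] (F : ℕ → M) :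
    ∑ A : Fin n → Fin 2, F (coloringEquiv n A).card =
      ∑ m ∈ Finset.range (n + 1), n.choose m • F m := by
  rw [Equiv.sum_comp (coloringEquiv n) fun s => F s.card, ← Finset.powerset_univ,
    Finset.sum_powerset_apply_card]
  simp

end Parity

/-- `f^{UU}_{n,2l} = Σ_{m=0}^{n} (binom(n,m))² · f_{m,l} · f_{n−m,l}`. -/
theorem fUUCount_eq_sum_binomial_sq (n l : ℕ) :
    fUUCount n (2 * l) =
      ∑ m ∈ Finset.range (n + 1),
        (n.choose m) ^ 2 * permCount m l * permCount (n - m) l := by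
  have h : (fUUCount n (2 * l) : ℤ) = ∑ m ∈ Finset.range (n + 1),
      (n.choose m : ℤ) ^ 2 * permCount m l * permCount (n - m) l := by
    rw [fUUCount_eq_sum, sum_pairs_eq_sum_parity, sum_parity_eq]
    have h1 : ∀ A B : Fin n → Fin 2,
        ∏ b : Fin 2, signedPairCount {s // A s = b} {s // B s = b} l =
          if (coloringEquiv n A).card = (coloringEquiv n B).card then
            (permCount (coloringEquiv n A).card l : ℤ) *
              permCount (n - (coloringEquiv n A).card) l else 0 := by
      intro A B
      rw [Fin.prod_univ_two, signedPairCount_eq_ite, signedPairCount_eq_ite, card_fiber_zero,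
        card_fiber_zero, card_fiber_one, card_fiber_one]
      split_ifs <;> simp_all
    simp only [h1]
    have h2 : ∀ A : Fin n → Fin 2, ∑ B : Fin n → Fin 2,
        (if (coloringEquiv n A).card = (coloringEquiv n B).card then
          (permCount (coloringEquiv n A).card l : ℤ) *
            permCount (n - (coloringEquiv n A).card) l else 0) =
        n.choose (coloringEquiv n A).card • ((permCount (coloringEquiv n A).card l : ℤ) *
            permCount (n - (coloringEquiv n A).card) l) := by
      intro A
      rw [sum_coloring fun k => if (coloringEquiv n A).card = k then
          (permCount (coloringEquiv n A).card l : ℤ) *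
            permCount (n - (coloringEquiv n A).card) l else 0]
      have hle : (coloringEquiv n A).card ≤ n := by
        simpa using Finset.card_le_univ (coloringEquiv n A)
      simp only [smul_ite, smul_zero]
      rw [Finset.sum_ite_eq, if_pos (Finset.mem_range.2 (by omega))]
    simp only [h2]
    rw [sum_coloring fun k => n.choose k • ((permCount k l : ℤ) * permCount (n - k) l)]
    refine Finset.sum_congr rfl fun m _ => ?_
    simp only [nsmul_eq_mul]
    ring
  exact_mod_cast h
end
end

section
/- Let n and l be nonnegative integers, let J be the 2l×2l matrix with block form [[0, −I_l],[I_l, 0]], and let Sp(2l) = { U ∈ U(2l) : Uᵀ J U = J } be the compact symplectic group. For each fixed-point-free involution τ of {1,…,2n} let w_τ ∈ (ℂ^{2l})^{⊗2n} be the tensor w_τ = Σ_i ( ∏_{j : j < τ(j)} J_{i(j), i(τ(j))} ) · e_{i(1)}⊗⋯⊗e_{i(2n)}, the sum over all functions i : {1,…,2n} → {1,…,2l}. Then the family { w_τ : τ a fixed-point-free involution of {1,…,2n} with L⁻(τ) ≤ 2l } is a basis of the subspace F_{2n}(Sp(2l)) = { v ∈ (ℂ^{2l})^{⊗2n} : U^{⊗2n}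 v = v for every U ∈ Sp(2l) }. -/
open scoped TensorProduct
open Matrix

noncomputable section

/-- `decLE π l` means the longest strictly decreasing subsequence of the permutation `π`
has length at most `l`. -/
def decLE {N : ℕ} (π : Equiv.Perm (Fin N)) (l : ℕ) : Prop :=
  ∀ (k : ℕ) (f : Fin k → Fin N), StrictMono f → StrictAnti (fun i => π (f i)) → k ≤ l

/-- The symplectic form matrix `J = [[0, −I_l],[I_l, 0]]` of size `2l × 2l`. -/
def Jmat (l : ℕ) : Matrix (Fin (2 * l)) (Fin (2 * l)) ℂ :=
  Matrix.of fun i j =>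
    if (i : ℕ) + l = (j : ℕ) then -1 else if (j : ℕ) + l = (i : ℕ) then 1 else 0

/-- The endomorphism `M^{⊗n}` of `(ℂ^d)^{⊗n}` induced by a matrix `M`, acting as `M`
on each tensor factor. -/
def tpow (n d : ℕ) (M : Matrix (Fin d) (Fin d) ℂ) :
    Module.End ℂ (⨂[ℂ] _ : Fin n, (Fin d → ℂ)) :=
  PiTensorProduct.map (fun _ : Fin n => Matrix.toLin' M)

/-- The basic symplectic invariant
`w_τ = Σ_i (∏_{j < τ(j)} J_{i(j),i(τ(j))}) · e_{i(1)}⊗⋯⊗e_{i(2n)}`,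
summed over all functions `i : {1,…,2n} → {1,…,2l}`. -/
def wTau (n l : ℕ) (τ : Equiv.Perm (Fin (2 * n))) :
    ⨂[ℂ] _ : Fin (2 * n), (Fin (2 * l) → ℂ) :=
  ∑ i : Fin (2 * n) → Fin (2 * l),
    (∏ j ∈ Finset.univ.filter (fun j : Fin (2 * n) => j < τ j),
        Jmat l (i j) (i (τ j))) •
      PiTensorProduct.tprod ℂ (fun j => Pi.single (i j) (1 : ℂ))

section Contraction

variable {ι κ : Type*} [DecidableEq ι] [Fintype κ]

open Finset Function

/-- Overwriting one coordinate by all its possible values covers every function `card κ` times. -/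
lemma sum_sum_update [Fintype ι] (F : (ι → κ) → κ → ℂ) (x : ι) :
    ∑ k : ι → κ, ∑ p : κ, F (update k x p) (k x) = ∑ k : ι → κ, ∑ p : κ, F k p := by
  rw [← Fintype.sum_prod_type', ← Fintype.sum_prod_type']
  refine Fintype.sum_bijective (fun q : (ι → κ) × κ => (update q.1 x q.2, q.1 x)) ?_ _ _ ?_
  · refine Involutive.bijective fun q => ?_
    simp
  · intro q
    rfl

/-- The derivation of the tensor power induced by a matrix, acting on the positions in `S`. -/
def derivAct (S : Finset ι) (M : Matrix κ κ ℂ) (c : (ι → κ) → ℂ) : (ι → κ) → ℂ :=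
  fun k => ∑ x ∈ S, ∑ p, M (k x) p * c (update k x p)

lemma derivAct_add (S : Finset ι) (M N : Matrix κ κ ℂ) (c : (ι → κ) → ℂ) :
    derivAct S (M + N) c = derivAct S M c + derivAct S N c := by
  funext k
  simp [derivAct, add_mul, sum_add_distrib]

lemma derivAct_smul (S : Finset ι) (a : ℂ) (M : Matrix κ κ ℂ) (c : (ι → κ) → ℂ) :
    derivAct S (a • M) c = a • derivAct S M c := by
  funext k
  simp [derivAct, mul_sum, mul_assoc]

lemma star_derivAct_dotProduct [Fintype ι] (S : Finset ι) (M : Matrix κ κ ℂ) (c g : (ι → κ) → ℂ) :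
    star (derivAct S M c) ⬝ᵥ g = star c ⬝ᵥ derivAct S Mᴴ g := by
  simp only [dotProduct, derivAct, Pi.star_apply, star_sum, star_mul', sum_mul, mul_sum]
  rw [sum_comm]
  conv_rhs => rw [sum_comm]
  refine sum_congr rfl fun x _ => ?_
  rw [← sum_sum_update _ x]
  refine sum_congr rfl fun k _ => sum_congr rfl fun p _ => ?_
  simp only [update_self, update_idem, update_eq_self, conjTranspose_apply]
  ring

/-- Contraction of the positions `x` and `y` with the form `J`. -/
def contract (J : Matrix κ κ ℂ) (x y : ι) (c : (ι → κ) → ℂ) : (ι → κ) → ℂ :=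
  fun k => ∑ p, ∑ q, J p q * c (update (update k x p) y q)

lemma contract_swap {J : Matrix κ κ ℂ} (hT : Jᵀ = -J) {x y : ι} (hxy : x ≠ y)
    (c : (ι → κ) → ℂ) : contract J y x c = -contract J x y c := by
  funext k
  simp only [contract, Pi.neg_apply, ← sum_neg_distrib]
  rw [sum_comm]
  refine sum_congr rfl fun p _ => sum_congr rfl fun q _ => ?_
  have := congrFun (congrFun hT p) q
  simp only [transpose_apply, Matrix.neg_apply] at this
  rw [this, update_comm hxy.symm]
  ring

/-- The contraction intertwines the actions of the symplectic Lie algebra. -/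
lemma derivAct_contract {J X : Matrix κ κ ℂ} (hX : Xᵀ * J + J * X = 0) {S : Finset ι} {x y : ι}
    (hx : x ∈ S) (hy : y ∈ S) (hxy : x ≠ y) (c : (ι → κ) → ℂ) :
    derivAct ((S.erase x).erase y) X (contract J x y c) = contract J x y (derivAct S X c) := by
  funext k
  have hyS : y ∈ S.erase x := mem_erase.2 ⟨hxy.symm, hy⟩
  simp only [contract, derivAct]
  simp only [← add_sum_erase S _ hx, ← add_sum_erase (S.erase x) _ hyS, mul_add, sum_add_distrib]
  have key : (∑ p, ∑ q, J p q * ∑ r, X (update (update k x p) y q x) r *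
        c (update (update (update k x p) y q) x r)) +
      (∑ p, ∑ q, J p q * ∑ r, X (update (update k x p) y q y) r *
        c (update (update (update k x p) y q) y r)) = 0 := by
    have h1 : (∑ p, ∑ q, J p q * ∑ r, X (update (update k x p) y q x) r *
        c (update (update (update k x p) y q) x r)) =
        ∑ r, ∑ q, (Xᵀ * J) r q * c (update (update k x r) y q) := by
      simp only [mul_sum, Matrix.mul_apply, sum_mul, transpose_apply]
      rw [sum_comm]
      conv_rhs => rw [sum_comm]
      refine sum_congr rfl fun q _ => ?_
      rw [sum_comm]
      refine sum_congr rfl fun r _ => sum_congr rfl fun p _ => ?_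
      rw [update_of_ne hxy, update_self, update_comm hxy, update_idem]
      rw [update_comm hxy.symm]
      ring
    have h2 : (∑ p, ∑ q, J p q * ∑ r, X (update (update k x p) y q y) r *
        c (update (update (update k x p) y q) y r)) =
        ∑ r, ∑ q, (J * X) r q * c (update (update k x r) y q) := by
      simp only [mul_sum, Matrix.mul_apply, sum_mul, update_self, update_idem]
      refine sum_congr rfl fun p _ => ?_
      rw [sum_comm]
      refine sum_congr rfl fun r _ => sum_congr rfl fun q _ => ?_
      ring
    rw [h1, h2, ← sum_add_distrib]
    simp only [← sum_add_distrib, ← add_mul]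
    simp only [← Matrix.add_apply, hX]
    simp
  rw [← add_assoc, key, zero_add]
  have h1 : ∀ p, ∀ q, J p q * ∑ z ∈ (S.erase x).erase y,
        ∑ r, X (update (update k x p) y q z) r * c (update (update (update k x p) y q) z r) =
      ∑ z ∈ (S.erase x).erase y, ∑ r, X (k z) r *
        (J p q * c (update (update (update k z r) x p) y q)) := by
    intro p q
    rw [mul_sum]
    refine sum_congr rfl fun z hz => ?_
    simp only [mem_erase] at hz
    rw [mul_sum]
    refine sum_congr rfl fun r _ => ?_
    rw [update_of_ne hz.1, update_of_ne hz.2.1, update_comm hz.1.symm, update_comm hz.2.1.symm]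
    ring
  simp only [h1]
  simp only [mul_sum]
  rw [sum_congr rfl fun z _ => sum_congr rfl fun r _ => sum_comm (s := univ) (t := univ)]
  simp only [sum_comm (s := univ) (t := (S.erase x).erase y)]
  refine sum_congr rfl fun z _ => ?_
  rw [sum_comm]
  rw [sum_congr rfl fun r _ => sum_comm (s := univ) (t := univ)]
  rw [sum_comm]

/-- Summing `E_{ba} (J E_{ba} J)` over the matrix units gives the Casimir-type identity: on tensors
all of whose contractions vanish, the sum acts as the scalar `#S`. -/
lemma sum_derivAct_single_derivAct [DecidableEq κ] {J : Matrix κ κ ℂ} (hT : Jᵀ = -J)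
    (hJ : J * J = -1) (S : Finset ι) (c : (ι → κ) → ℂ)
    (hc : ∀ x ∈ S, ∀ y ∈ S, x ≠ y → contract J x y c = 0) :
    ∑ a, ∑ b, derivAct S (single b a (1 : ℂ)) (derivAct S (J * single b a (1 : ℂ) * J) c) =
      (#S : ℂ) • c := by
  have hJJ : ∀ r s, ∑ a, J a r * J a s = (1 : Matrix κ κ ℂ) r s := by
    intro r s
    have h : Jᵀ * J = 1 := by rw [hT, neg_mul, hJ, neg_neg]
    rw [← h]
    simp [Matrix.mul_apply]
  have hs : ∀ a b r s, (J * single b a (1 : ℂ) * J) r s = J r b * J a s := by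
    intro a b r s
    simp [Matrix.mul_apply, single_apply, ite_and]
  have hE : ∀ a b (g : (ι → κ) → ℂ) k, derivAct S (single b a (1 : ℂ)) g k =
      ∑ x ∈ S, if b = k x then g (update k x a) else 0 := by
    intro a b g k
    simp [derivAct, single_apply, ite_and]
  funext k
  simp only [Finset.sum_apply, hE, Pi.smul_apply, smul_eq_mul]
  have step : ∀ a, ∑ b, ∑ x ∈ S, (if b = k x then
        derivAct S (J * single b a (1 : ℂ) * J) c (update k x a) else 0) =
      ∑ x ∈ S, derivAct S (J * single (k x) a (1 : ℂ) * J) c (update k x a) := by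
    intro a
    rw [sum_comm]
    simp
  simp only [step]
  rw [sum_comm, card_eq_sum_ones, Nat.cast_sum, sum_mul]
  refine sum_congr rfl fun x hx => ?_
  simp only [derivAct, hs]
  rw [sum_comm, ← add_sum_erase S _ hx, sum_eq_zero (s := S.erase x), add_zero]
  · simp only [update_self, update_idem]
    rw [sum_comm]
    simp only [← sum_mul, hJJ]
    simp [Matrix.one_apply]
  · intro y hy
    rw [mem_erase] at hy
    have := congrFun (hc x hx y hy.2 hy.1.symm) k
    simp only [contract, Pi.zero_apply] at this
    simp only [update_of_ne hy.1, mul_assoc, ← mul_sum, this, mul_zero]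

open scoped ComplexOrder in
/-- A symplectic Lie algebra invariant all of whose contractions vanish is zero. -/
lemma eq_zero_of_contract_eq_zero [Fintype ι] [DecidableEq κ] {J : Matrix κ κ ℂ} (hT : Jᵀ = -J)
    (hJ : J * J = -1) {S : Finset ι} (hS : S.Nonempty) (c : (ι → κ) → ℂ)
    (hX : ∀ X : Matrix κ κ ℂ, Xᵀ * J + J * X = 0 → derivAct S X c = 0)
    (hc : ∀ x ∈ S, ∀ y ∈ S, x ≠ y → contract J x y c = 0) : c = 0 := by
  have hneg : ∀ a b, derivAct S (J * single b a (1 : ℂ) * J) c =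
      -derivAct S (single a b (1 : ℂ)) c := by
    intro a b
    rw [eq_neg_iff_add_eq_zero, ← derivAct_add]
    refine hX _ ?_
    have hbb : J * (J * single b a (1 : ℂ) * J) = -(single b a (1 : ℂ) * J) := by
      rw [← mul_assoc, ← mul_assoc, hJ]
      simp
    have haa : J * single a b (1 : ℂ) * J * J = -(J * single a b (1 : ℂ)) := by
      rw [mul_assoc, hJ]
      simp
    rw [transpose_add, transpose_mul, transpose_mul, transpose_single, transpose_single, hT,
      mul_add, hbb, add_mul]
    simp only [Matrix.neg_mul, Matrix.mul_neg, neg_neg, ← mul_assoc, haa]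
    abel
  have key := sum_derivAct_single_derivAct hT hJ S c hc
  have h0 : ∑ a, ∑ b, star (derivAct S (single a b (1 : ℂ)) c) ⬝ᵥ
      derivAct S (single a b (1 : ℂ)) c = -((#S : ℂ) * (star c ⬝ᵥ c)) := by
    have : star c ⬝ᵥ ((#S : ℂ) • c) = (#S : ℂ) * (star c ⬝ᵥ c) := by
      rw [dotProduct_smul, smul_eq_mul]
    rw [← this, ← key, dotProduct_sum, ← sum_neg_distrib]
    refine sum_congr rfl fun a _ => ?_
    rw [dotProduct_sum, ← sum_neg_distrib]
    refine sum_congr rfl fun b _ => ?_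
    have hh : (single a b (1 : ℂ))ᴴ = single b a 1 := by simp
    rw [hneg, ← hh, ← star_derivAct_dotProduct, dotProduct_neg, neg_neg]
  have h1 : (0 : ℂ) ≤ ∑ a, ∑ b, star (derivAct S (single a b (1 : ℂ)) c) ⬝ᵥ
      derivAct S (single a b (1 : ℂ)) c :=
    sum_nonneg fun a _ => sum_nonneg fun b _ => dotProduct_star_self_nonneg _
  have h2 : (0 : ℂ) ≤ star c ⬝ᵥ c := dotProduct_star_self_nonneg _
  rw [h0] at h1
  have h3 : (#S : ℂ) * (star c ⬝ᵥ c) = 0 :=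
    le_antisymm (neg_nonneg.1 h1) (mul_nonneg (Nat.cast_nonneg _) h2)
  have hS' : (#S : ℂ) ≠ 0 := by exact_mod_cast hS.card_pos.ne'
  exact dotProduct_star_self_eq_zero.1 ((mul_eq_zero.1 h3).resolve_left hS')

lemma sum_update [Fintype ι] (G : (ι → κ) → ℂ) (x : ι) :
    ∑ k : ι → κ, ∑ p : κ, G (update k x p) = Fintype.card κ * ∑ k, G k := by
  rw [sum_sum_update (fun k _ => G k) x]
  simp [mul_sum]

end Contraction

section MatchTensor

variable {ι κ : Type*} [Fintype ι] [LinearOrder ι]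

open Finset Function

/-- The coefficients `∏_{j < τ(j)} J_{i(j), i(τ(j))}` of the tensor attached to `τ`. -/
def matchTensor (J : Matrix κ κ ℂ) (τ : Equiv.Perm ι) : (ι → κ) → ℂ :=
  fun i => ∏ j with j < τ j, J (i j) (i (τ j))

lemma matchTensor_mul_swap (J : Matrix κ κ ℂ) {σ : Equiv.Perm ι} {x y : ι} (hxy : x < y)
    (hx : σ x = x) (hy : σ y = y) (i : ι → κ) :
    matchTensor J (σ * Equiv.swap x y) i = matchTensor J σ i * J (i x) (i y) := by
  have hσ : ∀ z, z ≠ x → z ≠ y → (σ * Equiv.swap x y) z = σ z := fun z h1 h2 => by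
    simp [Equiv.swap_apply_of_ne_of_ne h1 h2]
  have hset : ({j | j < (σ * Equiv.swap x y) j} : Finset ι) =
      insert x ({j | j < σ j} : Finset ι) := by
    ext z
    simp only [mem_filter, mem_univ, true_and, mem_insert]
    by_cases h1 : z = x
    · subst h1; simp [hy, hxy]
    by_cases h2 : z = y
    · subst h2; simp [hx, hy, hxy.le, h1]
    · rw [hσ z h1 h2]; simp [h1]
  rw [matchTensor, hset, prod_insert (by simp [hx]), mul_comm, matchTensor]
  congr 1
  · refine prod_congr rfl fun z hz => ?_
    simp only [mem_filter, mem_univ, true_and] at hz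
    rw [hσ z (by rintro rfl; simp [hx] at hz) (by rintro rfl; simp [hy] at hz)]
  · simp [hy]

lemma matchTensor_update (J : Matrix κ κ ℂ) {σ : Equiv.Perm ι} {x : ι} (hx : σ x = x)
    (i : ι → κ) (p : κ) : matchTensor J σ (update i x p) = matchTensor J σ i := by
  refine prod_congr rfl fun z hz => ?_
  simp only [mem_filter, mem_univ, true_and] at hz
  have h1 : z ≠ x := by rintro rfl; simp [hx] at hz
  have h2 : σ z ≠ x := fun h => h1 (σ.injective (h.trans hx.symm))
  rw [update_of_ne h1, update_of_ne h2]

variable [Fintype κ]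

lemma matchTensor_dotProduct_contract (J : Matrix κ κ ℂ) {σ : Equiv.Perm ι} {x y : ι}
    (hxy : x < y) (hx : σ x = x) (hy : σ y = y) (c : (ι → κ) → ℂ) :
    matchTensor J σ ⬝ᵥ contract J x y c =
      (Fintype.card κ : ℂ) ^ 2 * (matchTensor J (σ * Equiv.swap x y) ⬝ᵥ c) := by
  have hF : ∀ k : ι → κ, matchTensor J σ k * contract J x y c k =
      ∑ p, ∑ q, (fun m => matchTensor J (σ * Equiv.swap x y) m * c m)
        (update (update k x p) y q) := by
    intro k
    simp only [contract, mul_sum]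
    refine sum_congr rfl fun p _ => sum_congr rfl fun q _ => ?_
    rw [matchTensor_mul_swap J hxy hx hy, matchTensor_update J hy, matchTensor_update J hx]
    rw [update_self, update_of_ne hxy.ne, update_self]
    ring
  simp only [dotProduct, hF]
  rw [sum_update (fun k => ∑ q, (fun m => matchTensor J (σ * Equiv.swap x y) m * c m)
    (update k y q)) x, sum_update (fun m => matchTensor J (σ * Equiv.swap x y) m * c m) y, sq,
    mul_assoc]

variable [DecidableEq κ]

/-- A tensor on the positions in `S` that is invariant under the symplectic Lie algebra and is
orthogonal to the tensors of all perfect matchings of `S` vanishes. -/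
lemma eq_zero_of_matchTensor_dotProduct_eq_zero {J : Matrix κ κ ℂ} (hT : Jᵀ = -J)
    (hJ : J * J = -1) (S : Finset ι) (c : (ι → κ) → ℂ)
    (hX : ∀ X : Matrix κ κ ℂ, Xᵀ * J + J * X = 0 → derivAct S X c = 0)
    (hS : ∀ k, ∀ x ∉ S, ∀ p, c (update k x p) = c k)
    (hc : ∀ τ : Equiv.Perm ι, τ * τ = 1 → (∀ x, τ x ≠ x ↔ x ∈ S) → matchTensor J τ ⬝ᵥ c = 0) :
    c = 0 := by
  induction hn : #S using Nat.strong_induction_on generalizing S c with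
  | _ n ih =>
  rcases S.eq_empty_or_nonempty with rfl | hne
  · have hconst : ∀ k m, c k = c m := by
      intro k m
      have : ∀ T : Finset ι, c (fun x => if x ∈ T then k x else m x) = c m := by
        intro T
        induction T using Finset.induction_on with
        | empty => simp
        | insert a T ha ihT =>
          rw [← ihT, ← hS (fun x => if x ∈ T then k x else m x) a (by simp) (k a)]
          congr 1
          funext x
          by_cases hxa : x = a
          · subst hxa; simp
          · simp [hxa]
      simpa using this univ
    funext k
    have h1 := hc 1 (by simp) (by simp)
    have h2 : ∀ m, matchTensor J (1 : Equiv.Perm ι) m * c m = c k := by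
      intro m
      simp [matchTensor, hconst m k]
    simp only [dotProduct, h2, sum_const, card_univ, nsmul_eq_mul] at h1
    have : Nonempty (ι → κ) := ⟨k⟩
    have h3 : (Fintype.card (ι → κ) : ℂ) ≠ 0 := Nat.cast_ne_zero.2 Fintype.card_ne_zero
    exact (mul_eq_zero.1 h1).resolve_left h3
  · have hlt : ∀ x ∈ S, ∀ y ∈ S, x < y → contract J x y c = 0 := by
      intro x hx y hy hxy
      have hyS : y ∈ S.erase x := mem_erase.2 ⟨hxy.ne', hy⟩
      refine ih #((S.erase x).erase y) ?_ ((S.erase x).erase y) _ ?_ ?_ ?_ rfl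
      · rw [← hn]
        exact card_lt_card ((erase_ssubset hyS).trans (erase_ssubset hx))
      · intro X h
        rw [derivAct_contract h hx hy hxy.ne, hX X h]
        funext k
        simp [contract]
      · intro k z hz p
        simp only [contract]
        refine sum_congr rfl fun q _ => sum_congr rfl fun r _ => ?_
        congr 1
        by_cases hzx : z = x
        · subst hzx; rw [update_idem]
        by_cases hzy : z = y
        · subst hzy; rw [update_comm hzx, update_idem]
        have hzS : z ∉ S := fun h => hz (mem_erase.2 ⟨hzy, mem_erase.2 ⟨hzx, h⟩⟩)
        rw [update_comm hzx, update_comm hzy, hS _ z hzS]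
      · intro σ hσ hσS
        have hσx : σ x = x := by
          by_contra h
          simpa using (hσS x).1 h
        have hσy : σ y = y := by
          by_contra h
          simpa using (hσS y).1 h
        rw [matchTensor_dotProduct_contract J hxy hσx hσy, hc, mul_zero]
        · have hcomm : Commute σ (Equiv.swap x y) := by
            have := Equiv.swap_apply_apply σ x y
            rw [hσx, hσy] at this
            exact (eq_mul_inv_iff_mul_eq.1 this).symm
          rw [mul_assoc, ← mul_assoc (Equiv.swap x y), ← hcomm.eq, mul_assoc σ,
            ← mul_assoc σ, hσ, Equiv.swap_mul_self, one_mul]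
        · intro z
          by_cases hzx : z = x
          · subst hzx; simp [hσy, hx, hxy.ne']
          by_cases hzy : z = y
          · subst hzy; simp [hσx, hy, hxy.ne]
          have := hσS z
          simp only [mem_erase, hzx, hzy, ne_eq, not_false_eq_true, true_and] at this
          simpa [Equiv.swap_apply_of_ne_of_ne hzx hzy] using this
    refine eq_zero_of_contract_eq_zero hT hJ hne c hX fun x hx y hy hxy => ?_
    rcases hxy.lt_or_gt with h | h
    · exact hlt x hx y hy h
    · rw [contract_swap hT h.ne, hlt y hy x hx h, neg_zero]

/-- The action of `M ⊗ ⋯ ⊗ M` on coefficient functions. -/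
def tensorAct (M : Matrix κ κ ℂ) (c : (ι → κ) → ℂ) : (ι → κ) → ℂ :=
  fun k => ∑ i, (∏ j, M (k j) (i j)) * c i

lemma sum_prod_erase_one_mul (k : ι → κ) (x : ι) (X : Matrix κ κ ℂ) (c : (ι → κ) → ℂ) :
    ∑ i : ι → κ, ((∏ m ∈ univ.erase x, (1 : Matrix κ κ ℂ) (k m) (i m)) * X (k x) (i x)) * c i =
      ∑ p, X (k x) p * c (update k x p) := by
  symm
  refine sum_of_injOn (fun p => update k x p) (update_injective k x).injOn (by simp) ?_ ?_
  · intro i _ hi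
    have : ∃ m, m ≠ x ∧ k m ≠ i m := by
      by_contra! h
      refine hi ⟨i x, by simp, ?_⟩
      funext m
      by_cases hm : m = x
      · subst hm; simp
      · simp [hm, h m hm]
    obtain ⟨m, hm, hk⟩ := this
    have h0 : (1 : Matrix κ κ ℂ) (k m) (i m) = 0 := Matrix.one_apply_ne hk
    rw [prod_eq_zero (f := fun m => (1 : Matrix κ κ ℂ) (k m) (i m))
      (mem_erase.2 ⟨hm, mem_univ m⟩) h0, zero_mul, zero_mul]
  · intro p _
    rw [prod_eq_one, one_mul, update_self]
    intro m hm
    rw [update_of_ne (mem_erase.1 hm).1, Matrix.one_apply_eq]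

lemma hasDerivAt_tensorAct {A : ℝ → Matrix κ κ ℂ} {X : Matrix κ κ ℂ} (h0 : A 0 = 1)
    (hA : ∀ p q, HasDerivAt (fun t => A t p q) (X p q) 0) (c : (ι → κ) → ℂ) (k : ι → κ) :
    HasDerivAt (fun t => tensorAct (A t) c k) (derivAct univ X c k) 0 := by
  have h : HasDerivAt (fun t => tensorAct (A t) c k)
      (∑ i : ι → κ, (∑ x, (∏ m ∈ univ.erase x, A 0 (k m) (i m)) • X (k x) (i x)) * c i) 0 := by
    refine HasDerivAt.fun_sum fun i _ => HasDerivAt.mul_const ?_ _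
    exact HasDerivAt.fun_finsetProd fun x _ => hA (k x) (i x)
  convert h using 1
  simp only [h0, smul_eq_mul, sum_mul]
  rw [sum_comm]
  exact sum_congr rfl fun x _ => (sum_prod_erase_one_mul k x X c).symm

open scoped Norms.Operator in
lemma hasDerivAt_exp_smul_apply (X : Matrix κ κ ℂ) (p q : κ) :
    HasDerivAt (fun t : ℝ => NormedSpace.exp (t • X) p q) (X p q) 0 := by
  have h := hasDerivAt_exp_smul_const (𝕂 := ℝ) X (0 : ℝ)
  have h2 := ((Matrix.entryLinearMap ℝ ℂ p q).toContinuousLinearMap.hasFDerivAt).comp_hasDerivAt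
    (0 : ℝ) h
  simp only [zero_smul, NormedSpace.exp_zero, one_mul] at h2
  exact h2

lemma exp_mem_unitaryGroup {X : Matrix κ κ ℂ} (hX : Xᴴ = -X) :
    NormedSpace.exp X ∈ Matrix.unitaryGroup κ ℂ := by
  rw [Matrix.mem_unitaryGroup_iff', star_eq_conjTranspose, ← Matrix.exp_conjTranspose, hX,
    Matrix.exp_neg]
  exact Matrix.nonsing_inv_mul _ ((Matrix.isUnit_iff_isUnit_det _).1 (Matrix.isUnit_exp X))

lemma transpose_exp_mul_mul_exp {J X : Matrix κ κ ℂ} (hJ : J * J = -1)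
    (hX : Xᵀ * J + J * X = 0) : (NormedSpace.exp X)ᵀ * J * NormedSpace.exp X = J := by
  have hinv : J⁻¹ = -J := Matrix.inv_eq_right_inv (by rw [mul_neg, hJ, neg_neg])
  have hunit : IsUnit J := IsUnit.of_mul_eq_one (-J) (by rw [mul_neg, hJ, neg_neg])
  have hdet := (Matrix.isUnit_iff_isUnit_det _).1 hunit
  have hXT : Xᵀ = J * (-X) * J⁻¹ := by
    rw [mul_neg, ← eq_neg_of_add_eq_zero_left hX, mul_assoc, Matrix.mul_nonsing_inv _ hdet, mul_one]
  rw [← Matrix.exp_transpose, hXT, Matrix.exp_conj _ _ hunit, mul_assoc _ _ J,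
    Matrix.nonsing_inv_mul _ hdet, mul_one, Matrix.exp_neg, mul_assoc, Matrix.nonsing_inv_mul,
    mul_one]
  exact (Matrix.isUnit_iff_isUnit_det _).1 (Matrix.isUnit_exp X)

/-- Invariance under the compact symplectic group implies invariance under the complex symplectic
Lie algebra. -/
lemma derivAct_eq_zero_of_tensorAct_eq {J : Matrix κ κ ℂ} (hJ : J * J = -1)
    (hstar : Jᴴ = -J) (c : (ι → κ) → ℂ)
    (hc : ∀ U ∈ Matrix.unitaryGroup κ ℂ, Uᵀ * J * U = J → tensorAct U c = c)
    (X : Matrix κ κ ℂ) (hX : Xᵀ * J + J * X = 0) : derivAct univ X c = 0 := by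
  have skew : ∀ Y : Matrix κ κ ℂ, Yᴴ = -Y → Yᵀ * J + J * Y = 0 → derivAct univ Y c = 0 := by
    intro Y hY hYJ
    funext k
    have h1 := hasDerivAt_tensorAct (A := fun t : ℝ => NormedSpace.exp (t • Y)) (X := Y)
      (by simp) (hasDerivAt_exp_smul_apply Y) c k
    have h2 : (fun t : ℝ => tensorAct (NormedSpace.exp (t • Y)) c k) = fun _ => c k := by
      funext t
      rw [hc]
      · exact exp_mem_unitaryGroup (by rw [conjTranspose_smul, hY]; simp)
      · refine transpose_exp_mul_mul_exp hJ ?_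
        rw [transpose_smul, smul_mul_assoc, mul_smul_comm, ← smul_add, hYJ, smul_zero]
    rw [h2] at h1
    exact h1.unique (hasDerivAt_const _ _)
  have hXs : Xᴴᵀ * J + J * Xᴴ = 0 := by
    have h := congrArg conjTranspose hX
    rw [conjTranspose_add, conjTranspose_mul, conjTranspose_mul, hstar] at h
    have h4 : Xᵀᴴ = Xᴴᵀ := rfl
    rw [h4, conjTranspose_zero] at h
    have h' : J * Xᴴᵀ + Xᴴ * J = 0 := by
      rw [neg_mul, mul_neg, ← neg_add, neg_eq_zero] at h
      exact h
    have h2 : J * (J * Xᴴᵀ + Xᴴ * J) * J = 0 := by rw [h']; simp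
    rw [mul_add, add_mul, ← mul_assoc J J, hJ, ← mul_assoc J, mul_assoc _ J J, hJ] at h2
    simp only [neg_mul, one_mul, mul_neg, mul_one] at h2
    rw [← neg_add, neg_eq_zero] at h2
    exact h2
  have h1 := skew (X - Xᴴ) (by simp) (by
    rw [transpose_sub, sub_mul, mul_sub, sub_add_sub_comm, hX, hXs, sub_zero])
  have h2 := skew (Complex.I • (X + Xᴴ)) (by
    rw [conjTranspose_smul]
    simp [add_comm]) (by
    rw [transpose_smul, smul_mul_assoc, mul_smul_comm, ← smul_add, transpose_add, add_mul, mul_add,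
      add_add_add_comm, hX, hXs, add_zero, smul_zero])
  have hdec : X = (2⁻¹ : ℂ) • (X - Xᴴ) + (-Complex.I / 2) • (Complex.I • (X + Xᴴ)) := by
    rw [smul_smul]
    have : -Complex.I / 2 * Complex.I = 2⁻¹ := by
      rw [neg_div, neg_mul, div_mul_eq_mul_div, Complex.I_mul_I]; norm_num
    rw [this, ← smul_add, sub_add_add_cancel, ← two_smul ℂ X, smul_smul]
    norm_num
  rw [hdec, derivAct_add, derivAct_smul, derivAct_smul, h1, h2]
  simp

end MatchTensor

section Invariants

variable {ι κ : Type*} [Fintype ι] [LinearOrder ι]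

open Finset Function

/-- A fixed-point-free involution splits its domain into pairs `{x, τ x}`. -/
def matchEquiv (τ : Equiv.Perm ι) (h1 : τ * τ = 1) (h2 : ∀ x, τ x ≠ x) :
    {x // x < τ x} × Bool ≃ ι :=
  Equiv.ofBijective (fun a => bif a.2 then τ a.1 else a.1) <| by
    have hinv : ∀ x, τ (τ x) = x := fun x => congrArg (fun σ : Equiv.Perm ι => σ x) h1
    constructor
    · rintro ⟨⟨x, hx⟩, b⟩ ⟨⟨y, hy⟩, b'⟩ h
      cases b <;> cases b' <;> simp only [cond_true, cond_false] at h
      · simp [h]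
      · subst h; rw [hinv] at hx; exact absurd hx hy.not_gt
      · subst h; rw [hinv] at hy; exact absurd hx hy.not_gt
      · simp [τ.injective h]
    · intro x
      rcases (h2 x).lt_or_gt with h | h
      · exact ⟨(⟨τ x, by rwa [hinv]⟩, true), by simp [hinv]⟩
      · exact ⟨(⟨x, h⟩, false), rfl⟩

lemma matchTensor_eq_prod_subtype (J : Matrix κ κ ℂ) (τ : Equiv.Perm ι) (i : ι → κ) :
    matchTensor J τ i = ∏ a : {x // x < τ x}, J (i a) (i (τ a)) :=
  (prod_subtype _ (by simp) fun j => J (i j) (i (τ j)))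

lemma prod_eq_prod_match (τ : Equiv.Perm ι) (h1 : τ * τ = 1) (h2 : ∀ x, τ x ≠ x) (G : ι → ℂ) :
    ∏ x, G x = ∏ a : {x // x < τ x}, G a * G (τ a) := by
  rw [← (matchEquiv τ h1 h2).prod_comp, Fintype.prod_prod_type]
  refine prod_congr rfl fun a _ => ?_
  rw [Fintype.prod_bool, mul_comm]
  rfl

lemma sum_prod_match [Fintype κ] (τ : Equiv.Perm ι) (h1 : τ * τ = 1) (h2 : ∀ x, τ x ≠ x)
    (H : {x // x < τ x} → κ → κ → ℂ) :
    ∑ i : ι → κ, ∏ a, H a (i a) (i (τ a)) = ∏ a, ∑ p, ∑ q, H a p q := by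
  have e1 : ∀ a, ∑ p, ∑ q, H a p q = ∑ r : Bool → κ, H a (r false) (r true) := by
    intro a
    rw [← Fintype.sum_prod_type', ← (Equiv.boolArrowEquivProd κ).sum_comp]
    rfl
  simp only [e1]
  rw [prod_univ_sum, Fintype.piFinset_univ]
  refine Fintype.sum_equiv
    (((matchEquiv τ h1 h2).arrowCongr (Equiv.refl κ)).symm.trans (Equiv.curry _ _ _)) _ _ ?_
  intro i
  rfl

lemma tensorAct_matchTensor [Fintype κ] {J U : Matrix κ κ ℂ} (hU : U * J * Uᵀ = J)
    {τ : Equiv.Perm ι} (h1 : τ * τ = 1) (h2 : ∀ x, τ x ≠ x) :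
    tensorAct U (matchTensor J τ) = matchTensor J τ := by
  funext k
  simp only [tensorAct, prod_eq_prod_match τ h1 h2, matchTensor_eq_prod_subtype,
    ← prod_mul_distrib]
  rw [sum_prod_match τ h1 h2 (fun a p q => U (k a) p * U (k (τ a)) q * J p q)]
  refine prod_congr rfl fun a _ => ?_
  conv_rhs => rw [← hU]
  simp only [Matrix.mul_apply, transpose_apply, sum_mul]
  rw [sum_comm]
  refine sum_congr rfl fun p _ => sum_congr rfl fun q _ => ?_
  ring

lemma tensorAct_add [Fintype κ] (M : Matrix κ κ ℂ) (c d : (ι → κ) → ℂ) :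
    tensorAct M (c + d) = tensorAct M c + tensorAct M d := by
  funext k
  simp [tensorAct, mul_add, sum_add_distrib]

lemma tensorAct_smul [Fintype κ] (M : Matrix κ κ ℂ) (a : ℂ) (c : (ι → κ) → ℂ) :
    tensorAct M (a • c) = a • tensorAct M c := by
  funext k
  simp only [tensorAct, Pi.smul_apply, smul_eq_mul, mul_sum]
  exact sum_congr rfl fun i _ => by ring

lemma star_matchTensor {J : Matrix κ κ ℂ} (hT : Jᵀ = -J) (hstar : Jᴴ = -J) (τ : Equiv.Perm ι) :
    star (matchTensor J τ) = matchTensor J τ := by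
  funext i
  simp only [matchTensor, Pi.star_apply, star_prod]
  refine prod_congr rfl fun x _ => ?_
  have h : Jᴴ (i (τ x)) (i x) = Jᵀ (i (τ x)) (i x) := by rw [hT, hstar]
  exact h

/-- The **first fundamental theorem** for the compact symplectic group: the tensors of perfect
matchings span the invariants. -/
lemma mem_span_matchTensor_iff [Fintype κ] [DecidableEq κ] {J : Matrix κ κ ℂ} (hT : Jᵀ = -J)
    (hJ : J * J = -1) (hstar : Jᴴ = -J) (c : (ι → κ) → ℂ) :
    c ∈ Submodule.span ℂ (matchTensor J '' {τ : Equiv.Perm ι | τ * τ = 1 ∧ ∀ x, τ x ≠ x}) ↔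
      ∀ U ∈ Matrix.unitaryGroup κ ℂ, Uᵀ * J * U = J → tensorAct U c = c := by
  set W := Submodule.span ℂ (matchTensor J '' {τ : Equiv.Perm ι | τ * τ = 1 ∧ ∀ x, τ x ≠ x})
    with hW
  have hfix : ∀ c ∈ W, ∀ U ∈ Matrix.unitaryGroup κ ℂ, Uᵀ * J * U = J → tensorAct U c = c := by
    intro c hc U _ hUJ
    have hU' : U * J * Uᵀ = J := by
      have h1 : (-J * Uᵀ * J) * U = 1 := by
        rw [mul_assoc, mul_assoc, ← mul_assoc Uᵀ, hUJ, neg_mul, hJ, neg_neg]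
      have h2 := mul_eq_one_comm.1 h1
      have h3 : U * J * Uᵀ * J = -1 := by
        rw [← h2]
        simp only [neg_mul, mul_neg, neg_neg, mul_assoc]
      have h4 := congrArg (· * J) h3
      simp only [mul_assoc _ J J, hJ] at h4
      simpa using h4
    induction hc using Submodule.span_induction with
    | mem x hx =>
      obtain ⟨τ, ⟨h1, h2⟩, rfl⟩ := hx
      exact tensorAct_matchTensor hU' h1 h2
    | zero => simpa using tensorAct_smul U 0 (0 : (ι → κ) → ℂ)
    | add x y _ _ hx hy => rw [tensorAct_add, hx, hy]
    | smul a x _ hx => rw [tensorAct_smul, hx]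
  refine ⟨hfix c, fun hc => ?_⟩
  let e := (WithLp.linearEquiv 2 ℂ ((ι → κ) → ℂ)).symm
  obtain ⟨y, hy, z, hz, hyz⟩ := (W.map e.toLinearMap).exists_add_mem_mem_orthogonal (e c)
  obtain ⟨w, hw, rfl⟩ := hy
  obtain ⟨u, rfl⟩ := e.surjective z
  have hcu : c = w + u := e.injective (by rw [hyz, map_add]; rfl)
  suffices u = 0 by rwa [hcu, this, add_zero]
  refine eq_zero_of_matchTensor_dotProduct_eq_zero hT hJ univ u ?_ (by simp) ?_
  · refine derivAct_eq_zero_of_tensorAct_eq hJ hstar u fun U hU hUJ => ?_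
    have := hc U hU hUJ
    rw [hcu, tensorAct_add, hfix w hw U hU hUJ] at this
    exact add_left_cancel this
  · intro τ h1 h2
    have hmem : matchTensor J τ ∈ W :=
      Submodule.subset_span ⟨τ, ⟨h1, fun x => (h2 x).2 (mem_univ x)⟩, rfl⟩
    have h := (Submodule.mem_orthogonal _ _).1 hz _ (Submodule.mem_map_of_mem hmem)
    have h' : u ⬝ᵥ star (matchTensor J τ) = 0 := by
      rw [← EuclideanSpace.inner_toLp_toLp]
      exact h
    rwa [star_matchTensor hT hstar, dotProduct_comm] at h'

end Invariants

section Straightening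

open Finset Function

/-- A permutation of `α × Bool` commuting with the flip of `Bool` permutes the fibres, and its
sign is the parity of the number of flipped fibres. -/
lemma sign_of_commute_flip {α : Type*} [Fintype α] [DecidableEq α] (σ : Equiv.Perm (α × Bool))
    (hσ : ∀ a, σ (a, true) = ((σ (a, false)).1, !(σ (a, false)).2)) :
    ∃ (π : Equiv.Perm α) (s : α → Bool), (∀ a, σ (a, false) = (π a, s a)) ∧
      Equiv.Perm.sign σ = ∏ a, if s a then -1 else 1 := by
  have hfst : ∀ a b, (σ (a, b)).1 = (σ (a, false)).1 := by
    rintro a (_ | _)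
    · rfl
    · rw [hσ]
  have hinj : Injective fun a => (σ (a, false)).1 := by
    intro a a' h
    have : σ (a', false) = σ (a, false) ∨ σ (a', false) = σ (a, true) := by
      rw [hσ a]
      rcases h1 : σ (a, false) with ⟨u, b⟩
      rcases h2 : σ (a', false) with ⟨u', b'⟩
      simp only [h1, h2] at h
      subst h
      cases b <;> cases b' <;> simp
    rcases this with h' | h' <;> exact (congrArg Prod.fst (σ.injective h')).symm
  let π : Equiv.Perm α := Equiv.ofBijective _ (Finite.injective_iff_bijective.1 hinj)
  have hπ : ∀ a, π a = (σ (a, false)).1 := fun a => rfl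
  refine ⟨π, fun a => (σ (a, false)).2, fun a => rfl, ?_⟩
  have hdec : σ = Equiv.prodCongrLeft (fun _ : Bool => π) * Equiv.prodCongrRight
      (fun a => if (σ (a, false)).2 then Equiv.swap true false else 1) := by
    ext1 ⟨a, b⟩
    rw [Equiv.Perm.mul_apply, Equiv.prodCongrRight_apply, Equiv.prodCongrLeft_apply, hπ]
    cases b
    · rcases h : σ (a, false) with ⟨u, _ | _⟩ <;> simp
    · rw [hσ]
      rcases h : σ (a, false) with ⟨u, _ | _⟩ <;> simp
  conv_lhs => rw [hdec]
  rw [Equiv.Perm.sign_mul, Equiv.Perm.sign_prodCongrLeft, Equiv.Perm.sign_prodCongrRight]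
  rw [Fintype.prod_bool, Int.units_mul_self, one_mul]
  refine prod_congr rfl fun a _ => ?_
  split_ifs <;> simp

/-- Antisymmetrising over more positions than there are letters gives zero. -/
lemma sum_sign_mul_comp_eq_zero {ι κ : Type*} [Fintype ι] [DecidableEq ι] [Fintype κ]
    (P : Finset ι) (hP : Fintype.card κ < #P) (F : (ι → κ) → ℂ) (i : ι → κ) :
    ∑ σ : Equiv.Perm ι with ∀ x ∉ P, σ x = x, ((Equiv.Perm.sign σ : ℤ) : ℂ) * F (i ∘ σ) = 0 := by
  obtain ⟨x, hx, y, hy, hxy, hi⟩ := exists_ne_map_eq_of_card_lt_of_maps_to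
    (t := (univ : Finset κ)) (by simpa using hP) (f := i) (fun _ _ => mem_coe.2 (mem_univ _))
  have hcomp : ∀ σ : Equiv.Perm ι, i ∘ (Equiv.swap x y * σ : Equiv.Perm ι) = i ∘ σ := by
    intro σ
    funext z
    simp only [Function.comp_apply, Equiv.Perm.mul_apply, Equiv.swap_apply_def]
    split_ifs with h1 h2
    · rw [h1, hi]
    · rw [h2, hi]
    · rfl
  refine sum_involution (fun σ _ => Equiv.swap x y * σ) ?_ ?_ ?_ ?_
  · intro σ _
    rw [hcomp, Equiv.Perm.sign_mul, Equiv.Perm.sign_swap hxy]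
    simp
  · intro σ _ _ h
    exact hxy (Equiv.swap_eq_one_iff.1 (mul_eq_right.1 h))
  · intro σ hσ
    simp only [mem_filter, mem_univ, true_and] at hσ ⊢
    intro z hz
    rw [Equiv.Perm.mul_apply, hσ z hz, Equiv.swap_apply_of_ne_of_ne]
    · rintro rfl; exact hz hx
    · rintro rfl; exact hz hy
  · intro σ _
    simp

variable {ι κ : Type*} [Fintype ι] [LinearOrder ι]

lemma prod_orientation {J : Matrix κ κ ℂ} (hT : Jᵀ = -J) {τ : Equiv.Perm ι} (h1 : τ * τ = 1)
    (h2 : ∀ x, τ x ≠ x) {O : Finset ι} (hO : ∀ x, x ∈ O ↔ τ x ∉ O) (i : ι → κ) :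
    ∏ x ∈ O, J (i x) (i (τ x)) = (-1) ^ #{x ∈ O | τ x < x} * matchTensor J τ i := by
  have hinv : ∀ x, τ (τ x) = x := fun x => congrArg (fun σ : Equiv.Perm ι => σ x) h1
  have hswap : ∀ p q, J p q = -J q p := fun p q => by
    have : Jᵀ q p = (-J) q p := by rw [hT]
    exact this
  have e1 : ∏ x ∈ O, J (i x) (i (τ x)) = ∏ x, if x ∈ O then J (i x) (i (τ x)) else 1 := by
    simp
  have e2 : (-1 : ℂ) ^ #{x ∈ O | τ x < x} = ∏ x, if x ∈ O ∧ τ x < x then -1 else 1 := by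
    rw [prod_ite, prod_const, prod_const_one, mul_one]
    congr 2
    ext x
    simp
  rw [e1, e2, matchTensor_eq_prod_subtype, prod_eq_prod_match τ h1 h2, prod_eq_prod_match τ h1 h2,
    ← prod_mul_distrib]
  refine prod_congr rfl fun a _ => ?_
  have ha := a.2
  rw [hinv]
  by_cases h : (a : ι) ∈ O
  · have h' := (hO a).1 h
    simp [h, h', ha.not_gt]
  · have h' : τ a ∈ O := by_contra fun h' => h ((hO a).2 h')
    simp only [h, h', if_true, if_false, false_and, true_and, ha, one_mul]
    rw [hswap]
    ring

lemma exists_matchTensor_comp {J : Matrix κ κ ℂ} (hT : Jᵀ = -J) {τ : Equiv.Perm ι}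
    (h1 : τ * τ = 1) (h2 : ∀ x, τ x ≠ x) (σ : Equiv.Perm ι) :
    ∃ n : ℕ, ∀ i : ι → κ,
      matchTensor J τ (i ∘ σ) = (-1) ^ n * matchTensor J (σ * τ * σ⁻¹) i := by
  have hinv : ∀ x, τ (τ x) = x := fun x => congrArg (fun σ : Equiv.Perm ι => σ x) h1
  set O := ({x | x < τ x} : Finset ι).map σ.toEmbedding with hO
  refine ⟨#{x ∈ O | (σ * τ * σ⁻¹) x < x}, fun i => ?_⟩
  rw [← prod_orientation hT ?_ ?_ ?_ i, hO, prod_map]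
  · simp [matchTensor]
  · ext x
    simp [hinv]
  · intro x
    obtain ⟨y, rfl⟩ := σ.surjective x
    simp [h2]
  · intro x
    obtain ⟨y, rfl⟩ := σ.surjective x
    simp only [hO, mem_map_equiv, mem_filter, mem_univ, true_and, Equiv.Perm.mul_apply,
      Equiv.symm_apply_apply, Equiv.Perm.inv_def, hinv, not_lt]
    exact ⟨le_of_lt, fun h => lt_of_le_of_ne h (h2 _).symm⟩

lemma matchTensor_comp_of_commute {J : Matrix κ κ ℂ} (hT : Jᵀ = -J) {τ : Equiv.Perm ι}
    (h1 : τ * τ = 1) (h2 : ∀ x, τ x ≠ x) {σ : Equiv.Perm ι} (hσ : Commute σ τ) (i : ι → κ) :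
    matchTensor J τ (i ∘ σ) = ((Equiv.Perm.sign σ : ℤ) : ℂ) * matchTensor J τ i := by
  have hinv : ∀ x, τ (τ x) = x := fun x => congrArg (fun σ : Equiv.Perm ι => σ x) h1
  have hcomm : ∀ x, σ (τ x) = τ (σ x) := fun x => congrArg (fun σ : Equiv.Perm ι => σ x) hσ.eq
  have hswap : ∀ p q, J p q = -J q p := fun p q => by
    have : Jᵀ q p = (-J) q p := by rw [hT]
    exact this
  set f := matchEquiv τ h1 h2 with hf
  have hf0 : ∀ a, f (a, false) = a := fun a => rfl
  have hf1 : ∀ a, f (a, true) = τ a := fun a => rfl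
  have hfn : ∀ u, f (u.1, !u.2) = τ (f u) := by
    rintro ⟨a, _ | _⟩
    · rfl
    · simp [hf0, hf1, hinv]
  have hf' : ∀ a b, f (f.permCongr.symm σ (a, b)) = σ (f (a, b)) := by
    intro a b
    simp [Equiv.permCongr_def]
  obtain ⟨π, s, hπ, hsign⟩ := sign_of_commute_flip (f.permCongr.symm σ) (by
    intro a
    apply f.injective
    rw [hfn, hf', hf', hf0, hf1, hcomm])
  have hsσ : Equiv.Perm.sign σ = ∏ a, if s a then -1 else 1 := by
    rw [← hsign]
    conv_lhs => rw [← f.permCongr.apply_symm_apply σ]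
    rw [Equiv.Perm.sign_permCongr]
  have hval : ∀ a : {x // x < τ x}, σ a = if s a then τ (π a) else π a := by
    intro a
    rw [← hf0 a, ← hf' a false, hπ]
    cases s a
    · rfl
    · rfl
  rw [hsσ]
  simp only [matchTensor_eq_prod_subtype, Function.comp_apply]
  rw [← Equiv.prod_comp π fun a : {x // x < τ x} => J (i a) (i (τ a))]
  push_cast
  rw [← prod_mul_distrib]
  refine prod_congr rfl fun a _ => ?_
  rw [hcomm, hval]
  cases s a
  · simp
  · simp only [if_true, hinv]
    rw [hswap]
    simp

/-- A strictly monotone self-map of a finite set is the identity. -/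
lemma eq_self_of_strictMonoOn {α : Type*} [LinearOrder α] {s : Finset α} {f : α → α}
    (hf : ∀ x ∈ s, f x ∈ s) (hmono : StrictMonoOn f s) {x : α} (hx : x ∈ s) : f x = x := by
  have h : StrictMono fun a : s => (⟨f a, hf a a.2⟩ : s) := fun a b hab => hmono a.2 b.2 hab
  exact le_antisymm (h.apply_le (x := ⟨x, hx⟩)) (h.le_apply (x := ⟨x, hx⟩))

section Crossing

variable {ι : Type*} [LinearOrder ι] {τ : Equiv.Perm ι}

/-- A nest of arcs gives a strictly decreasing subsequence of twice its size. -/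
lemma strictAntiOn_union_image (hinv : ∀ x, τ (τ x) = x) {B : Finset ι} (hB : ∀ x ∈ B, x < τ x)
    (hanti : StrictAntiOn τ B) :
    #(B ∪ B.image τ) = 2 * #B ∧ (∀ x ∈ B ∪ B.image τ, τ x ∈ B ∪ B.image τ) ∧
      StrictAntiOn τ (B ∪ B.image τ : Finset ι) := by
  have key : ∀ x ∈ B, ∀ z ∈ B, x < τ z := by
    intro x hx z hz
    rcases le_or_gt x z with h | h
    · exact h.trans_lt (hB z hz)
    · exact (hB x hx).trans (hanti hz hx h)
  refine ⟨?_, ?_, ?_⟩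
  · rw [card_union_of_disjoint, card_image_of_injective _ τ.injective, two_mul]
    rw [disjoint_left]
    intro x hx hx'
    obtain ⟨z, hz, rfl⟩ := mem_image.1 hx'
    exact lt_irrefl _ (key _ hx z hz)
  · intro x hx
    rcases mem_union.1 hx with h | h
    · exact mem_union_right _ (mem_image_of_mem _ h)
    · obtain ⟨z, hz, rfl⟩ := mem_image.1 h
      rw [hinv]
      exact mem_union_left _ hz
  · intro x hx y hy hxy
    rcases mem_union.1 (mem_coe.1 hx) with h | h <;> rcases mem_union.1 (mem_coe.1 hy) with h' | h'
    · exact hanti h h' hxy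
    · obtain ⟨z, hz, rfl⟩ := mem_image.1 h'
      rw [hinv]
      exact key z hz x h
    · obtain ⟨z, hz, rfl⟩ := mem_image.1 h
      exact absurd (key y h' z hz) hxy.not_gt
    · obtain ⟨z, hz, rfl⟩ := mem_image.1 h
      obtain ⟨w, hw, rfl⟩ := mem_image.1 h'
      rw [hinv, hinv]
      exact (hanti.lt_iff_gt hz hw).1 hxy

lemma exists_stable_strictAntiOn (hinv : ∀ x, τ (τ x) = x) (h2 : ∀ x, τ x ≠ x) {A : Finset ι}
    (hanti : StrictAntiOn τ A) {l : ℕ} (hl : 2 * l < #A) :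
    ∃ P : Finset ι, 2 * l < #P ∧ (∀ x ∈ P, τ x ∈ P) ∧ StrictAntiOn τ P := by
  suffices h : ∃ B : Finset ι, l < #B ∧ (∀ x ∈ B, x < τ x) ∧ StrictAntiOn τ B by
    obtain ⟨B, hlB, hB, hB'⟩ := h
    obtain ⟨h1, h2, h3⟩ := strictAntiOn_union_image hinv hB hB'
    exact ⟨B ∪ B.image τ, by omega, h2, h3⟩
  have hcard := card_filter_add_card_filter_not (s := A) fun x => x < τ x
  rcases lt_or_ge l #{x ∈ A | x < τ x} with h | h
  · exact ⟨_, h, fun x hx => (mem_filter.1 hx).2,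
      hanti.mono fun x hx => (mem_filter.1 (mem_coe.1 hx)).1⟩
  · refine ⟨{x ∈ A | ¬ x < τ x}.image τ, ?_, ?_, ?_⟩
    · rw [card_image_of_injective _ τ.injective]
      omega
    · intro x hx
      obtain ⟨z, hz, rfl⟩ := mem_image.1 hx
      rw [hinv]
      exact lt_of_le_of_ne (not_lt.1 (mem_filter.1 hz).2) (h2 z)
    · intro x hx y hy hxy
      obtain ⟨z, hz, rfl⟩ := mem_image.1 (mem_coe.1 hx)
      obtain ⟨w, hw, rfl⟩ := mem_image.1 (mem_coe.1 hy)
      rw [hinv, hinv]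
      exact (hanti.lt_iff_gt (mem_filter.1 hz).1 (mem_filter.1 hw).1).1 hxy

end Crossing

lemma decLE_iff {N : ℕ} {π : Equiv.Perm (Fin N)} {m : ℕ} :
    decLE π m ↔ ∀ A : Finset (Fin N), StrictAntiOn π A → #A ≤ m := by
  refine ⟨fun h A hA => h #A (A.orderEmbOfFin rfl) (A.orderEmbOfFin rfl).strictMono ?_, ?_⟩
  · intro i j hij
    exact hA (A.orderEmbOfFin_mem rfl i) (A.orderEmbOfFin_mem rfl j)
      ((A.orderEmbOfFin rfl).strictMono hij)
  · intro h k f hf hanti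
    have := h (univ.map ⟨f, hf.injective⟩) (by
      intro x hx y hy hxy
      simp only [coe_map, Embedding.coeFn_mk, coe_univ, Set.image_univ] at hx hy
      obtain ⟨i, rfl⟩ := hx
      obtain ⟨j, rfl⟩ := hy
      exact hanti (hf.lt_iff_lt.1 hxy))
    simpa using this

/-- The pairing of a permutation with the identity, which orders the matchings. -/
def permSum {N : ℕ} (τ : Equiv.Perm (Fin N)) : ℤ := ∑ x : Fin N, (x : ℤ) * (τ x : ℤ)

lemma permSum_lt_of_strictAntiOn {N : ℕ} {τ τ' : Equiv.Perm (Fin N)} {P : Finset (Fin N)}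
    (hanti : StrictAntiOn τ P) (hP : ∀ x ∉ P, τ' x = τ x) (hne : τ' ≠ τ) :
    permSum τ < permSum τ' := by
  set ρ : Equiv.Perm (Fin N) := τ⁻¹ * τ' with hρ
  have hτ' : ∀ x, τ' x = τ (ρ x) := fun x => by simp [hρ]
  have hoff : ∀ x ∉ P, ρ x = x := fun x hx => τ.injective (by rw [← hτ', hP x hx])
  have hon : ∀ x ∈ P, ρ x ∈ P := by
    intro x hx
    by_contra h
    have := ρ.injective (hoff _ h)
    rw [this] at h
    exact h hx
  have hvary : AntivaryOn (fun x : Fin N => (x : ℤ)) (fun x => (τ x : ℤ)) P := by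
    intro x hx y hy hxy
    have : τ x < τ y := by simpa using hxy
    have := (hanti.lt_iff_gt hx hy).1 this
    simpa using this.le
  have hsupp : {x | ρ x ≠ x} ⊆ (P : Set (Fin N)) := fun x hx => by_contra fun h => hx (hoff x h)
  have hlt := (hvary.sum_mul_lt_sum_mul_comp_perm_iff hsupp).2 (by
    intro h
    apply hne
    ext1 x
    by_cases hx : x ∈ P
    · rw [hτ', eq_self_of_strictMonoOn hon _ hx]
      intro x hx y hy hxy
      by_contra hle
      have h1 : ρ y < ρ x := lt_of_le_of_ne (not_lt.1 hle) (ρ.injective.ne hxy.ne')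
      have h2 := hanti (hon y hy) (hon x hx) h1
      have h3 := h hx hy (by simpa using h2)
      exact hxy.not_ge (by simpa using h3)
    · exact hP x hx)
  rw [permSum, permSum, ← sum_add_sum_compl P,
    ← sum_add_sum_compl P fun x : Fin N => (x : ℤ) * (τ' x : ℤ)]
  refine add_lt_add_of_lt_of_le ?_ (le_of_eq (sum_congr rfl fun x hx => ?_))
  · simpa only [hτ'] using hlt
  · rw [hP x (mem_compl.1 hx)]

lemma matchTensor_mem_span_of_strictAntiOn {κ : Type*} [Fintype κ] {N : ℕ} {J : Matrix κ κ ℂ}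
    (hT : Jᵀ = -J) {τ : Equiv.Perm (Fin N)} (h1 : τ * τ = 1) (h2 : ∀ x, τ x ≠ x)
    {P : Finset (Fin N)} (hcard : Fintype.card κ < #P) (hstab : ∀ x ∈ P, τ x ∈ P)
    (hanti : StrictAntiOn τ P) :
    matchTensor J τ ∈ Submodule.span ℂ (matchTensor J ''
      {τ' | (τ' * τ' = 1 ∧ ∀ x, τ' x ≠ x) ∧ permSum τ < permSum τ'}) := by
  classical
  have hinv : ∀ x, τ (τ x) = x := fun x => congrArg (fun σ : Equiv.Perm (Fin N) => σ x) h1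
  set W := Submodule.span ℂ (matchTensor J ''
      {τ' | (τ' * τ' = 1 ∧ ∀ x, τ' x ≠ x) ∧ permSum τ < permSum τ'})
  set G : Finset (Equiv.Perm (Fin N)) := {σ | ∀ x ∉ P, σ x = x} with hG
  choose n hn using exists_matchTensor_comp hT h1 h2
  have hsum : ∑ σ ∈ G with Commute σ τ, matchTensor J τ +
      ∑ σ ∈ G with ¬ Commute σ τ, (((Equiv.Perm.sign σ : ℤ) : ℂ) * (-1) ^ n σ) •
        matchTensor J (σ * τ * σ⁻¹) = 0 := by
    funext i
    have hzero : ∑ σ ∈ G, ((Equiv.Perm.sign σ : ℤ) : ℂ) * matchTensor J τ (i ∘ σ) = 0 := by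
      convert sum_sign_mul_comp_eq_zero P hcard (matchTensor J τ) i
    rw [Pi.zero_apply, Pi.add_apply, Finset.sum_apply, Finset.sum_apply, ← hzero,
      ← sum_filter_add_sum_filter_not G fun σ => Commute σ τ]
    congr 1
    · refine sum_congr rfl fun σ hσ => ?_
      rw [matchTensor_comp_of_commute hT h1 h2 (mem_filter.1 hσ).2, ← mul_assoc]
      norm_cast
      simp
    · refine sum_congr rfl fun σ _ => ?_
      rw [hn, Pi.smul_apply, smul_eq_mul, mul_assoc]
  rw [sum_const, add_eq_zero_iff_eq_neg] at hsum
  have hpos : (#{σ ∈ G | Commute σ τ} : ℂ) ≠ 0 := by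
    rw [Nat.cast_ne_zero, card_ne_zero]
    exact ⟨1, by simp [hG]⟩
  rw [← Submodule.smul_mem_iff W hpos, Nat.cast_smul_eq_nsmul, hsum]
  refine W.neg_mem (W.sum_mem fun σ hσ => W.smul_mem _
    (Submodule.subset_span ⟨_, ⟨⟨?_, ?_⟩, ?_⟩, rfl⟩))
  · ext x
    simp [hinv]
  · intro x
    obtain ⟨y, rfl⟩ := σ.surjective x
    simp [h2]
  · obtain ⟨hσG, hcomm⟩ := mem_filter.1 hσ
    have hoff := (mem_filter.1 hσG).2
    refine permSum_lt_of_strictAntiOn hanti (fun x hx => ?_) fun h => hcomm ?_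
    · have h' : σ⁻¹ x = x := by
        rw [Equiv.Perm.inv_eq_iff_eq, hoff x hx]
      rw [Equiv.Perm.mul_apply, Equiv.Perm.mul_apply, h', hoff]
      intro h
      exact hx (hinv x ▸ hstab _ h)
    · exact mul_inv_eq_iff_eq_mul.1 h

/-- Straightening: the matchings whose decreasing subsequences have length at most the number of
letters span all match tensors. -/
lemma matchTensor_mem_span_decLE {κ : Type*} [Fintype κ] {N l : ℕ} (hκ : Fintype.card κ = 2 * l)
    {J : Matrix κ κ ℂ} (hT : Jᵀ = -J) {τ : Equiv.Perm (Fin N)} (h1 : τ * τ = 1)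
    (h2 : ∀ x, τ x ≠ x) :
    matchTensor J τ ∈ Submodule.span ℂ (matchTensor J ''
      {τ' | τ' * τ' = 1 ∧ (∀ x, τ' x ≠ x) ∧ decLE τ' (2 * l)}) := by
  classical
  by_contra hbad
  obtain ⟨τ, hτ, hmax⟩ := exists_max_image
    ({τ | (τ * τ = 1 ∧ ∀ x, τ x ≠ x) ∧ matchTensor J τ ∉ Submodule.span ℂ (matchTensor J ''
      {τ' | τ' * τ' = 1 ∧ (∀ x, τ' x ≠ x) ∧ decLE τ' (2 * l)})} : Finset (Equiv.Perm (Fin N)))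
    permSum ⟨τ, by simpa using ⟨⟨h1, h2⟩, hbad⟩⟩
  obtain ⟨⟨h1, h2⟩, hτ⟩ := (mem_filter.1 hτ).2
  have hinv : ∀ x, τ (τ x) = x := fun x => congrArg (fun σ : Equiv.Perm (Fin N) => σ x) h1
  by_cases hdec : decLE τ (2 * l)
  · exact hτ (Submodule.subset_span ⟨τ, ⟨h1, h2, hdec⟩, rfl⟩)
  · rw [decLE_iff] at hdec
    push Not at hdec
    obtain ⟨A, hA, hlA⟩ := hdec
    obtain ⟨P, hP, hstab, hanti⟩ := exists_stable_strictAntiOn hinv h2 hA hlA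
    refine hτ (Submodule.span_le.2 ?_
      (matchTensor_mem_span_of_strictAntiOn hT h1 h2 (hκ ▸ hP) hstab hanti))
    rintro _ ⟨τ', ⟨h, hlt⟩, rfl⟩
    by_contra h'
    exact (hmax τ' (mem_filter.2 ⟨mem_univ _, h, h'⟩)).not_gt hlt

end Straightening

section LinearIndependence

open Finset Function

open Classical in
/-- The depth of an arc, the maximal number of arcs in a nest around it. -/
def nestDepth {ι : Type*} [Fintype ι] [LinearOrder ι] (τ : Equiv.Perm ι) (x : ι) : ℕ :=
  ({s | (∀ y ∈ s, y < x ∧ τ x < τ y) ∧ StrictAntiOn τ s} : Finset (Finset ι)).sup card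

section NestDepth

variable {ι : Type*} [Fintype ι] [LinearOrder ι] {τ : Equiv.Perm ι}

lemma exists_insert_strictAntiOn (x : ι) :
    ∃ s : Finset ι, #s = nestDepth τ x ∧ x ∉ s ∧ (∀ y ∈ s, y < x ∧ τ x < τ y) ∧
      StrictAntiOn τ (insert x s : Finset ι) := by
  classical
  obtain ⟨s, hs, hcard⟩ := exists_mem_eq_sup
    ({s | (∀ y ∈ s, y < x ∧ τ x < τ y) ∧ StrictAntiOn τ s} : Finset (Finset ι))
    ⟨∅, by simp [StrictAntiOn]⟩ card
  obtain ⟨hs, hanti⟩ := (mem_filter.1 hs).2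
  refine ⟨s, ?_, fun h => lt_irrefl x (hs x h).1, hs, ?_⟩
  · rw [nestDepth, ← hcard]
  · intro a ha b hb hab
    rcases mem_insert.1 (mem_coe.1 ha) with rfl | ha' <;>
      rcases mem_insert.1 (mem_coe.1 hb) with rfl | hb'
    · exact absurd hab (lt_irrefl _)
    · exact absurd (hs b hb').1 hab.not_gt
    · exact (hs a ha').2
    · exact hanti ha' hb' hab

lemma nestDepth_lt_nestDepth {x y : ι} (hyx : y < x) (h : τ x < τ y) :
    nestDepth τ y < nestDepth τ x := by
  classical
  obtain ⟨s, hcard, hy, hs, hanti⟩ := exists_insert_strictAntiOn (τ := τ) y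
  rw [← hcard, ← Nat.succ_le_iff, Nat.succ_eq_add_one, ← card_insert_of_notMem hy, nestDepth]
  refine le_sup (f := card) (mem_filter.2 ⟨mem_univ _, fun z hz => ?_, hanti⟩)
  rcases mem_insert.1 hz with rfl | hz
  · exact ⟨hyx, h⟩
  · exact ⟨(hs z hz).1.trans hyx, h.trans (hs z hz).2⟩

lemma nestDepth_lt (hinv : ∀ x, τ (τ x) = x) {l : ℕ}
    (hl : ∀ A : Finset ι, StrictAntiOn τ A → #A ≤ 2 * l) {x : ι} (hx : x < τ x) :
    nestDepth τ x < l := by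
  obtain ⟨s, hcard, hxs, hs, hanti⟩ := exists_insert_strictAntiOn (τ := τ) x
  obtain ⟨h1, -, h3⟩ := strictAntiOn_union_image hinv (B := insert x s) (by
    intro y hy
    rcases mem_insert.1 hy with rfl | hy
    · exact hx
    · exact (hs y hy).1.trans (hx.trans (hs y hy).2)) hanti
  have := hl _ h3
  rw [h1, card_insert_of_notMem hxs] at this
  omega

/-- Colouring arcs by their depth gives a word that is paired by the matching, and on whose
letters the matching is increasing. -/
lemma exists_word (hinv : ∀ x, τ (τ x) = x) (h2 : ∀ x, τ x ≠ x) {l : ℕ}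
    (hl : ∀ A : Finset ι, StrictAntiOn τ A → #A ≤ 2 * l) :
    ∃ w : ι → Fin (2 * l), (∀ x, (w x : ℕ) + l = w (τ x) ∨ (w (τ x) : ℕ) + l = w x) ∧
      ∀ x y, w x = w y → x < y → τ x < τ y := by
  have hop : ∀ x, ¬ x < τ x → τ x < τ (τ x) := fun x hx => by
    rw [hinv]
    exact lt_of_le_of_ne (not_lt.1 hx) (h2 x)
  refine ⟨fun x => if hx : x < τ x then
      ⟨nestDepth τ x, by have := nestDepth_lt hinv hl hx; omega⟩
    else ⟨nestDepth τ (τ x) + l, by have := nestDepth_lt hinv hl (hop x hx); omega⟩, ?_, ?_⟩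
  · intro x
    by_cases hx : x < τ x
    · left
      simp [hx, hx.not_gt, hinv]
    · right
      have := hop x hx
      rw [hinv] at this
      simp [hx, this, hinv]
  · intro x y hxy hlt
    by_cases hx : x < τ x <;> by_cases hy : y < τ y
    · simp only [hx, hy, dif_pos, Fin.mk.injEq] at hxy
      by_contra hle
      have := nestDepth_lt_nestDepth hlt
        (lt_of_le_of_ne (not_lt.1 hle) (τ.injective.ne hlt.ne'))
      omega
    · simp only [hx, hy, dif_pos, dif_neg, not_false_eq_true, Fin.mk.injEq] at hxy
      have := nestDepth_lt hinv hl hx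
      omega
    · simp only [hx, hy, dif_pos, dif_neg, not_false_eq_true, Fin.mk.injEq] at hxy
      have := nestDepth_lt hinv hl hy
      omega
    · simp only [hx, hy, dif_neg, not_false_eq_true, Fin.mk.injEq] at hxy
      by_contra hle
      have := nestDepth_lt_nestDepth (τ := τ) (x := τ x) (y := τ y)
        (lt_of_le_of_ne (not_lt.1 hle) (τ.injective.ne hlt.ne')) (by rwa [hinv, hinv])
      omega

end NestDepth

lemma permSum_mul_lt {N : ℕ} {κ : Type*} [Fintype κ] [DecidableEq κ] {τ ρ : Equiv.Perm (Fin N)}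
    {w : Fin N → κ} (hw : ∀ x y, w x = w y → x < y → τ x < τ y) (hρ : ∀ x, w (ρ x) = w x)
    (hne : ρ ≠ 1) : permSum (τ * ρ) < permSum τ := by
  have hiff : ∀ c x, w (ρ x) = c ↔ w x = c := fun c x => by rw [hρ]
  set r : κ → Equiv.Perm (Fin N) := fun c =>
    Equiv.Perm.ofSubtype (ρ.subtypePerm (p := fun x => w x = c) (hiff c)) with hr
  have hr1 : ∀ c x, w x = c → r c x = ρ x := by
    intro c x hx
    simp only [hr]
    rw [Equiv.Perm.ofSubtype_apply_of_mem (p := fun x => w x = c) _ hx,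
      Equiv.Perm.subtypePerm_apply]
  have hr2 : ∀ c x, w x ≠ c → r c x = x := fun c x hx => by
    simp only [hr]
    rw [Equiv.Perm.ofSubtype_apply_of_not_mem (p := fun x => w x = c) _ hx]
  have hsupp : ∀ c, {x | r c x ≠ x} ⊆ (({x | w x = c} : Finset (Fin N)) : Set (Fin N)) := by
    intro c x hx
    by_contra h
    exact hx (hr2 c x (by simpa using h))
  have hvary : ∀ c, MonovaryOn (fun x : Fin N => (x : ℤ)) (fun x => (τ x : ℤ))
      (({x | w x = c} : Finset (Fin N)) : Set (Fin N)) := by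
    intro c x hx y hy hxy
    have hlt : τ x < τ y := by simpa using hxy
    simp only [coe_filter, mem_univ, true_and, Set.mem_ofPred_eq] at hx hy
    by_contra hle
    have := hw y x (hy.trans hx.symm) (by simpa using hle)
    exact hlt.not_gt this
  have hterm : ∀ c, ∑ x with w x = c, (x : ℤ) * ((τ * ρ) x : ℤ) =
      ∑ x with w x = c, (x : ℤ) * (τ (r c x) : ℤ) := fun c =>
    sum_congr rfl fun x hx => by rw [hr1 c x (mem_filter.1 hx).2, Equiv.Perm.mul_apply]
  rw [permSum, permSum, ← sum_fiberwise _ w,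
    ← sum_fiberwise _ w fun x : Fin N => (x : ℤ) * (τ x : ℤ)]
  obtain ⟨x, hx⟩ : ∃ x, ρ x ≠ x := by
    by_contra! h
    exact hne (Equiv.ext h)
  refine sum_lt_sum (fun c _ => ?_) ⟨w x, mem_univ _, ?_⟩
  · rw [hterm]
    exact (hvary c).sum_mul_comp_perm_le_sum_mul (hsupp c)
  · rw [hterm]
    refine ((hvary (w x)).sum_mul_comp_perm_lt_sum_mul_iff (hsupp (w x))).2 fun hmono => ?_
    refine hx (eq_self_of_strictMonoOn (s := {y | w y = w x}) (f := ρ) ?_ ?_ (by simp))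
    · intro y hy
      simpa [hρ] using hy
    · intro y hy z hz hyz
      by_contra hle
      have hyx : w y = w x := by simpa using hy
      have hzx : w z = w x := by simpa using hz
      have h1 : ρ z < ρ y := lt_of_le_of_ne (not_lt.1 hle) (ρ.injective.ne hyz.ne')
      have h2 := hw _ _ (by rw [hρ, hρ, hyx, hzx]) h1
      have h3 := hmono (i := z) (j := y) hz hy (by simpa [hr1 _ _ hyx, hr1 _ _ hzx] using h2)
      exact hyz.not_ge (by simpa using h3)

lemma Jmat_ne_zero_iff {l : ℕ} {i j : Fin (2 * l)} :
    Jmat l i j ≠ 0 ↔ (i : ℕ) + l = j ∨ (j : ℕ) + l = i := by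
  simp only [Jmat, of_apply]
  split_ifs with h1 h2 <;> simp [*]

lemma matchTensor_Jmat_ne_zero_iff {l : ℕ} {ι : Type*} [Fintype ι] [LinearOrder ι]
    {τ : Equiv.Perm ι} (hinv : ∀ x, τ (τ x) = x) (h2 : ∀ x, τ x ≠ x) {w : ι → Fin (2 * l)} :
    matchTensor (Jmat l) τ w ≠ 0 ↔
      ∀ x, (w x : ℕ) + l = w (τ x) ∨ (w (τ x) : ℕ) + l = w x := by
  simp only [matchTensor, prod_ne_zero_iff, Jmat_ne_zero_iff, mem_filter, mem_univ, true_and]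
  refine ⟨fun h x => ?_, fun h x _ => h x⟩
  rcases lt_or_gt_of_ne (h2 x) with hx | hx
  · have := h (τ x) (by rwa [hinv])
    rw [hinv] at this
    exact this.symm
  · exact h x hx

lemma linearIndependent_matchTensor (N l : ℕ) :
    LinearIndependent ℂ (fun τ : {τ : Equiv.Perm (Fin N) //
      τ * τ = 1 ∧ (∀ x, τ x ≠ x) ∧ decLE τ (2 * l)} => matchTensor (Jmat l) τ.1) := by
  classical
  rw [Fintype.linearIndependent_iff]
  intro g hg τ₀
  by_contra h0
  obtain ⟨τ, hτ, hmin⟩ := exists_min_image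
    ({τ | g τ ≠ 0} : Finset {τ : Equiv.Perm (Fin N) //
      τ * τ = 1 ∧ (∀ x, τ x ≠ x) ∧ decLE τ (2 * l)}) (fun τ => permSum τ.1)
    ⟨τ₀, by simpa using h0⟩
  have hinv : ∀ (σ : {τ : Equiv.Perm (Fin N) // τ * τ = 1 ∧ (∀ x, τ x ≠ x) ∧ decLE τ (2 * l)}) x,
      σ.1 (σ.1 x) = x := fun σ x => congrArg (fun σ : Equiv.Perm (Fin N) => σ x) σ.2.1
  obtain ⟨w, hw, hmono⟩ := exists_word (hinv τ) τ.2.2.1 (decLE_iff.1 τ.2.2.2)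
  have hval := congrFun hg w
  rw [Finset.sum_apply, sum_eq_single τ] at hval
  · exact (mul_ne_zero (mem_filter.1 hτ).2
      ((matchTensor_Jmat_ne_zero_iff (hinv τ) τ.2.2.1).2 hw)) hval
  · intro τ' _ hne
    by_contra h
    rw [Pi.smul_apply, smul_eq_mul, mul_eq_zero, not_or] at h
    have hw' := (matchTensor_Jmat_ne_zero_iff (hinv τ') τ'.2.2.1).1 h.2
    have hlt : permSum (τ.1 * (τ.1⁻¹ * τ'.1)) < permSum τ.1 := by
      refine permSum_mul_lt hmono (fun x => ?_) fun h => hne ?_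
      · have hinv' : τ.1⁻¹ = τ.1 := inv_eq_of_mul_eq_one_left τ.2.1
        rw [hinv', Equiv.Perm.mul_apply]
        have ha := hw (τ'.1 x)
        have hb := hw' x
        have := (w x).2
        have := (w (τ'.1 x)).2
        have := (w (τ.1 (τ'.1 x))).2
        apply Fin.ext
        omega
      · exact Subtype.ext (inv_mul_eq_one.1 h).symm
    rw [mul_inv_cancel_left] at hlt
    exact (hmin τ' (mem_filter.2 ⟨mem_univ _, h.1⟩)).not_gt hlt
  · simp

end LinearIndependence

section Coordinates

/-- The coefficient function of a tensor in the standard basis. -/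
def tensorCoeff (N d : ℕ) : (⨂[ℂ] _ : Fin N, (Fin d → ℂ)) ≃ₗ[ℂ] ((Fin N → Fin d) → ℂ) :=
  (Basis.piTensorProduct fun _ : Fin N => Pi.basisFun ℂ (Fin d)).equivFun

lemma tensorCoeff_wTau (n l : ℕ) (τ : Equiv.Perm (Fin (2 * n))) :
    tensorCoeff (2 * n) (2 * l) (wTau n l τ) = matchTensor (Jmat l) τ := by
  rw [← LinearEquiv.eq_symm_apply, tensorCoeff, Module.Basis.equivFun_symm_apply]
  simp [wTau, matchTensor]

lemma tensorCoeff_tpow {N d : ℕ} (M : Matrix (Fin d) (Fin d) ℂ) (v : ⨂[ℂ] _ : Fin N, (Fin d → ℂ)) :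
    tensorCoeff N d (tpow N d M v) = tensorAct M (tensorCoeff N d v) := by
  funext k
  have hv := (Basis.piTensorProduct fun _ : Fin N => Pi.basisFun ℂ (Fin d)).sum_equivFun v
  conv_lhs => rw [← hv]
  simp only [tensorCoeff, tensorAct, map_sum, map_smul, Finset.sum_apply, Pi.smul_apply,
    smul_eq_mul, Basis.piTensorProduct_apply, tpow, PiTensorProduct.map_tprod,
    Module.Basis.equivFun_apply, Basis.piTensorProduct_repr_tprod_apply]
  refine Finset.sum_congr rfl fun i _ => ?_
  rw [mul_comm]
  simp

lemma Jmat_transpose (l : ℕ) : (Jmat l)ᵀ = -Jmat l := by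
  ext i j
  simp only [Jmat, transpose_apply, of_apply, Matrix.neg_apply]
  split_ifs <;> first | omega | simp

lemma Jmat_conjTranspose (l : ℕ) : (Jmat l)ᴴ = -Jmat l := by
  rw [← Jmat_transpose]
  ext i j
  simp only [Jmat, conjTranspose_apply, transpose_apply, of_apply]
  split_ifs <;> simp

lemma Jmat_mul_self (l : ℕ) : Jmat l * Jmat l = -1 := by
  ext i j
  obtain ⟨p, hp⟩ : ∃ p : Fin (2 * l), (i : ℕ) + l = p ∨ (p : ℕ) + l = i := by
    rcases lt_or_ge (i : ℕ) l with h | h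
    · exact ⟨⟨i + l, by omega⟩, Or.inl rfl⟩
    · exact ⟨⟨i - l, by omega⟩, Or.inr (by simp [h])⟩
  rw [mul_apply, Finset.sum_eq_single p]
  · simp only [Jmat, of_apply, Matrix.neg_apply, Matrix.one_apply, Fin.ext_iff]
    split_ifs <;> first | omega | simp
  · intro q _ hq
    simp only [Jmat, of_apply]
    rw [Ne, Fin.ext_iff] at hq
    split_ifs <;> first | omega | simp
  · simp

end Coordinates

/-- The family `{w_τ : τ fixed-point-free involution of {1,…,2n}, L⁻(τ) ≤ 2l}` is a basis
of the space `F_{2n}(Sp(2l))` of tensors fixed by `U^{⊗2n}` for every `U` in the compact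
symplectic group `Sp(2l) = {U ∈ U(2l) : Uᵀ J U = J}`. -/
theorem wTau_basis_of_symplectic_invariants (n l : ℕ) :
    LinearIndependent ℂ
      (fun τ : {τ : Equiv.Perm (Fin (2 * n)) //
          τ * τ = 1 ∧ (∀ x, τ x ≠ x) ∧ decLE τ (2 * l)} => wTau n l τ.1) ∧
    (Submodule.span ℂ
        (Set.range (fun τ : {τ : Equiv.Perm (Fin (2 * n)) //
          τ * τ = 1 ∧ (∀ x, τ x ≠ x) ∧ decLE τ (2 * l)} => wTau n l τ.1)) :
      Set (⨂[ℂ] _ : Fin (2 * n), (Fin (2 * l) → ℂ))) =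
      {v | ∀ U : Matrix.unitaryGroup (Fin (2 * l)) ℂ,
        (U : Matrix (Fin (2 * l)) (Fin (2 * l)) ℂ)ᵀ * Jmat l *
            (U : Matrix (Fin (2 * l)) (Fin (2 * l)) ℂ) = Jmat l →
          tpow (2 * n) (2 * l) (U : Matrix (Fin (2 * l)) (Fin (2 * l)) ℂ) v = v} := by
  set Φ := tensorCoeff (2 * n) (2 * l)
  have himage : Φ '' Set.range (fun τ : {τ : Equiv.Perm (Fin (2 * n)) //
      τ * τ = 1 ∧ (∀ x, τ x ≠ x) ∧ decLE τ (2 * l)} => wTau n l τ.1) =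
      matchTensor (Jmat l) '' {τ | τ * τ = 1 ∧ (∀ x, τ x ≠ x) ∧ decLE τ (2 * l)} := by
    rw [← Set.range_comp, Set.image_eq_range]
    exact congrArg Set.range (funext fun τ => tensorCoeff_wTau n l τ.1)
  constructor
  · refine LinearIndependent.of_comp Φ.toLinearMap ?_
    convert linearIndependent_matchTensor (2 * n) l using 1
    exact funext fun τ => tensorCoeff_wTau n l τ.1
  · ext v
    have hspan : Submodule.span ℂ (matchTensor (Jmat l) ''
        {τ : Equiv.Perm (Fin (2 * n)) | τ * τ = 1 ∧ (∀ x, τ x ≠ x) ∧ decLE τ (2 * l)}) =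
        Submodule.span ℂ (matchTensor (Jmat l) ''
          {τ : Equiv.Perm (Fin (2 * n)) | τ * τ = 1 ∧ ∀ x, τ x ≠ x}) := by
      refine le_antisymm (Submodule.span_mono (Set.image_mono fun τ h => ⟨h.1, h.2.1⟩))
        (Submodule.span_le.2 ?_)
      rintro _ ⟨τ, ⟨h1, h2⟩, rfl⟩
      exact matchTensor_mem_span_decLE (Fintype.card_fin _) (Jmat_transpose l) h1 h2
    have hmem : v ∈ Submodule.span ℂ (Set.range (fun τ : {τ : Equiv.Perm (Fin (2 * n)) //
        τ * τ = 1 ∧ (∀ x, τ x ≠ x) ∧ decLE τ (2 * l)} => wTau n l τ.1)) ↔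
        Φ v ∈ Submodule.span ℂ (matchTensor (Jmat l) ''
          {τ : Equiv.Perm (Fin (2 * n)) | τ * τ = 1 ∧ ∀ x, τ x ≠ x}) := by
      rw [← hspan, ← himage]
      exact (Submodule.apply_mem_span_image_iff_mem_span Φ.injective).symm
    rw [SetLike.mem_coe, hmem, mem_span_matchTensor_iff (Jmat_transpose l) (Jmat_mul_self l)
      (Jmat_conjTranspose l)]
    refine ⟨fun h U hU => Φ.injective ?_, fun h U hU hJ => ?_⟩
    · rw [tensorCoeff_tpow]
      exact h U U.2 hU
    · rw [← tensorCoeff_tpow, h ⟨U, hU⟩ hJ]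
end
end

section
/- Let l be a nonnegative integer and let a, b : {1,2,3,…} → ℕ be finitely supported functions with Σ_j j·(a_j + b_j) ≤ 2l. Then E_{U∈U(l)} ∏_j ( Tr(U^j) )^{a_j} · ( conj(Tr(U^j)) )^{b_j} = ∏_j j^{a_j} · a_j! if a = b, and = 0 otherwise; i.e., up to total weighted degree 2l the joint moments of the power-sum traces of a Haar-random unitary matrix coincide with those of independent complex Gaussians of variance j. -/
open MeasureTheory Matrix

noncomputable section

instance (l : ℕ) : MeasurableSpace (Matrix.unitaryGroup (Fin l) ℂ) := borel _
instance (l : ℕ) : BorelSpace (Matrix.unitaryGroup (Fin l) ℂ) := ⟨rfl⟩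

section TensorPower

variable {ι α R : Type*} [Fintype α]

/-- The matrix of the tensor power `X ⊗ ⋯ ⊗ X`, with tensor factors indexed by `α`. -/
def tensorPow (α : Type*) [Fintype α] [CommRing R] (X : Matrix ι ι R) :
    Matrix (α → ι) (α → ι) R :=
  Matrix.of fun i j => ∏ t, X (i t) (j t)

lemma tensorPow_apply [CommRing R] (X : Matrix ι ι R) (i j : α → ι) :
    tensorPow α X i j = ∏ t, X (i t) (j t) := rfl

lemma tensorPow_mul [Fintype ι] [DecidableEq α] [CommRing R] (X Y : Matrix ι ι R) :
    tensorPow α (X * Y) = tensorPow α X * tensorPow α Y := by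
  ext i j
  simp only [tensorPow_apply, Matrix.mul_apply, Finset.prod_univ_sum, Fintype.piFinset_univ,
    Finset.prod_mul_distrib]

lemma tensorPow_one [DecidableEq ι] [CommRing R] :
    tensorPow α (1 : Matrix ι ι R) = 1 := by
  ext i j
  simp only [tensorPow_apply, Matrix.one_apply, Finset.prod_ite_zero, Finset.prod_const_one,
    Finset.mem_univ, true_implies, funext_iff]

lemma tensorPow_conjTranspose [CommRing R] [StarRing R] (X : Matrix ι ι R) :
    tensorPow α Xᴴ = (tensorPow α X)ᴴ := by
  ext i j
  simp [tensorPow_apply, Matrix.conjTranspose_apply]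

lemma tensorPow_comp_perm [CommRing R] (X : Matrix ι ι R) (τ : Equiv.Perm α) (i j : α → ι) :
    tensorPow α X (i ∘ τ) (j ∘ τ) = tensorPow α X i j := by
  simp only [tensorPow_apply, Function.comp_apply]
  exact Equiv.prod_comp τ fun t => X (i t) (j t)

end TensorPower

section Density

variable {ι : Type*} [Fintype ι] [DecidableEq ι]

/-- A polynomial in the matrix entries vanishing on unitary matrices vanishes on Hermitian ones. -/
lemma eval_eq_zero_of_isHermitian (f : MvPolynomial (ι × ι) ℂ)
    (h : ∀ U ∈ Matrix.unitaryGroup ι ℂ, MvPolynomial.eval (fun p => U p.1 p.2) f = 0)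
    (A : Matrix ι ι ℂ) (hA : A.IsHermitian) :
    MvPolynomial.eval (fun p => A p.1 p.2) f = 0 := by
  set V := hA.eigenvectorUnitary
  let g : MvPolynomial ι ℂ := MvPolynomial.bind₁ (fun p : ι × ι =>
    ∑ k, MvPolynomial.C ((V : Matrix ι ι ℂ) p.1 k * star ((V : Matrix ι ι ℂ) p.2 k)) *
      MvPolynomial.X k) f
  have hg : ∀ d : ι → ℂ, MvPolynomial.eval d g = MvPolynomial.eval
      (fun p => ((V : Matrix ι ι ℂ) * diagonal d * star (V : Matrix ι ι ℂ)) p.1 p.2) f := by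
    intro d
    simp only [g, MvPolynomial.eval, MvPolynomial.eval₂Hom_bind₁]
    congr 2
    ext p
    rw [Matrix.mul_apply]
    simp only [map_sum, map_mul, MvPolynomial.eval₂Hom_C, MvPolynomial.eval₂Hom_X',
      RingHom.id_apply, Matrix.mul_diagonal, Matrix.star_apply]
    exact Finset.sum_congr rfl fun k _ => by ring
  have hg0 : g = 0 := by
    refine MvPolynomial.funext_set (fun _ => Metric.sphere (0 : ℂ) 1) (fun _ => ?_) fun d hd => ?_
    · have : Set.InjOn (fun n : ℝ => Complex.exp (n * Complex.I)) (Set.Ioc (-Real.pi) Real.pi) := by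
        intro x hx y hy hxy
        have := congrArg Complex.arg hxy
        simpa [Complex.arg_exp_mul_I, toIocMod_eq_self _ |>.2, Complex.arg_exp, hx, hy,
          Complex.exp_mul_I, Complex.arg_cos_add_sin_mul_I] using this
      refine ((Set.Ioc_infinite (by linarith [Real.pi_pos])).image this).mono ?_
      rintro _ ⟨x, -, rfl⟩
      simp [Complex.norm_exp_ofReal_mul_I]
    · rw [hg, map_zero]
      apply h
      have hD : diagonal d ∈ Matrix.unitaryGroup ι ℂ := by
        rw [Matrix.mem_unitaryGroup_iff, Matrix.star_eq_conjTranspose,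
          Matrix.diagonal_conjTranspose, Matrix.diagonal_mul_diagonal, ← Matrix.diagonal_one]
        congr 1
        ext k
        have hk : ‖d k‖ = 1 := by simpa using hd k (Set.mem_univ k)
        simp [Complex.mul_conj, Complex.normSq_eq_norm_sq, hk]
      exact mul_mem (mul_mem V.2 hD) (Unitary.star_mem V.2)
  have hs := hA.spectral_theorem
  rw [Unitary.conjStarAlgAut_apply] at hs
  rw [hs, ← hg, hg0, map_zero]

/-- The unitary group is Zariski dense in the space of complex matrices. -/
lemma mvPolynomial_eq_zero_of_eval_unitary (f : MvPolynomial (ι × ι) ℂ)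
    (h : ∀ U ∈ Matrix.unitaryGroup ι ℂ, MvPolynomial.eval (fun p => U p.1 p.2) f = 0) :
    f = 0 := by
  refine MvPolynomial.funext fun x => ?_
  rw [map_zero]
  let X : Matrix ι ι ℂ := Matrix.of fun i j => x (i, j)
  let A : Matrix ι ι ℂ := realPart X
  let B : Matrix ι ι ℂ := imaginaryPart X
  have hX : A + Complex.I • B = X := realPart_add_I_smul_imaginaryPart X
  let g : Polynomial ℂ := MvPolynomial.aeval (fun p : ι × ι =>
    Polynomial.C (A p.1 p.2) + Polynomial.X * Polynomial.C (B p.1 p.2)) f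
  have hg : ∀ t : ℂ, g.eval t = MvPolynomial.eval (fun p => (A + t • B) p.1 p.2) f := by
    intro t
    have := MvPolynomial.map_aeval (fun p : ι × ι =>
      Polynomial.C (A p.1 p.2) + Polynomial.X * Polynomial.C (B p.1 p.2))
      (Polynomial.evalRingHom t) f
    rw [← Polynomial.coe_evalRingHom, this, MvPolynomial.eval]
    congr 2
    · ext z; simp
    · ext p; simp; ring
  have hg0 : g = 0 := by
    refine Polynomial.eq_zero_of_infinite_isRoot g
      ((Set.infinite_range_of_injective Complex.ofReal_injective).mono ?_)
    rintro _ ⟨t, rfl⟩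
    refine (hg t).trans (eval_eq_zero_of_isHermitian f h _ ?_)
    have hA : A.IsHermitian := (realPart X).2
    have hB : B.IsHermitian := (imaginaryPart X).2
    refine hA.add ?_
    simp [Matrix.IsHermitian, Matrix.conjTranspose_smul, hB.eq]
  have := hg Complex.I
  rw [hX, hg0, Polynomial.eval_zero] at this
  exact this.symm

end Density

section Commutant

variable {ι α : Type*} [Fintype α]

lemma sum_single_eq_iff {β γ : Type*} {e : α → γ} (he : Function.Injective e)
    (i i' : α → β) (j : α → γ) :
    ∑ t, Finsupp.single (i t, j t) 1 = ∑ t, Finsupp.single (i' t, e t) (1 : ℕ) ↔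
      ∃ τ : Equiv.Perm α, i = i' ∘ τ ∧ j = e ∘ τ := by
  classical
  constructor
  · intro h
    have key : ∀ p, (∃ t, (i t, j t) = p) ↔ ∃ t, (i' t, e t) = p := by
      intro p
      have := DFunLike.congr_fun h p
      simp only [Finsupp.finsetSum_apply, Finsupp.single_apply, Finset.sum_boole,
        Nat.cast_id] at this
      have h2 := congrArg (fun n => 0 < n) this
      simpa [Finset.card_pos, Finset.Nonempty] using h2
    choose τ hτ using fun t => (key (i t, j t)).1 ⟨t, rfl⟩
    have hsurj : Function.Surjective τ := by
      intro s
      obtain ⟨t, ht⟩ := (key (i' s, e s)).2 ⟨s, rfl⟩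
      refine ⟨t, he ?_⟩
      have := (hτ t).trans ht
      exact (Prod.ext_iff.1 this).2
    refine ⟨Equiv.ofBijective τ (Finite.injective_iff_bijective.1
      (Finite.injective_iff_surjective.2 hsurj)), ?_, ?_⟩
    · ext t; exact (Prod.ext_iff.1 (hτ t)).1.symm
    · ext t; exact (Prod.ext_iff.1 (hτ t)).2.symm
  · rintro ⟨τ, rfl, rfl⟩
    exact Equiv.sum_comp τ fun t => Finsupp.single (i' t, e t) 1

/-- A matrix commuting with all tensor powers of unitary matrices is a combination of permutation
operators, as long as the number of tensor factors is at most the dimension. -/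
lemma apply_eq_sum_perm_of_commute_tensorPow [Fintype ι] [DecidableEq ι] [DecidableEq α]
    (e : α → ι) (he : Function.Injective e)
    (A : Matrix (α → ι) (α → ι) ℂ)
    (hA : ∀ V ∈ Matrix.unitaryGroup ι ℂ, A * tensorPow α V = tensorPow α V * A)
    (i j : α → ι) :
    A i j = ∑ τ : Equiv.Perm α, if i = j ∘ τ then A (e ∘ τ) e else 0 := by
  classical
  have hmon : ∀ i j : α → ι, (∏ t, MvPolynomial.X (i t, j t) : MvPolynomial (ι × ι) ℂ) =
      MvPolynomial.monomial (∑ t, Finsupp.single (i t, j t) 1) 1 := by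
    intro i j
    rw [MvPolynomial.monomial_sum_one]
    rfl
  have h0 : (∑ k : α → ι, MvPolynomial.C (A i k) * ∏ t, MvPolynomial.X (k t, e t)) -
      ∑ k : α → ι, MvPolynomial.C (A k e) * ∏ t, MvPolynomial.X (i t, k t) =
        (0 : MvPolynomial (ι × ι) ℂ) := by
    refine mvPolynomial_eq_zero_of_eval_unitary _ fun U hU => ?_
    have := congrFun (congrFun (hA U hU) i) e
    simp only [Matrix.mul_apply, tensorPow_apply] at this
    simp only [map_sub, map_sum, map_mul, map_prod, MvPolynomial.eval_C, MvPolynomial.eval_X,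
      this, sub_eq_zero]
    exact Finset.sum_congr rfl fun k _ => mul_comm _ _
  have h1 := congrArg (MvPolynomial.coeff (∑ t, Finsupp.single (j t, e t) 1)) h0
  simp only [hmon, MvPolynomial.coeff_sub, MvPolynomial.coeff_sum, MvPolynomial.coeff_C_mul,
    MvPolynomial.coeff_monomial, MvPolynomial.coeff_zero, mul_ite, mul_one, mul_zero,
    sum_single_eq_iff he, sub_eq_zero] at h1
  have hl : ∀ k : α → ι, (∃ τ : Equiv.Perm α, k = j ∘ τ ∧ e = e ∘ τ) ↔ k = j := by
    refine fun k => ⟨?_, fun h => ⟨1, by simp [h], by simp⟩⟩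
    rintro ⟨τ, rfl, h⟩
    have : τ = 1 := Equiv.ext fun t => (he (congrFun h t)).symm
    simp [this]
  simp only [hl, Finset.sum_ite_eq', Finset.mem_univ, if_true] at h1
  rw [h1, ← Finset.sum_filter, ← Finset.sum_filter]
  symm
  refine Finset.sum_bij (fun τ _ => e ∘ τ) ?_ ?_ ?_ ?_
  · intro τ hτ
    simp only [Finset.mem_filter, Finset.mem_univ, true_and] at hτ ⊢
    exact ⟨τ, hτ, rfl⟩
  · intro τ _ τ' _ h
    exact Equiv.ext fun t => he (congrFun h t)
  · intro k hk
    simp only [Finset.mem_filter, Finset.mem_univ, true_and] at hk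
    obtain ⟨τ, h, h'⟩ := hk
    exact ⟨τ, by simpa using h, h'.symm⟩
  · intro τ _
    rfl

end Commutant

section HaarIntegral

variable {l : ℕ} {α : Type*} [Fintype α]

lemma integrable_tensorPow_mul_star (μ : Measure (Matrix.unitaryGroup (Fin l) ℂ))
    [IsProbabilityMeasure μ] (i i' j j' : α → Fin l) :
    Integrable (fun U : Matrix.unitaryGroup (Fin l) ℂ =>
      tensorPow α (U : Matrix (Fin l) (Fin l) ℂ) i i' *
        star (tensorPow α (U : Matrix (Fin l) (Fin l) ℂ) j j')) μ := by
  have hc : ∀ i j : α → Fin l, Continuous fun U : Matrix.unitaryGroup (Fin l) ℂ =>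
      tensorPow α (U : Matrix (Fin l) (Fin l) ℂ) i j := by
    intro i j
    simp only [tensorPow_apply]
    exact continuous_finsetProd _ fun t _ => continuous_subtype_val.matrix_elem _ _
  have hb : ∀ (i j : α → Fin l) (U : Matrix.unitaryGroup (Fin l) ℂ),
      ‖tensorPow α (U : Matrix (Fin l) (Fin l) ℂ) i j‖ ≤ 1 := by
    intro i j U
    rw [tensorPow_apply, norm_prod]
    exact Finset.prod_le_one (fun _ _ => norm_nonneg _)
      fun t _ => entry_norm_bound_of_unitary U.2 _ _
  refine Integrable.of_bound ((hc i i').mul (hc j j').star).aestronglyMeasurable 1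
    (Filter.Eventually.of_forall fun U => ?_)
  rw [norm_mul, norm_star]
  exact mul_le_one₀ (hb _ _ U) (norm_nonneg _) (hb _ _ U)

/-- The matrix of mixed moments of the entries of a random unitary matrix, as a function of the
row indices. -/
def rowMoment (μ : Measure (Matrix.unitaryGroup (Fin l) ℂ)) (i' j' : α → Fin l) :
    Matrix (α → Fin l) (α → Fin l) ℂ :=
  Matrix.of fun i j => ∫ U, tensorPow α (U : Matrix (Fin l) (Fin l) ℂ) i i' *
    star (tensorPow α (U : Matrix (Fin l) (Fin l) ℂ) j j') ∂μ

lemma rowMoment_mul_tensorPow [DecidableEq α] (μ : Measure (Matrix.unitaryGroup (Fin l) ℂ))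
    [μ.IsHaarMeasure] [IsProbabilityMeasure μ] (i' j' : α → Fin l)
    (V : Matrix (Fin l) (Fin l) ℂ) (hV : V ∈ Matrix.unitaryGroup (Fin l) ℂ) :
    rowMoment μ i' j' * tensorPow α V = tensorPow α V * rowMoment μ i' j' := by
  ext i m
  let W : Matrix.unitaryGroup (Fin l) ℂ := ⟨V, hV⟩
  let F : Matrix.unitaryGroup (Fin l) ℂ → ℂ := fun U =>
    tensorPow α (U : Matrix (Fin l) (Fin l) ℂ) i i' *
      star (tensorPow α (Vᴴ * (U : Matrix (Fin l) (Fin l) ℂ)) m j')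
  have h1 : (rowMoment μ i' j' * tensorPow α V) i m = ∫ U, F U ∂μ := by
    simp only [Matrix.mul_apply, rowMoment, Matrix.of_apply, ← integral_mul_const, F]
    rw [← integral_finsetSum _ fun k _ => (integrable_tensorPow_mul_star μ _ _ _ _).mul_const _]
    refine integral_congr_ae (Filter.Eventually.of_forall fun U => ?_)
    simp only [tensorPow_mul, tensorPow_conjTranspose, Matrix.mul_apply,
      Matrix.conjTranspose_apply, star_sum, star_mul', star_star, Finset.mul_sum]
    exact Finset.sum_congr rfl fun k _ => by ring
  have h2 : (tensorPow α V * rowMoment μ i' j') i m = ∫ U, F (W * U) ∂μ := by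
    simp only [Matrix.mul_apply, rowMoment, Matrix.of_apply, ← integral_const_mul, F]
    rw [← integral_finsetSum _ fun k _ => (integrable_tensorPow_mul_star μ _ _ _ _).const_mul _]
    refine integral_congr_ae (Filter.Eventually.of_forall fun U => ?_)
    have hW : Vᴴ * ((W * U : Matrix.unitaryGroup (Fin l) ℂ) : Matrix (Fin l) (Fin l) ℂ) = U := by
      change Vᴴ * (V * (U : Matrix (Fin l) (Fin l) ℂ)) = U
      rw [← Matrix.mul_assoc, ← Matrix.star_eq_conjTranspose,
        Matrix.mem_unitaryGroup_iff'.1 hV, Matrix.one_mul]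
    simp only [hW]
    change _ = tensorPow α (V * (U : Matrix (Fin l) (Fin l) ℂ)) i i' * _
    simp only [tensorPow_mul, Matrix.mul_apply, Finset.sum_mul]
    exact Finset.sum_congr rfl fun k _ => by ring
  rw [h1, h2, integral_mul_left_eq_self]

/-- The trace of a tensor power of `X` composed with a permutation operator. -/
def permTrace {ι R : Type*} [Fintype ι] [DecidableEq α] [CommRing R]
    (X : Matrix ι ι R) (π : Equiv.Perm α) : R :=
  ∑ i : α → ι, tensorPow α X i (i ∘ π)

lemma integral_permTrace_mul_star [DecidableEq α] (μ : Measure (Matrix.unitaryGroup (Fin l) ℂ))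
    [μ.IsHaarMeasure] [IsProbabilityMeasure μ] (e : α → Fin l) (he : Function.Injective e)
    (π σ : Equiv.Perm α) :
    ∫ U, permTrace (U : Matrix (Fin l) (Fin l) ℂ) π *
      star (permTrace (U : Matrix (Fin l) (Fin l) ℂ) σ) ∂μ =
        Finset.card {τ : Equiv.Perm α | τ * π * τ⁻¹ = σ} := by
  have hint := integrable_tensorPow_mul_star (α := α) μ
  have h1 : ∫ U, permTrace (U : Matrix (Fin l) (Fin l) ℂ) π *
      star (permTrace (U : Matrix (Fin l) (Fin l) ℂ) σ) ∂μ =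
        ∑ i : α → Fin l, ∑ j : α → Fin l, rowMoment μ (i ∘ π) (j ∘ σ) i j := by
    simp only [permTrace, star_sum, Finset.sum_mul_sum, rowMoment, Matrix.of_apply]
    rw [integral_finsetSum _ fun i _ => integrable_finsetSum _ fun j _ => hint _ _ _ _]
    exact Finset.sum_congr rfl fun i _ => integral_finsetSum _ fun j _ => hint _ _ _ _
  have h2 : ∀ i j : α → Fin l, rowMoment μ (i ∘ π) (j ∘ σ) i j =
      ∑ τ : Equiv.Perm α, if i = j ∘ τ then rowMoment μ (i ∘ π) (j ∘ σ) (e ∘ τ) e else 0 :=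
    fun i j => apply_eq_sum_perm_of_commute_tensorPow e he _
      (rowMoment_mul_tensorPow μ _ _) i j
  have h3 : ∀ τ : Equiv.Perm α,
      ∑ j : α → Fin l, rowMoment μ ((j ∘ τ) ∘ π) (j ∘ σ) (e ∘ τ) e =
        if τ * π * τ⁻¹ = σ then 1 else 0 := by
    intro τ
    simp only [rowMoment, Matrix.of_apply]
    rw [← integral_finsetSum _ fun j _ => hint _ _ _ _]
    have : ∀ U : Matrix.unitaryGroup (Fin l) ℂ, ∑ j : α → Fin l,
        tensorPow α (U : Matrix (Fin l) (Fin l) ℂ) (e ∘ τ) ((j ∘ τ) ∘ π) *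
          star (tensorPow α (U : Matrix (Fin l) (Fin l) ℂ) e (j ∘ σ)) =
        if τ * π * τ⁻¹ = σ then 1 else 0 := by
      intro U
      have hU : (U : Matrix (Fin l) (Fin l) ℂ) * (U : Matrix (Fin l) (Fin l) ℂ)ᴴ = 1 :=
        Matrix.mem_unitaryGroup_iff.1 U.2
      have hstep : ∀ j : α → Fin l,
          tensorPow α (U : Matrix (Fin l) (Fin l) ℂ) (e ∘ τ) ((j ∘ τ) ∘ π) *
            star (tensorPow α (U : Matrix (Fin l) (Fin l) ℂ) e (j ∘ σ)) =
          tensorPow α (U : Matrix (Fin l) (Fin l) ℂ) (e ∘ (τ * π⁻¹ * τ⁻¹ : Equiv.Perm α)) j *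
            tensorPow α ((U : Matrix (Fin l) (Fin l) ℂ)ᴴ) j (e ∘ (σ⁻¹ : Equiv.Perm α)) := by
        intro j
        rw [tensorPow_conjTranspose, Matrix.conjTranspose_apply,
          ← tensorPow_comp_perm _ (τ * π) (e ∘ (τ * π⁻¹ * τ⁻¹ : Equiv.Perm α)) j,
          ← tensorPow_comp_perm _ σ (e ∘ (σ⁻¹ : Equiv.Perm α)) j]
        have ha : (e ∘ (τ * π⁻¹ * τ⁻¹ : Equiv.Perm α)) ∘ (τ * π : Equiv.Perm α) = e ∘ τ :=
          funext fun t => by simp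
        have hb : (e ∘ (σ⁻¹ : Equiv.Perm α)) ∘ σ = e := funext fun t => by simp
        rw [ha, hb]
        rfl
      rw [Finset.sum_congr rfl fun j _ => hstep j, ← Matrix.mul_apply, ← tensorPow_mul, hU,
        tensorPow_one, Matrix.one_apply]
      congr 1
      rw [eq_iff_iff, he.comp_left.eq_iff, DFunLike.coe_fn_eq, ← inv_inj (a := τ * π * τ⁻¹)]
      simp [mul_assoc]
    simp only [this, integral_const, probReal_univ, one_smul]
  rw [h1, Finset.sum_congr rfl fun i _ => Finset.sum_congr rfl fun j _ => h2 i j,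
    Finset.sum_comm, Finset.sum_congr rfl fun j _ => Finset.sum_comm, Finset.sum_comm,
    Finset.card_filter, Nat.cast_sum]
  refine Finset.sum_congr rfl fun τ _ => ?_
  rw [Nat.cast_ite, Nat.cast_one, Nat.cast_zero, ← h3 τ]
  refine Finset.sum_congr rfl fun j _ => ?_
  rw [Finset.sum_ite_eq', if_pos (Finset.mem_univ _)]

end HaarIntegral

section PermTrace

variable {ι R α β : Type*} [Fintype ι] [CommRing R] [Fintype α] [DecidableEq α] [Fintype β]
  [DecidableEq β]

lemma permTrace_sumCongr (X : Matrix ι ι R) (σ : Equiv.Perm α) (τ : Equiv.Perm β) :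
    permTrace X (Equiv.Perm.sumCongr σ τ) = permTrace X σ * permTrace X τ := by
  simp only [permTrace, tensorPow_apply, Finset.sum_mul_sum, ← Finset.sum_product',
    Finset.univ_product_univ]
  refine Fintype.sum_equiv (Equiv.sumArrowEquivProdArrow α β ι) _ _ fun i => ?_
  simp [Fintype.prod_sum_type, Equiv.sumArrowEquivProdArrow]

lemma permTrace_permCongr (X : Matrix ι ι R) (f : α ≃ β) (π : Equiv.Perm α) :
    permTrace X (f.permCongr π) = permTrace X π := by
  simp only [permTrace, tensorPow_apply]
  refine Fintype.sum_equiv (f.symm.arrowCongr (Equiv.refl ι)) _ _ fun i => ?_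
  refine Fintype.prod_equiv f.symm _ _ fun t => ?_
  simp [Equiv.arrowCongr]

lemma pow_succ_apply_eq_sum_prod [DecidableEq ι] (X : Matrix ι ι R) (n : ℕ) (a b : ι) :
    (X ^ (n + 1)) a b = ∑ v : Fin n → ι, ∏ t : Fin (n + 1),
      X (Fin.cons (α := fun _ => ι) a v t) (Fin.snoc (α := fun _ => ι) v b t) := by
  induction n generalizing a with
  | zero => simp [Fin.snoc]
  | succ n ih =>
    rw [pow_succ', Matrix.mul_apply,
      ← (Fin.consEquiv fun _ : Fin (n + 1) => ι).sum_comp, Fintype.sum_prod_type]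
    refine Finset.sum_congr rfl fun c _ => ?_
    rw [ih, Finset.mul_sum]
    refine Finset.sum_congr rfl fun v _ => ?_
    conv_rhs => rw [Fin.prod_univ_succ]
    simp [Fin.consEquiv, ← Fin.cons_snoc_eq_snoc_cons]

lemma permTrace_finRotate [DecidableEq ι] (X : Matrix ι ι R) (n : ℕ) :
    permTrace X (finRotate (n + 1)) = Matrix.trace (X ^ (n + 1)) := by
  rw [permTrace, ← (Fin.consEquiv fun _ : Fin (n + 1) => ι).sum_comp, Fintype.sum_prod_type,
    Matrix.trace]
  refine Finset.sum_congr rfl fun a _ => ?_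
  rw [Matrix.diag_apply, pow_succ_apply_eq_sum_prod]
  refine Finset.sum_congr rfl fun v _ => ?_
  simp [tensorPow_apply, Fin.consEquiv, Fin.snoc_eq_cons_rotate]

lemma cycleType_permCongr (f : α ≃ β) (π : Equiv.Perm α) :
    (f.permCongr π).cycleType = π.cycleType := by
  rw [← Equiv.Perm.cycleType_extendDomain
    (f.trans (Equiv.subtypeUnivEquiv (p := fun _ : β => True) fun _ => trivial).symm)]
  congr 1

lemma cycleType_sumCongr (σ : Equiv.Perm α) (τ : Equiv.Perm β) :
    (Equiv.Perm.sumCongr σ τ).cycleType = σ.cycleType + τ.cycleType := by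
  have h : Equiv.Perm.sumCongr σ τ =
      Equiv.Perm.sumCongr σ (1 : Equiv.Perm β) * Equiv.Perm.sumCongr (1 : Equiv.Perm α) τ := by
    rw [Equiv.Perm.sumCongr_mul, mul_one, one_mul]
  have hd : Equiv.Perm.Disjoint (Equiv.Perm.sumCongr σ (1 : Equiv.Perm β))
      (Equiv.Perm.sumCongr (1 : Equiv.Perm α) τ) := by
    rintro (x | x)
    · right; simp
    · left; simp
  have hl : Equiv.Perm.sumCongr σ (1 : Equiv.Perm β) =
      σ.extendDomain (Equiv.ofInjective (Sum.inl : α → α ⊕ β) Sum.inl_injective) := by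
    ext (x | x)
    · exact (Equiv.Perm.extendDomain_apply_image σ
        (Equiv.ofInjective (Sum.inl : α → α ⊕ β) Sum.inl_injective) x).symm
    · rw [Equiv.Perm.extendDomain_apply_not_subtype _ _ (by simp)]
      simp
  have hr : Equiv.Perm.sumCongr (1 : Equiv.Perm α) τ =
      τ.extendDomain (Equiv.ofInjective (Sum.inr : β → α ⊕ β) Sum.inr_injective) := by
    ext (x | x)
    · rw [Equiv.Perm.extendDomain_apply_not_subtype _ _ (by simp)]
      simp
    · exact (Equiv.Perm.extendDomain_apply_image τ
        (Equiv.ofInjective (Sum.inr : β → α ⊕ β) Sum.inr_injective) x).symm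
  rw [h, hd.cycleType_mul, hl, hr, Equiv.Perm.cycleType_extendDomain,
    Equiv.Perm.cycleType_extendDomain]

lemma parts_partition_eq (π : Equiv.Perm α) :
    π.partition.parts =
      π.cycleType + Multiset.replicate (Fintype.card α - π.cycleType.sum) 1 := by
  rw [Equiv.Perm.parts_partition, Equiv.Perm.sum_cycleType]

lemma parts_partition_permCongr (f : α ≃ β) (π : Equiv.Perm α) :
    (f.permCongr π).partition.parts = π.partition.parts := by
  rw [parts_partition_eq, parts_partition_eq, cycleType_permCongr, Fintype.card_congr f]

lemma parts_partition_sumCongr (σ : Equiv.Perm α) (τ : Equiv.Perm β) :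
    (Equiv.Perm.sumCongr σ τ).partition.parts = σ.partition.parts + τ.partition.parts := by
  have h1 : σ.cycleType.sum ≤ Fintype.card α := by
    rw [Equiv.Perm.sum_cycleType]; exact Finset.card_le_univ _
  have h2 : τ.cycleType.sum ≤ Fintype.card β := by
    rw [Equiv.Perm.sum_cycleType]; exact Finset.card_le_univ _
  simp only [parts_partition_eq, cycleType_sumCongr, Fintype.card_sum, Multiset.sum_add]
  rw [show Fintype.card α + Fintype.card β - (σ.cycleType.sum + τ.cycleType.sum) =
    (Fintype.card α - σ.cycleType.sum) + (Fintype.card β - τ.cycleType.sum) by omega,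
    Multiset.replicate_add]
  abel

lemma parts_partition_finRotate (n : ℕ) : (finRotate (n + 1)).partition.parts = {n + 1} := by
  rw [parts_partition_eq]
  cases n with
  | zero => simp [Subsingleton.elim (finRotate 1) 1]
  | succ n => simp [cycleType_finRotate]

/-- Every multiset of positive integers is the multiset of cycle lengths of a permutation `π`, and
the associated permutation trace is the corresponding product of traces of powers. -/
lemma exists_perm_permTrace_eq [DecidableEq ι] (m : Multiset ℕ) (hm : 0 ∉ m) :
    ∃ π : Equiv.Perm (Fin m.sum), π.partition.parts = m ∧
      ∀ X : Matrix ι ι R, permTrace X π = (m.map fun j => Matrix.trace (X ^ j)).prod := by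
  induction m using Multiset.induction with
  | empty =>
    refine ⟨(finCongr Multiset.sum_zero.symm).permCongr 1, ?_, fun X => ?_⟩
    · rw [parts_partition_permCongr, parts_partition_eq]
      simp
    · rw [permTrace_permCongr]
      simp [permTrace, tensorPow_apply]
  | cons c m ih =>
    obtain ⟨π, hπ, hX⟩ := ih fun h => hm (Multiset.mem_cons_of_mem h)
    obtain ⟨n, rfl⟩ := Nat.exists_eq_succ_of_ne_zero
      (fun h : c = 0 => hm (h ▸ Multiset.mem_cons_self _ _))
    let f : Fin (n + 1) ⊕ Fin m.sum ≃ Fin ((n + 1) ::ₘ m).sum :=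
      finSumFinEquiv.trans (finCongr (Multiset.sum_cons _ _).symm)
    refine ⟨f.permCongr (Equiv.Perm.sumCongr (finRotate (n + 1)) π), ?_, fun X => ?_⟩
    · rw [parts_partition_permCongr, parts_partition_sumCongr, parts_partition_finRotate, hπ,
        Multiset.singleton_add]
    · rw [permTrace_permCongr, permTrace_sumCongr, permTrace_finRotate, hX, Multiset.map_cons,
        Multiset.prod_cons]

lemma nat_card_centralizer_eq_prod (π : Equiv.Perm α) :
    Nat.card (Subgroup.centralizer {π}) = ∏ j ∈ π.partition.parts.toFinset,
      j ^ π.partition.parts.count j * (π.partition.parts.count j).factorial := by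
  have h1 : 1 ∉ π.cycleType := fun h => absurd (Equiv.Perm.one_lt_of_mem_cycleType h) (by simp)
  set r := Fintype.card α - π.cycleType.sum with hr
  have hc : ∀ j ∈ π.cycleType.toFinset,
      π.partition.parts.count j = π.cycleType.count j := by
    intro j hj
    have : j ≠ 1 := fun h => h1 (by simpa [h] using hj)
    rw [parts_partition_eq, Multiset.count_add, Multiset.count_replicate, if_neg this.symm, add_zero]
  have hc1 : π.partition.parts.count 1 = r := by
    rw [parts_partition_eq, Multiset.count_add, Multiset.count_replicate_self,
      Multiset.count_eq_zero_of_notMem h1, zero_add]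
  have hsub : π.partition.parts.toFinset ⊆ insert 1 π.cycleType.toFinset := by
    intro j hj
    rw [parts_partition_eq, Multiset.mem_toFinset, Multiset.mem_add] at hj
    rcases hj with hj | hj
    · exact Finset.mem_insert_of_mem (Multiset.mem_toFinset.2 hj)
    · rw [Multiset.eq_of_mem_replicate hj]; exact Finset.mem_insert_self _ _
  have hprod : ∏ j ∈ π.cycleType.toFinset,
      j ^ π.partition.parts.count j * (π.partition.parts.count j).factorial =
        π.cycleType.prod * ∏ j ∈ π.cycleType.toFinset, (π.cycleType.count j).factorial := by
    rw [Finset.prod_multiset_count, ← Finset.prod_mul_distrib]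
    exact Finset.prod_congr rfl fun j hj => by rw [hc j hj]
  rw [Equiv.Perm.nat_card_centralizer, Finset.prod_subset hsub,
    Finset.prod_insert (by simpa using h1), hc1, hprod, ← hr]
  · ring
  · intro j _ hj
    rw [Multiset.count_eq_zero_of_notMem (by simpa using hj)]
    simp

lemma card_conj_eq (π σ : Equiv.Perm α) :
    Finset.card {τ : Equiv.Perm α | τ * π * τ⁻¹ = σ} =
      if π.partition.parts = σ.partition.parts then
        ∏ j ∈ π.partition.parts.toFinset,
          j ^ π.partition.parts.count j * (π.partition.parts.count j).factorial
      else 0 := by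
  split_ifs with h
  · obtain ⟨g, hg⟩ := isConj_iff.1
      (Equiv.Perm.partition_eq_of_isConj.2 (Nat.Partition.ext h))
    rw [← nat_card_centralizer_eq_prod, ← Fintype.card_subtype, ← Nat.card_eq_fintype_card]
    refine Nat.card_congr (Equiv.subtypeEquiv (Equiv.mulLeft g⁻¹) fun τ => ?_)
    rw [Subgroup.mem_centralizer_singleton_iff, ← hg, Equiv.coe_mulLeft, mul_inv_eq_iff_eq_mul,
      ← mul_right_inj g⁻¹]
    simp only [mul_assoc, inv_mul_cancel_left]
  · rw [Finset.card_eq_zero, Finset.filter_eq_empty_iff]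
    rintro τ - hτ
    have := Equiv.Perm.partition_eq_of_isConj.1 (isConj_iff.2 ⟨τ, hτ⟩)
    exact h (congrArg Nat.Partition.parts this)

end PermTrace

/-- The product of traces of powers of `X` with multiplicities `a`, as a product over a multiset. -/
lemma prod_trace_pow_eq_multiset_prod {ι : Type*} [Fintype ι] [DecidableEq ι] (a : ℕ →₀ ℕ)
    (s : Finset ℕ) (hs : a.support ⊆ s) (X : Matrix ι ι ℂ) :
    ∏ j ∈ s, Matrix.trace (X ^ j) ^ a j =
      ((Finsupp.toMultiset a).map fun j => Matrix.trace (X ^ j)).prod := by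
  rw [Finsupp.toMultiset_map, Finsupp.prod_toMultiset, Finsupp.prod_mapDomain_index (by simp)
    (by simp [pow_add]), Finsupp.prod]
  refine (Finset.prod_subset hs fun j _ hj => ?_).symm
  rw [Finsupp.notMem_support_iff.1 hj, pow_zero]

lemma toMultiset_sum_eq (a : ℕ →₀ ℕ) (s : Finset ℕ) (hs : a.support ⊆ s) :
    (Finsupp.toMultiset a).sum = ∑ j ∈ s, j * a j := by
  rw [Finsupp.sum_toMultiset, Finsupp.sum]
  refine Finset.sum_subset_zero_on_sdiff hs (fun j hj => ?_) fun j _ => ?_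
  · rw [Finsupp.notMem_support_iff.1 (Finset.mem_sdiff.1 hj).2, mul_zero]
  · simp [mul_comm]

/-- Moments of different bidegree in `U` and its conjugate vanish. -/
lemma integral_eq_zero_of_homogeneous {l : ℕ} (μ : Measure (Matrix.unitaryGroup (Fin l) ℂ))
    [μ.IsHaarMeasure] (A B : ℕ) (hAB : A ≠ B) (F : Matrix (Fin l) (Fin l) ℂ → ℂ)
    (hF : ∀ (z : ℂ) (X : Matrix (Fin l) (Fin l) ℂ), F (z • X) = z ^ A * star z ^ B * F X) :
    ∫ U, F (U : Matrix (Fin l) (Fin l) ℂ) ∂μ = 0 := by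
  have hne : (A : ℂ) - B ≠ 0 := sub_ne_zero.2 (Nat.cast_injective.ne hAB)
  let θ : ℝ := Real.pi / ((A : ℝ) - B)
  let z : ℂ := Complex.exp (θ * Complex.I)
  have hz : star z = Complex.exp (-(θ * Complex.I)) := by
    simp [z, ← Complex.exp_conj]
  have hzz : z * star z = 1 := by
    rw [hz, ← Complex.exp_add, add_neg_cancel, Complex.exp_zero]
  have hpow : z ^ A * star z ^ B = -1 := by
    rw [hz, ← Complex.exp_nat_mul, ← Complex.exp_nat_mul, ← Complex.exp_add,
      ← Complex.exp_pi_mul_I]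
    congr 1
    simp only [θ]
    push_cast
    field_simp
    ring
  let Z : Matrix.unitaryGroup (Fin l) ℂ := ⟨z • 1, by
    rw [Matrix.mem_unitaryGroup_iff, star_smul, star_one, smul_mul_smul_comm, hzz, one_mul,
      one_smul]⟩
  have h := integral_mul_left_eq_self (μ := μ)
    (fun U : Matrix.unitaryGroup (Fin l) ℂ => F (U : Matrix (Fin l) (Fin l) ℂ)) Z
  have h' : ∀ U : Matrix.unitaryGroup (Fin l) ℂ,
      F ((Z * U : Matrix.unitaryGroup (Fin l) ℂ) : Matrix (Fin l) (Fin l) ℂ) =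
        -F (U : Matrix (Fin l) (Fin l) ℂ) := by
    intro U
    change F ((z • (1 : Matrix (Fin l) (Fin l) ℂ)) * (U : Matrix (Fin l) (Fin l) ℂ)) = _
    rw [Matrix.smul_mul, Matrix.one_mul, hF, hpow, neg_one_mul]
  simp only [h', integral_neg] at h
  exact self_eq_neg.1 h.symm

/-- For finitely supported `a, b : {1,2,3,…} → ℕ` with `Σ_j j·(a_j + b_j) ≤ 2l`:
`E_{U∈U(l)} ∏_j Tr(U^j)^{a_j} · conj(Tr(U^j))^{b_j}` equals `∏_j j^{a_j}·a_j!` if `a = b`,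
and `0` otherwise. -/
theorem unitary_trace_power_moments (l : ℕ) (a b : ℕ →₀ ℕ)
    (ha : a 0 = 0) (hb : b 0 = 0)
    (hdeg : ∑ j ∈ a.support ∪ b.support, j * (a j + b j) ≤ 2 * l)
    (μ : Measure (Matrix.unitaryGroup (Fin l) ℂ))
    [μ.IsHaarMeasure] [IsProbabilityMeasure μ] :
    ∫ U, ∏ j ∈ a.support ∪ b.support,
        (Matrix.trace ((U : Matrix (Fin l) (Fin l) ℂ) ^ j)) ^ (a j) *
          ((starRingEnd ℂ) (Matrix.trace ((U : Matrix (Fin l) (Fin l) ℂ) ^ j))) ^ (b j)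
        ∂μ =
      if a = b then ∏ j ∈ a.support, (j : ℂ) ^ (a j) * (Nat.factorial (a j) : ℂ)
      else 0 := by
  have hsa := toMultiset_sum_eq a _ (Finset.subset_union_left (s₂ := b.support))
  have hsb := toMultiset_sum_eq b _ (Finset.subset_union_right (s₁ := a.support))
  have hA : 0 ∉ Finsupp.toMultiset a := by simp [Finsupp.mem_toMultiset, ha]
  have hB : 0 ∉ Finsupp.toMultiset b := by simp [Finsupp.mem_toMultiset, hb]
  by_cases hdegrees : (Finsupp.toMultiset a).sum = (Finsupp.toMultiset b).sum
  · obtain ⟨π, hπ, hπX⟩ := exists_perm_permTrace_eq (ι := Fin l) (R := ℂ) _ hA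
    obtain ⟨σ', hσ', hσX'⟩ := exists_perm_permTrace_eq (ι := Fin l) (R := ℂ) _ hB
    let σ := (finCongr hdegrees.symm).permCongr σ'
    have hσ : σ.partition.parts = Finsupp.toMultiset b :=
      (parts_partition_permCongr _ _).trans hσ'
    have hle : (Finsupp.toMultiset a).sum ≤ l := by
      simp only [mul_add, Finset.sum_add_distrib, ← hsa, ← hsb] at hdeg
      omega
    have hfun : ∀ U : Matrix.unitaryGroup (Fin l) ℂ, ∏ j ∈ a.support ∪ b.support,
        (Matrix.trace ((U : Matrix (Fin l) (Fin l) ℂ) ^ j)) ^ (a j) *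
          ((starRingEnd ℂ) (Matrix.trace ((U : Matrix (Fin l) (Fin l) ℂ) ^ j))) ^ (b j) =
        permTrace (U : Matrix (Fin l) (Fin l) ℂ) π *
          star (permTrace (U : Matrix (Fin l) (Fin l) ℂ) σ) := by
      intro U
      rw [permTrace_permCongr, hπX, hσX',
        ← prod_trace_pow_eq_multiset_prod a _ (Finset.subset_union_left (s₂ := b.support)),
        ← prod_trace_pow_eq_multiset_prod b _ (Finset.subset_union_right (s₁ := a.support)),
        Finset.prod_mul_distrib, ← starRingEnd_apply, map_prod]
      simp only [map_pow]
    simp only [hfun]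
    rw [integral_permTrace_mul_star μ (Fin.castLE hle) (Fin.castLE_injective hle), card_conj_eq,
      hπ, hσ]
    simp only [Finsupp.toMultiset_eq_iff, Finsupp.toMultiset_toFinsupp, Finsupp.toFinset_toMultiset,
      Finsupp.count_toMultiset]
    push_cast
    rfl
  · rw [if_neg fun h => hdegrees (by rw [h])]
    refine integral_eq_zero_of_homogeneous μ _ _ hdegrees
      (fun X => ∏ j ∈ a.support ∪ b.support, (Matrix.trace (X ^ j)) ^ (a j) *
        ((starRingEnd ℂ) (Matrix.trace (X ^ j))) ^ (b j)) fun z X => ?_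
    rw [hsa, hsb, ← Finset.prod_pow_eq_pow_sum, ← Finset.prod_pow_eq_pow_sum,
      ← Finset.prod_mul_distrib, ← Finset.prod_mul_distrib]
    refine Finset.prod_congr rfl fun j _ => ?_
    rw [smul_pow, Matrix.trace_smul, smul_eq_mul, map_mul, map_pow, mul_pow, mul_pow,
      starRingEnd_apply z, pow_mul, pow_mul]
    ring
end
end
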